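/- arXiv:2206.04346 — 2 statements merged into one kernel-verified Lean document; each statement's English description precedes it below -/
import Mathlib

section
/- (Kraus: existence of maximal Blaschke products) Let g be a nonconstant holomorphic function from the open unit disk 𝔻 into the closed unit disk. Then there exists a Blaschke product B such that B' has in 𝔻 exactly the same zeros as g', with the same multiplicities, and such that for every f ∈ 𝓑 with C_f ⊇ C_B one has |f'(z)| (1 − |B(z)|²) ≤ |B'(z)| (1 − |f(z)|²) for all z ∈ 𝔻. -/
open Metric Filter

/-- The order of vanishing of `f` at `z`. -/
noncomputable def vOrder (f : ℂ → ℂ) (z : ℂ) : ℕ∞ :=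
  sInf ((fun n : ℕ => (n : ℕ∞)) '' {n : ℕ | iteratedDeriv n f z ≠ 0})

/-- A (finite or infinite) Blaschke product: a holomorphic function on the open unit
disk of the form `B(z) = η z^m ∏_j (|z_j|/z_j)(z_j − z)/(1 − conj z_j · z)`, where
`|η| = 1`, `m ≥ 0`, the points `z_j ∈ 𝔻 \ {0}` satisfy the Blaschke condition
`Σ_j (1 − |z_j|) < ∞`, and the (possibly infinite) product converges. -/
def IsBlaschkeProduct (B : ℂ → ℂ) : Prop :=
  (∀ z ∈ Metric.ball (0 : ℂ) 1, DifferentiableAt ℂ B z) ∧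
  ∃ (η : ℂ) (m : ℕ) (ι : Type) (a : ι → ℂ),
    ‖η‖ = 1 ∧ (∀ j, a j ≠ 0 ∧ ‖a j‖ < 1) ∧
    Summable (fun j => 1 - ‖a j‖) ∧
    ∀ z ∈ Metric.ball (0 : ℂ) 1,
      B z = η * z ^ m *
        ∏' j, (((‖a j‖ : ℝ) : ℂ) / a j) * ((a j - z) / (1 - (starRingEnd ℂ) (a j) * z))

/-- A Blaschke product `B` is *maximal* if for every nonconstant holomorphic map `f`
of the open unit disk into the closed unit disk whose critical set contains that of
`B` (with multiplicities), one has
`|f'(z)| (1 − |B(z)|²) ≤ |B'(z)| (1 − |f(z)|²)` on the disk. -/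
def IsMaximalBlaschke (B : ℂ → ℂ) : Prop :=
  IsBlaschkeProduct B ∧
  ∀ f : ℂ → ℂ,
    (∀ z ∈ Metric.ball (0 : ℂ) 1, DifferentiableAt ℂ f z) →
    (∀ z ∈ Metric.ball (0 : ℂ) 1, ‖f z‖ ≤ 1) →
    (∃ z ∈ Metric.ball (0 : ℂ) 1, ∃ w ∈ Metric.ball (0 : ℂ) 1, f z ≠ f w) →
    (∀ z ∈ Metric.ball (0 : ℂ) 1, vOrder (deriv B) z ≤ vOrder (deriv f) z) →
    ∀ z ∈ Metric.ball (0 : ℂ) 1,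
      ‖deriv f z‖ * (1 - ‖B z‖ ^ 2) ≤ ‖deriv B z‖ * (1 - ‖f z‖ ^ 2)

/-! Part 1 -/
open scoped Topology ComplexConjugate

lemma quot_limit {A b H : ℂ → ℂ} {z₀ : ℂ} (hA : AnalyticAt ℂ A z₀) (hb : AnalyticAt ℂ b z₀)
    (hH : AnalyticAt ℂ H z₀) (hA0 : A z₀ = 0) (hb0 : b z₀ = 0)
    (hder : ∀ᶠ z in 𝓝 z₀, deriv A z = H z * deriv b z)
    (hbn : analyticOrderAt b z₀ ≠ ⊤) :
    (∀ᶠ z in 𝓝[≠] z₀, b z ≠ 0) ∧ Tendsto (fun z => A z / b z) (𝓝[≠] z₀) (𝓝 (H z₀)) := by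
  obtain ⟨k, hk⟩ := ENat.ne_top_iff_exists.1 hbn
  obtain ⟨u, hu, hu0, hbu⟩ := (hb.analyticOrderAt_eq_natCast).1 hk.symm
  have hne : ∀ᶠ z in 𝓝[≠] z₀, b z ≠ 0 := by
    have h1 : ∀ᶠ z in 𝓝[≠] z₀, u z ≠ 0 :=
      (hu.continuousAt.eventually_ne hu0).filter_mono nhdsWithin_le_nhds
    filter_upwards [h1, hbu.filter_mono nhdsWithin_le_nhds, self_mem_nhdsWithin] with z h1 h2 h3
    rw [h2, smul_eq_mul]
    exact mul_ne_zero (pow_ne_zero _ (sub_ne_zero.2 h3)) h1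
  refine ⟨hne, ?_⟩
  set R : ℂ → ℂ := fun z => A z - H z * b z with hR
  have hRan : AnalyticAt ℂ R z₀ := hA.sub (hH.mul hb)
  have hR0 : R z₀ = 0 := by simp [hR, hA0, hb0]
  have hRd : deriv R =ᶠ[𝓝 z₀] fun z => -(deriv H z) * b z := by
    filter_upwards [hder, hA.eventually_analyticAt, hb.eventually_analyticAt,
      hH.eventually_analyticAt] with z h1 h2 h3 h4
    have : HasDerivAt R (deriv A z - (deriv H z * b z + H z * deriv b z)) z :=
      h2.differentiableAt.hasDerivAt.sub
        (h4.differentiableAt.hasDerivAt.mul h3.differentiableAt.hasDerivAt)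
    rw [this.deriv, h1]; ring
  have hord : ((k + 1 : ℕ) : ℕ∞) ≤ analyticOrderAt R z₀ := by
    have h1 := hRan.analyticOrderAt_deriv_add_one
    simp only [hR0, sub_zero] at h1
    rw [← h1, analyticOrderAt_congr hRd]
    have h2 := analyticOrderAt_mul (f := fun z => -(deriv H z)) (g := b) (z₀ := z₀) hH.deriv.neg hb
    have h3 : analyticOrderAt (fun z => -(deriv H z) * b z) z₀
      = analyticOrderAt (fun z => -(deriv H z)) z₀ + analyticOrderAt b z₀ := h2
    rw [h3, ← hk]
    push_cast
    gcongr
    exact le_add_self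
  obtain ⟨r, hr, hRr⟩ := (natCast_le_analyticOrderAt hRan).1 hord
  have hlim : Tendsto (fun z => H z + (z - z₀) * (r z / u z)) (𝓝[≠] z₀) (𝓝 (H z₀)) := by
    have hc : ContinuousAt (fun z => H z + (z - z₀) * (r z / u z)) z₀ :=
      hH.continuousAt.add ((continuousAt_id.sub continuousAt_const).mul
        (hr.continuousAt.div hu.continuousAt hu0))
    have := hc.tendsto
    simp only [sub_self, zero_mul, add_zero] at this
    exact this.mono_left nhdsWithin_le_nhds
  refine hlim.congr' ?_
  have h1 : ∀ᶠ z in 𝓝[≠] z₀, u z ≠ 0 :=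
    (hu.continuousAt.eventually_ne hu0).filter_mono nhdsWithin_le_nhds
  filter_upwards [hne, hbu.filter_mono nhdsWithin_le_nhds, hRr.filter_mono nhdsWithin_le_nhds, h1,
    self_mem_nhdsWithin] with z h1 h2 h3 h4 h5
  have h5' : z - z₀ ≠ 0 := sub_ne_zero.2 h5
  have h6 : A z = H z * b z + (z - z₀) ^ (k + 1) * r z := by
    have : A z - H z * b z = (z - z₀) ^ (k + 1) * r z := h3
    rw [← this]; ring
  rw [h6, add_div, mul_div_assoc, div_self h1, mul_one, h2, smul_eq_mul]
  congr 1
  field_simp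
  ring

lemma frequently_norm_ge {φ : ℂ → ℂ} {z₀ : ℂ} (hφ : AnalyticAt ℂ φ z₀) :
    ∃ᶠ z in 𝓝[≠] z₀, ‖φ z₀‖ ≤ ‖φ z‖ := by
  intro hcon
  simp only [not_le] at hcon
  have hmax : IsLocalMax (norm ∘ φ) z₀ := by
    have := eventually_nhdsWithin_iff.1 hcon
    filter_upwards [this] with z hz
    by_cases h : z = z₀
    · simp [h]
    · exact (hz h).le
  have h1 := Complex.eventually_eq_of_isLocalMax_norm
    (hφ.eventually_analyticAt.mono fun z hz => hz.differentiableAt) hmax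
  obtain ⟨z, hz1, hz2⟩ := ((h1.filter_mono nhdsWithin_le_nhds).and hcon).exists
  rw [hz1] at hz2
  exact lt_irrefl _ hz2

lemma frequently_re_ge {φ : ℂ → ℂ} {z₀ : ℂ} (hφ : AnalyticAt ℂ φ z₀) :
    ∃ᶠ z in 𝓝[≠] z₀, (φ z₀).re ≤ (φ z).re := by
  have h := frequently_norm_ge (φ := fun z => Complex.exp (φ z)) (hφ.cexp)
  simpa [Complex.norm_exp] using h

lemma one_sub_conj_mul_ne {a w : ℂ} (ha : ‖a‖ < 1) (hw : ‖w‖ ≤ 1) : 1 - conj a * w ≠ 0 := by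
  intro h
  have h1 : conj a * w = 1 := (sub_eq_zero.1 h).symm
  have h2 : ‖a‖ * ‖w‖ = 1 := by
    have := congrArg norm h1
    simpa using this
  nlinarith [norm_nonneg a, norm_nonneg w]

lemma moebius_identity {a w : ℂ} (h : 1 - conj a * w ≠ 0) :
    1 - ‖(w - a) / (1 - conj a * w)‖ ^ 2 =
      (1 - ‖a‖ ^ 2) * (1 - ‖w‖ ^ 2) / ‖1 - conj a * w‖ ^ 2 := by
  have h' : ‖1 - conj a * w‖ ^ 2 ≠ 0 := by simpa using h
  rw [norm_div, div_pow, eq_div_iff h', sub_mul, div_mul_cancel₀ _ h', one_mul]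
  simp only [← Complex.normSq_eq_norm_sq, Complex.normSq_apply]
  simp
  ring

lemma moebius_hasDerivAt {b : ℂ → ℂ} {z a d : ℂ} (hb : HasDerivAt b d z)
    (h : 1 - conj a * b z ≠ 0) :
    HasDerivAt (fun z => (b z - a) / (1 - conj a * b z))
      ((1 - (‖a‖ ^ 2 : ℝ)) / (1 - conj a * b z) ^ 2 * d) z := by
  have h1 := (hb.sub_const a).div ((hb.const_mul (conj a)).const_sub 1) h
  refine h1.congr_deriv ?_
  have h2 : ((‖a‖ ^ 2 : ℝ) : ℂ) = conj a * a := by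
    rw [mul_comm, Complex.mul_conj, Complex.normSq_eq_norm_sq]
  rw [h2]
  field_simp
  ring

/-- nonlinear local maximum principle -/
lemma no_local_max {b f θ β ψ p : ℂ → ℂ} {z₀ : ℂ} (hb : AnalyticAt ℂ b z₀)
    (hf : AnalyticAt ℂ f z₀) (hθ : AnalyticAt ℂ θ z₀) (hβ : AnalyticAt ℂ β z₀)
    (hψ : AnalyticAt ℂ ψ z₀)
    (hdf : ∀ᶠ z in 𝓝 z₀, deriv f z = θ z * p z) (hdb : ∀ᶠ z in 𝓝 z₀, deriv b z = ψ z * p z)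
    (hψ0 : ψ z₀ ≠ 0) (hf1 : ‖f z₀‖ < 1) (hb1 : ‖b z₀‖ < 1)
    (hp : ¬ ∀ᶠ z in 𝓝 z₀, p z = 0) (hβ1 : ‖β z₀‖ ≤ 1)
    (hV : 1 < ‖β z₀‖ * ‖θ z₀‖ * (1 - ‖b z₀‖ ^ 2) / ((1 - ‖f z₀‖ ^ 2) * ‖ψ z₀‖)) :
    ¬ IsLocalMax (fun z => ‖β z‖ * ‖θ z‖ * (1 - ‖b z‖ ^ 2) / ((1 - ‖f z‖ ^ 2) * ‖ψ z‖)) z₀ := by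
  intro hmax
  set b0 := b z₀ with hb0
  set f0 := f z₀ with hf0
  set B1 : ℂ → ℂ := fun z => (b z - b0) / (1 - conj b0 * b z) with hB1
  set F1 : ℂ → ℂ := fun z => (f z - f0) / (1 - conj f0 * f z) with hF1
  set ψ1 : ℂ → ℂ := fun z => (1 - (‖b0‖ ^ 2 : ℝ)) / (1 - conj b0 * b z) ^ 2 * ψ z with hψ1
  set θ1 : ℂ → ℂ := fun z => (1 - (‖f0‖ ^ 2 : ℝ)) / (1 - conj f0 * f z) ^ 2 * θ z with hθ1
  have hbs : 0 < 1 - ‖b0‖ ^ 2 := by nlinarith [norm_nonneg b0]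
  have hfs : 0 < 1 - ‖f0‖ ^ 2 := by nlinarith [norm_nonneg f0]
  have hbs' : ((1 : ℂ) - (‖b0‖ ^ 2 : ℝ)) ≠ 0 := by exact_mod_cast hbs.ne'
  have hfs' : ((1 : ℂ) - (‖f0‖ ^ 2 : ℝ)) ≠ 0 := by exact_mod_cast hfs.ne'
  have hbd0 : 1 - conj b0 * b z₀ ≠ 0 := one_sub_conj_mul_ne hb1 hb1.le
  have hfd0 : 1 - conj f0 * f z₀ ≠ 0 := one_sub_conj_mul_ne hf1 hf1.le
  have hbden : AnalyticAt ℂ (fun z => 1 - conj b0 * b z) z₀ :=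
    analyticAt_const.sub (analyticAt_const.mul hb)
  have hfden : AnalyticAt ℂ (fun z => 1 - conj f0 * f z) z₀ :=
    analyticAt_const.sub (analyticAt_const.mul hf)
  have hB1an : AnalyticAt ℂ B1 z₀ := (hb.sub analyticAt_const).div hbden hbd0
  have hF1an : AnalyticAt ℂ F1 z₀ := (hf.sub analyticAt_const).div hfden hfd0
  have hpsi_an : AnalyticAt ℂ ψ1 z₀ :=
    (analyticAt_const.div (hbden.pow 2) (pow_ne_zero 2 hbd0)).mul hψ
  have htheta_an : AnalyticAt ℂ θ1 z₀ :=
    (analyticAt_const.div (hfden.pow 2) (pow_ne_zero 2 hfd0)).mul hθ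
  have hψ10 : ψ1 z₀ ≠ 0 := mul_ne_zero (div_ne_zero hbs' (pow_ne_zero 2 hbd0)) hψ0
  set H : ℂ → ℂ := fun z => θ1 z / ψ1 z with hH
  have hHan : AnalyticAt ℂ H z₀ := htheta_an.div hpsi_an hψ10
  have eb : ∀ᶠ z in 𝓝 z₀, ‖b z‖ < 1 := hb.continuousAt.norm.eventually_lt_const hb1
  have ef : ∀ᶠ z in 𝓝 z₀, ‖f z‖ < 1 := hf.continuousAt.norm.eventually_lt_const hf1
  have eψ : ∀ᶠ z in 𝓝 z₀, ψ z ≠ 0 := hψ.continuousAt.eventually_ne hψ0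
  have dB1 : ∀ᶠ z in 𝓝 z₀, deriv B1 z = ψ1 z * p z := by
    filter_upwards [hdb, eb, hb.eventually_analyticAt] with z h1 h2 h3
    rw [(moebius_hasDerivAt (h3.differentiableAt.hasDerivAt)
      (one_sub_conj_mul_ne hb1 h2.le)).deriv, h1]
    simp only [hψ1]; ring
  have dF1 : ∀ᶠ z in 𝓝 z₀, deriv F1 z = θ1 z * p z := by
    filter_upwards [hdf, ef, hf.eventually_analyticAt] with z h1 h2 h3
    rw [(moebius_hasDerivAt (h3.differentiableAt.hasDerivAt)
      (one_sub_conj_mul_ne hf1 h2.le)).deriv, h1]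
    simp only [hθ1]; ring
  have eψ1 : ∀ᶠ z in 𝓝 z₀, ψ1 z ≠ 0 := hpsi_an.continuousAt.eventually_ne hψ10
  have dFB : ∀ᶠ z in 𝓝 z₀, deriv F1 z = H z * deriv B1 z := by
    filter_upwards [dB1, dF1, eψ1] with z h1 h2 h3
    rw [h1, h2]; simp only [hH]; field_simp
  have hBord : analyticOrderAt B1 z₀ ≠ ⊤ := by
    intro h
    rw [analyticOrderAt_eq_top] at h
    apply hp
    have h2 : ∀ᶠ z in 𝓝 z₀, deriv B1 z = 0 := by
      filter_upwards [h.eventually_nhds] with z hz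
      have : B1 =ᶠ[𝓝 z] fun _ => 0 := hz
      rw [this.deriv_eq]; simp
    filter_upwards [h2, dB1, eψ1] with z h3 h4 h5
    rw [h3] at h4
    rcases mul_eq_zero.1 h4.symm with h | h
    · exact absurd h h5
    · exact h
  obtain ⟨hne, hlim⟩ := quot_limit hF1an hB1an hHan (by simp [hF1, hf0]) (by simp [hB1, hb0])
    dFB hBord
  have key : ∀ z, ‖b z‖ < 1 → ‖f z‖ < 1 →
      ‖β z‖ * ‖θ z‖ * (1 - ‖b z‖ ^ 2) / ((1 - ‖f z‖ ^ 2) * ‖ψ z‖) =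
      ‖β z * H z‖ * ((1 - ‖B1 z‖ ^ 2) / (1 - ‖F1 z‖ ^ 2)) := by
    intro z hz1 hz2
    have n1 := one_sub_conj_mul_ne hb1 hz1.le
    have n2 := one_sub_conj_mul_ne hf1 hz2.le
    have n3 : 0 < 1 - ‖b z‖ ^ 2 := by nlinarith [norm_nonneg (b z)]
    have n4 : 0 < 1 - ‖f z‖ ^ 2 := by nlinarith [norm_nonneg (f z)]
    simp only [hB1, hF1, hH, hθ1, hψ1]
    rw [moebius_identity n1, moebius_identity n2]
    have e1 : ‖(1 : ℂ) - (‖b0‖ ^ 2 : ℝ)‖ = 1 - ‖b0‖ ^ 2 := by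
      rw [← Complex.ofReal_one, ← Complex.ofReal_sub, Complex.norm_real, Real.norm_of_nonneg hbs.le]
    have e2 : ‖(1 : ℂ) - (‖f0‖ ^ 2 : ℝ)‖ = 1 - ‖f0‖ ^ 2 := by
      rw [← Complex.ofReal_one, ← Complex.ofReal_sub, Complex.norm_real, Real.norm_of_nonneg hfs.le]
    simp only [norm_mul, norm_div, norm_pow, e1, e2]
    have n1' : ‖1 - conj b0 * b z‖ ≠ 0 := by simpa using n1
    have n2' : ‖1 - conj f0 * f z‖ ≠ 0 := by simpa using n2
    by_cases hz : ‖ψ z‖ = 0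
    · simp [hz]
    field_simp
  have hBz : ‖B1 z₀‖ = 0 := by simp [hB1, hb0]
  have hFz : ‖F1 z₀‖ = 0 := by simp [hF1, hf0]
  have hV0 : 1 < ‖β z₀ * H z₀‖ := by
    rw [key z₀ hb1 hf1, hBz, hFz] at hV
    simpa using hV
  have hH1 : 1 < ‖H z₀‖ := by
    rw [norm_mul] at hV0
    nlinarith [norm_nonneg (H z₀)]
  have hgt : ∀ᶠ z in 𝓝[≠] z₀, ‖B1 z‖ < ‖F1 z‖ := by
    have := hlim.norm.eventually_const_lt hH1
    filter_upwards [this, hne] with z h1 h2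
    rw [norm_div, lt_div_iff₀ (norm_pos_iff.2 h2), one_mul] at h1
    exact h1
  have eF1 : ∀ᶠ z in 𝓝 z₀, ‖F1 z‖ < 1 :=
    hF1an.continuousAt.norm.eventually_lt_const (by simp only [hFz]; norm_num)
  have hfr := frequently_norm_ge (φ := fun z => β z * H z) (hβ.mul hHan)
  obtain ⟨z, hz, h1, h2, h3, h4, h5⟩ := (hfr.and_eventually (hgt.and ((eF1.and (eb.and (ef.and
    hmax))).filter_mono nhdsWithin_le_nhds))).exists
  simp only at h5
  rw [key z h3 h4, key z₀ hb1 hf1, hBz, hFz] at h5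
  have : 1 < (1 - ‖B1 z‖ ^ 2) / (1 - ‖F1 z‖ ^ 2) := by
    rw [lt_div_iff₀] <;> nlinarith [norm_nonneg (B1 z), norm_nonneg (F1 z)]
  simp only [ne_eq, OfNat.ofNat_ne_zero, not_false_eq_true, zero_pow, sub_zero, div_one,
    mul_one] at h5
  nlinarith

/-! Part 2 -/
open scoped Topology ComplexConjugate

lemma ofReal_norm_sq (a : ℂ) : ((‖a‖ ^ 2 : ℝ) : ℂ) = conj a * a := by
  rw [mul_comm, Complex.mul_conj, Complex.normSq_eq_norm_sq]

lemma lin_identity_one {b b0 : ℂ} (hb : ‖b‖ < 1) (hb0 : ‖b0‖ < 1) :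
    conj b0 / (1 - conj b0 * b) + ((1 - (‖b0‖ ^ 2 : ℝ)) / (1 - conj b0 * b) ^ 2) *
      conj ((b - b0) / (1 - conj b0 * b)) / ((1 - ‖(b - b0) / (1 - conj b0 * b)‖ ^ 2 : ℝ) : ℂ)
    = conj b / ((1 - ‖b‖ ^ 2 : ℝ) : ℂ) := by
  have n1 := one_sub_conj_mul_ne hb0 hb.le
  have n2 := one_sub_conj_mul_ne hb hb0.le
  have n3 : (1 : ℂ) - conj b * b ≠ 0 := one_sub_conj_mul_ne hb hb.le
  have n4 : (1 : ℂ) - conj b0 * b0 ≠ 0 := one_sub_conj_mul_ne hb0 hb0.le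
  rw [moebius_identity n1]
  push_cast
  have e := ofReal_norm_sq b
  have e0 := ofReal_norm_sq b0
  have e1 := ofReal_norm_sq (1 - conj b0 * b)
  push_cast at e e0 e1
  rw [e, e0, e1]
  simp only [map_div₀, map_sub, map_mul, map_one, Complex.conj_conj]
  rw [mul_comm (conj b) b0] at *
  generalize conj b = bc at *
  generalize conj b0 = c at *
  have n3' : (1 : ℂ) - b * bc ≠ 0 := by rwa [mul_comm b]
  field_simp
  ring

lemma lin_identity_two {B α : ℂ} (hB : ‖B‖ < 1) :
    (2 * conj α * B).re + 2 * ((-α + conj α * B ^ 2) * conj B).re / (1 - ‖B‖ ^ 2) = 0 := by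
  have hs : 1 - ‖B‖ ^ 2 ≠ 0 := by nlinarith [norm_nonneg B]
  rw [add_div' _ _ _ hs, div_eq_zero_iff]
  left
  rw [← Complex.normSq_eq_norm_sq, Complex.normSq_apply]
  simp [pow_two]
  ring

/-- linear local maximum principle -/
lemma no_local_max_lin {b v h : ℂ → ℂ} {z₀ : ℂ} (hb : AnalyticAt ℂ b z₀)
    (hv : AnalyticAt ℂ v z₀) (hh : AnalyticAt ℂ h z₀)
    (hd : ∀ᶠ z in 𝓝 z₀, deriv v z = h z * deriv b z) (hb1 : ‖b z₀‖ < 1)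
    (hnc : ¬ ∀ᶠ z in 𝓝 z₀, deriv b z = 0)
    (hw : 0 < (h z₀).re + 2 * (v z₀ * conj (b z₀)).re / (1 - ‖b z₀‖ ^ 2)) :
    ¬ IsLocalMax (fun z => (h z).re + 2 * (v z * conj (b z)).re / (1 - ‖b z‖ ^ 2)) z₀ := by
  intro hmax
  set b0 := b z₀ with hb0
  set B1 : ℂ → ℂ := fun z => (b z - b0) / (1 - conj b0 * b z) with hB1
  set T : ℂ → ℂ := fun z => (1 - (‖b0‖ ^ 2 : ℝ)) / (1 - conj b0 * b z) ^ 2 with hT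
  set α := T z₀ * v z₀ with hα
  set v2 : ℂ → ℂ := fun z => T z * v z + (-α + conj α * B1 z ^ 2) with hv2
  set H : ℂ → ℂ := fun z => h z + 2 * conj b0 * v z / (1 - conj b0 * b z) + 2 * conj α * B1 z
    with hH
  have hbs : 0 < 1 - ‖b0‖ ^ 2 := by nlinarith [norm_nonneg b0]
  have hbs' : ((1 : ℂ) - (‖b0‖ ^ 2 : ℝ)) ≠ 0 := by exact_mod_cast hbs.ne'
  have hbd0 : 1 - conj b0 * b z₀ ≠ 0 := one_sub_conj_mul_ne hb1 hb1.le
  have hbden : AnalyticAt ℂ (fun z => 1 - conj b0 * b z) z₀ :=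
    analyticAt_const.sub (analyticAt_const.mul hb)
  have hB1an : AnalyticAt ℂ B1 z₀ := (hb.sub analyticAt_const).div hbden hbd0
  have hTan : AnalyticAt ℂ T z₀ := analyticAt_const.div (hbden.pow 2) (pow_ne_zero 2 hbd0)
  have hv2an : AnalyticAt ℂ v2 z₀ :=
    (hTan.mul hv).add (analyticAt_const.add (analyticAt_const.mul (hB1an.pow 2)))
  have hHan : AnalyticAt ℂ H z₀ := by
    refine (hh.add ?_).add (analyticAt_const.mul hB1an)
    exact (analyticAt_const.mul hv).div hbden hbd0
  have eb : ∀ᶠ z in 𝓝 z₀, ‖b z‖ < 1 := hb.continuousAt.norm.eventually_lt_const hb1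
  have hBz : B1 z₀ = 0 := by simp [hB1, hb0]
  have hvz : v2 z₀ = 0 := by simp [hv2, hα, hBz]
  have dB1 : ∀ᶠ z in 𝓝 z₀, HasDerivAt B1 (T z * deriv b z) z := by
    filter_upwards [eb, hb.eventually_analyticAt] with z h2 h3
    exact moebius_hasDerivAt (h3.differentiableAt.hasDerivAt) (one_sub_conj_mul_ne hb1 h2.le)
  have dv2 : ∀ᶠ z in 𝓝 z₀, deriv v2 z = H z * deriv B1 z := by
    filter_upwards [eb, hb.eventually_analyticAt, hv.eventually_analyticAt, hd, dB1]
      with z h2 h3 h4 h5 h6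
    have n1 := one_sub_conj_mul_ne hb1 h2.le
    have g1 := h3.differentiableAt.hasDerivAt
    have g2 := ((g1.const_mul (conj b0)).const_sub 1).pow 2
    have g3 := (hasDerivAt_const z ((1 : ℂ) - (‖b0‖ ^ 2 : ℝ))).div g2 (pow_ne_zero 2 n1)
    have g4 := (g3.mul h4.differentiableAt.hasDerivAt).add
      (((h6.pow 2).const_mul (conj α)).const_add (-α))
    have g5 : deriv v2 z = _ := g4.deriv
    rw [g5, h6.deriv, h5]
    simp only [hH, hT]
    simp
    field_simp
    ring
  have hBord : analyticOrderAt B1 z₀ ≠ ⊤ := by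
    intro h
    rw [analyticOrderAt_eq_top] at h
    apply hnc
    filter_upwards [h.eventually_nhds, dB1, eb] with z hz h4 h5
    have : B1 =ᶠ[𝓝 z] fun _ => 0 := hz
    have h6 : deriv B1 z = 0 := by rw [this.deriv_eq]; simp
    rw [h4.deriv] at h6
    rcases mul_eq_zero.1 h6 with h | h
    · exact absurd h (div_ne_zero hbs' (pow_ne_zero 2 (one_sub_conj_mul_ne hb1 h5.le)))
    · exact h
  obtain ⟨hne, hlim⟩ := quot_limit hv2an hB1an hHan hvz hBz dv2 hBord
  have key : ∀ z, ‖b z‖ < 1 → (h z).re + 2 * (v z * conj (b z)).re / (1 - ‖b z‖ ^ 2) =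
      (H z).re + 2 * (v2 z * conj (B1 z)).re / (1 - ‖B1 z‖ ^ 2) ∧ ‖B1 z‖ < 1 := by
    intro z hz
    have n1 := one_sub_conj_mul_ne hb1 hz.le
    have hB : ‖B1 z‖ < 1 := by
      have := moebius_identity n1
      have h1 : 0 < (1 - ‖b0‖ ^ 2) * (1 - ‖b z‖ ^ 2) / ‖1 - conj b0 * b z‖ ^ 2 := by
        have : 0 < 1 - ‖b z‖ ^ 2 := by nlinarith [norm_nonneg (b z)]
        have : 0 < ‖1 - conj b0 * b z‖ := norm_pos_iff.2 n1
        positivity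
      rw [← this] at h1
      simp only [hB1]
      nlinarith [norm_nonneg ((b z - b0) / (1 - conj b0 * b z))]
    refine ⟨?_, hB⟩
    have i2 := lin_identity_two (α := α) hB
    have i1 := lin_identity_one hz hb1
    have i3 := congrArg (fun x => (2 * v z * x).re) i1
    have e1 : ∀ (x : ℂ) (r : ℝ), (2 * v z * (x / (r : ℂ))).re = 2 * (v z * x).re / r := by
      intro x r
      rw [show 2 * v z * (x / (r : ℂ)) = (2 * (v z * x)) / (r : ℂ) by ring, Complex.div_ofReal_re]
      simp
    rw [e1, mul_add, Complex.add_re, e1] at i3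
    rw [← i3]
    simp only [hH, hv2, add_mul, Complex.add_re]
    rw [mul_add 2, add_div] 
    have : ((2 * v z * (conj b0 / (1 - conj b0 * b z))).re : ℝ) = (2 * conj b0 * v z / (1 - conj b0 * b z)).re := by
      congr 1; ring
    rw [this]
    have e4 : v z * (T z * conj (B1 z)) = T z * v z * conj (B1 z) := by ring
    change _ + (_ + 2 * (v z * (T z * conj (B1 z))).re / (1 - ‖B1 z‖ ^ 2)) = _
    rw [e4]
    rw [add_mul, Complex.add_re] at i2
    linarith
  have hw0 : 0 < (H z₀).re := by
    rw [(key z₀ hb1).1, hvz] at hw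
    simpa using hw
  have hgt : ∀ᶠ z in 𝓝[≠] z₀, 0 < (v2 z * conj (B1 z)).re := by
    have := ((Complex.continuous_re.tendsto _).comp hlim).eventually_const_lt hw0
    filter_upwards [this, hne] with z h1 h2
    have : v2 z * conj (B1 z) = (v2 z / B1 z) * ((‖B1 z‖ ^ 2 : ℝ) : ℂ) := by
      rw [ofReal_norm_sq]; field_simp
    rw [this, Complex.re_mul_ofReal]
    have h3 : 0 < ‖B1 z‖ := norm_pos_iff.2 h2
    simp only [Function.comp] at h1
    positivity
  have hfr := frequently_re_ge hHan
  obtain ⟨z, hz, h1, h3, h5⟩ := (hfr.and_eventually (hgt.and ((eb.and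
    hmax).filter_mono nhdsWithin_le_nhds))).exists
  simp only at h5
  rw [(key z h3).1, (key z₀ hb1).1, hvz] at h5
  have h6 := (key z h3).2
  have : 0 < 2 * (v2 z * conj (B1 z)).re / (1 - ‖B1 z‖ ^ 2) := by
    have : 0 < 1 - ‖B1 z‖ ^ 2 := by nlinarith [norm_nonneg (B1 z)]
    positivity
  simp at h5
  simp at this
  linarith

/-! Part 3 -/
open scoped Topology ComplexConjugate

lemma lin_max {b v h : ℂ → ℂ} (hb : ContinuousOn b (closedBall 0 1))
    (hv : ContinuousOn v (closedBall 0 1)) (hh : ContinuousOn h (closedBall 0 1))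
    (ab : ∀ z ∈ ball (0 : ℂ) 1, AnalyticAt ℂ b z) (av : ∀ z ∈ ball (0 : ℂ) 1, AnalyticAt ℂ v z)
    (ah : ∀ z ∈ ball (0 : ℂ) 1, AnalyticAt ℂ h z)
    (hd : ∀ z ∈ ball (0 : ℂ) 1, deriv v z = h z * deriv b z)
    (hb1 : ∀ z ∈ ball (0 : ℂ) 1, ‖b z‖ < 1) (hbs : ∀ z ∈ sphere (0 : ℂ) 1, ‖b z‖ = 1)
    (hvs : ∀ z ∈ sphere (0 : ℂ) 1, (v z * conj (b z)).re = 0)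
    (hnc : ∀ z₀ ∈ ball (0 : ℂ) 1, ¬ ∀ᶠ z in 𝓝 z₀, deriv b z = 0) :
    ∀ z ∈ ball (0 : ℂ) 1, (h z).re + 2 * (v z * conj (b z)).re / (1 - ‖b z‖ ^ 2) ≤ 0 := by
  intro z1 hz1
  by_contra! hcon
  set W : ℂ → ℝ := fun z => (h z).re + 2 * (v z * conj (b z)).re / (1 - ‖b z‖ ^ 2) with hW
  have pos : ∀ z ∈ ball (0 : ℂ) 1, 0 < 1 - ‖b z‖ ^ 2 := fun z hz => by
    nlinarith [hb1 z hz, norm_nonneg (b z)]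
  obtain ⟨ε, hε, hε1⟩ : ∃ ε : ℝ, 0 < ε ∧ 0 < W z1 - ε * ((1 + ‖b z1‖ ^ 2) / (1 - ‖b z1‖ ^ 2)) := by
    have hp : 0 < (1 + ‖b z1‖ ^ 2) / (1 - ‖b z1‖ ^ 2) := by
      have := pos z1 hz1
      positivity
    refine ⟨W z1 / (2 * ((1 + ‖b z1‖ ^ 2) / (1 - ‖b z1‖ ^ 2))), by have : 0 < W z1 := hcon; positivity, ?_⟩
    have : 0 < W z1 := hcon
    rw [div_mul_eq_mul_div, mul_div_mul_right _ _ hp.ne']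
    linarith
  set v' : ℂ → ℂ := fun z => v z - ε * b z with hv'
  set h' : ℂ → ℂ := fun z => h z - ε with hh'
  set U : ℂ → ℝ := fun z => (h' z).re + 2 * (v' z * conj (b z)).re / (1 - ‖b z‖ ^ 2) with hU
  have hre : ∀ z, (v' z * conj (b z)).re = (v z * conj (b z)).re - ε * ‖b z‖ ^ 2 := by
    intro z
    simp only [hv', sub_mul, Complex.sub_re]
    rw [mul_assoc, Complex.mul_conj, Complex.normSq_eq_norm_sq]
    norm_cast
  have hUW : ∀ z ∈ ball (0 : ℂ) 1, U z = W z - ε * ((1 + ‖b z‖ ^ 2) / (1 - ‖b z‖ ^ 2)) := by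
    intro z hz
    have := (pos z hz).ne'
    simp only [hU, hW, hre, hh', Complex.sub_re, Complex.ofReal_re]
    field_simp
    ring
  set Ψ : ℂ → ℝ := fun z => (1 - ‖b z‖ ^ 2) * (h' z).re + 2 * (v' z * conj (b z)).re with hΨ
  have hΨU : ∀ z ∈ ball (0 : ℂ) 1, Ψ z = (1 - ‖b z‖ ^ 2) * U z := by
    intro z hz
    have := (pos z hz).ne'
    simp only [hΨ, hU]
    field_simp
  have hv'c : ContinuousOn v' (closedBall 0 1) := hv.sub (continuousOn_const.mul hb)
  have hh'c : ContinuousOn h' (closedBall 0 1) := hh.sub continuousOn_const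
  have hprod : ContinuousOn (fun z => (v' z * conj (b z)).re) (closedBall 0 1) :=
    Complex.continuous_re.comp_continuousOn
      (hv'c.mul (Complex.continuous_conj.comp_continuousOn hb))
  have hΨc : ContinuousOn Ψ (closedBall 0 1) :=
    ((continuousOn_const.sub (hb.norm.pow 2)).mul (Complex.continuous_re.comp_continuousOn hh'c)).add
      (continuousOn_const.mul hprod)
  set K := closedBall (0 : ℂ) 1 ∩ Ψ ⁻¹' Set.Ici 0 with hK
  have hKc : IsCompact K :=
    (isCompact_closedBall (0 : ℂ) 1).of_isClosed_subset
      (hΨc.preimage_isClosed_of_isClosed isClosed_closedBall isClosed_Ici) Set.inter_subset_left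
  have hKb : K ⊆ ball 0 1 := by
    rintro z ⟨h1, h2⟩
    by_contra h3
    have h4 : z ∈ sphere (0 : ℂ) 1 := by
      rw [mem_sphere]; rw [mem_closedBall] at h1; rw [mem_ball] at h3
      exact le_antisymm h1 (not_lt.1 h3)
    have h5 : 0 ≤ Ψ z := h2
    simp only [hΨ, hre, hvs z h4, hbs z h4] at h5
    linarith
  have hz1K : z1 ∈ K := by
    refine ⟨ball_subset_closedBall hz1, ?_⟩
    change 0 ≤ Ψ z1
    rw [hΨU z1 hz1, hUW z1 hz1]
    exact (mul_pos (pos z1 hz1) hε1).le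
  have hUc : ContinuousOn U K := by
    refine (Complex.continuous_re.comp_continuousOn
      (hh'c.mono Set.inter_subset_left)).add ?_
    refine ContinuousOn.div (continuousOn_const.mul (hprod.mono Set.inter_subset_left))
      (continuousOn_const.sub ((hb.mono Set.inter_subset_left).norm.pow 2)) ?_
    intro z hz
    exact (pos z (hKb hz)).ne'
  obtain ⟨z0, hz0, hmax⟩ := hKc.exists_isMaxOn ⟨z1, hz1K⟩ hUc
  have hz0b := hKb hz0
  have hU0 : 0 < U z0 := lt_of_lt_of_le (by rw [hUW z1 hz1]; exact hε1) (hmax hz1K)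
  have hnh : ball (0 : ℂ) 1 ∈ 𝓝 z0 := isOpen_ball.mem_nhds hz0b
  refine no_local_max_lin (b := b) (v := v') (h := h') (ab z0 hz0b)
    ((av z0 hz0b).sub (analyticAt_const.mul (ab z0 hz0b))) ((ah z0 hz0b).sub analyticAt_const)
    ?_ (hb1 z0 hz0b) (hnc z0 hz0b) hU0 ?_
  · filter_upwards [hnh] with z hz
    have h1 : HasDerivAt v' (deriv v z - ε * deriv b z) z :=
      (av z hz).differentiableAt.hasDerivAt.sub
        ((ab z hz).differentiableAt.hasDerivAt.const_mul (ε : ℂ))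
    rw [h1.deriv, hd z hz]
    simp only [hh']; ring
  · filter_upwards [hnh] with z hz
    by_cases hzK : z ∈ K
    · exact hmax hzK
    · have : Ψ z < 0 := by
        by_contra! h
        exact hzK ⟨ball_subset_closedBall hz, h⟩
      rw [hΨU z hz] at this
      have h2 : U z < 0 := by
        by_contra! h
        have := mul_nonneg (pos z hz).le h
        linarith
      exact (h2.trans hU0).le

lemma lin_unique {b v h : ℂ → ℂ} (hb : ContinuousOn b (closedBall 0 1))
    (hv : ContinuousOn v (closedBall 0 1)) (hh : ContinuousOn h (closedBall 0 1))
    (ab : ∀ z ∈ ball (0 : ℂ) 1, AnalyticAt ℂ b z) (av : ∀ z ∈ ball (0 : ℂ) 1, AnalyticAt ℂ v z)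
    (ah : ∀ z ∈ ball (0 : ℂ) 1, AnalyticAt ℂ h z)
    (hd : ∀ z ∈ ball (0 : ℂ) 1, deriv v z = h z * deriv b z)
    (hb1 : ∀ z ∈ ball (0 : ℂ) 1, ‖b z‖ < 1) (hbs : ∀ z ∈ sphere (0 : ℂ) 1, ‖b z‖ = 1)
    (hvs : ∀ z ∈ sphere (0 : ℂ) 1, (v z * conj (b z)).re = 0)
    (hnc : ∀ z₀ ∈ ball (0 : ℂ) 1, ¬ ∀ᶠ z in 𝓝 z₀, deriv b z = 0)
    (hb0 : b 0 = 0) (hv0 : v 0 = 0) :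
    (h 0).re = 0 ∧ ∀ᶠ z in 𝓝 0, h z = h 0 := by
  have h0 : (0 : ℂ) ∈ ball (0 : ℂ) 1 := by simp
  have hnh : ball (0 : ℂ) 1 ∈ 𝓝 (0 : ℂ) := isOpen_ball.mem_nhds h0
  have hw : ∀ z ∈ ball (0 : ℂ) 1, (h z).re + 2 * (v z * conj (b z)).re / (1 - ‖b z‖ ^ 2) = 0 := by
    intro z hz
    refine le_antisymm (lin_max hb hv hh ab av ah hd hb1 hbs hvs hnc z hz) ?_
    have := lin_max (b := b) (v := fun z => - v z) (h := fun z => - h z) hb hv.neg hh.neg ab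
      (fun z hz => (av z hz).neg) (fun z hz => (ah z hz).neg)
      (fun z hz => by
        have : deriv (fun z => - v z) z = - deriv v z := deriv.fun_neg
        rw [this, hd z hz]; ring) hb1 hbs
      (fun z hz => by rw [neg_mul, Complex.neg_re, hvs z hz, neg_zero]) hnc z hz
    rw [neg_mul, Complex.neg_re, Complex.neg_re, mul_neg, neg_div] at this
    linarith
  have hre : (h 0).re = 0 := by simpa [hb0, hv0] using hw 0 h0
  refine ⟨hre, ?_⟩
  set h1 : ℂ → ℂ := fun z => h z - h 0 with hh1
  set v1 : ℂ → ℂ := fun z => v z - h 0 * b z with hv1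
  have a1 : AnalyticAt ℂ h1 0 := (ah 0 h0).sub analyticAt_const
  have a2 : AnalyticAt ℂ v1 0 := (av 0 h0).sub (analyticAt_const.mul (ab 0 h0))
  have hw1 : ∀ z ∈ ball (0 : ℂ) 1, (h1 z).re = -(2 * (v1 z * conj (b z)).re / (1 - ‖b z‖ ^ 2)) := by
    intro z hz
    have e1 : (v1 z * conj (b z)).re = (v z * conj (b z)).re := by
      simp only [hv1, sub_mul, Complex.sub_re]
      rw [mul_assoc, Complex.mul_conj, Complex.re_mul_ofReal, hre]; ring
    have := hw z hz
    simp only [hh1, Complex.sub_re, hre]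
    rw [e1]; linarith
  have hd1 : ∀ᶠ z in 𝓝 (0 : ℂ), deriv v1 z = h1 z * deriv b z := by
    filter_upwards [hnh] with z hz
    have h1 : HasDerivAt v1 (deriv v z - h 0 * deriv b z) z :=
      (av z hz).differentiableAt.hasDerivAt.sub
        ((ab z hz).differentiableAt.hasDerivAt.const_mul _)
    rw [h1.deriv, hd z hz]
    simp only [hh1]; ring
  by_cases htop : analyticOrderAt h1 0 = ⊤
  · rw [analyticOrderAt_eq_top] at htop
    filter_upwards [htop] with z hz
    exact sub_eq_zero.1 hz
  exfalso
  obtain ⟨k, hk⟩ := ENat.ne_top_iff_exists.1 htop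
  obtain ⟨u, hu, hu0, hbu⟩ := (a1.analyticOrderAt_eq_natCast).1 hk.symm
  have hord : (k : ℕ∞) ≤ analyticOrderAt v1 0 := by
    have h2 := a2.analyticOrderAt_deriv_add_one
    have e : v1 0 = 0 := by simp [hv1, hb0, hv0]
    simp only [e, sub_zero] at h2
    have hd1' : deriv v1 =ᶠ[𝓝 0] h1 * deriv b := hd1
    rw [← h2, analyticOrderAt_congr hd1', analyticOrderAt_mul a1 (ab 0 h0).deriv, ← hk, add_assoc]
    exact le_self_add
  obtain ⟨r, hr, hvr⟩ := (natCast_le_analyticOrderAt a2).1 hord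
  have small : ∀ᶠ z in 𝓝 (0 : ℂ), 2 * ‖r z‖ * ‖b z‖ / (1 - ‖b z‖ ^ 2) < ‖u z‖ := by
    have hc : ContinuousAt (fun z => 2 * ‖r z‖ * ‖b z‖ / (1 - ‖b z‖ ^ 2)) 0 := by
      refine ContinuousAt.div ?_ ?_ (by simp [hb0])
      · exact (continuousAt_const.mul hr.continuousAt.norm).mul (ab 0 h0).continuousAt.norm
      · exact continuousAt_const.sub ((ab 0 h0).continuousAt.norm.pow 2)
    refine hc.eventually_lt hu.continuousAt.norm ?_
    simp [hb0, hu0]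
  have small2 : ∀ᶠ z in 𝓝 (0 : ℂ), h1 z ≠ 0 → |(h1 z).re| < ‖h1 z‖ := by
    filter_upwards [small, hbu, hvr, hnh] with z s1 s2 s3 hz hne
    have pos : 0 < 1 - ‖b z‖ ^ 2 := by nlinarith [hb1 z hz, norm_nonneg (b z)]
    have hzk : 0 < ‖(z - 0) ^ k‖ := by
      rw [norm_pos_iff]; intro h; rw [h] at s2; simp at s2; exact hne s2
    rw [hw1 z hz, abs_neg, s2, s3, smul_eq_mul, smul_eq_mul, abs_div, abs_of_pos pos, abs_mul,
      abs_two, norm_mul]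
    calc _ ≤ 2 * (‖(z - 0) ^ k‖ * ‖r z‖ * ‖b z‖) / (1 - ‖b z‖ ^ 2) := by
          gcongr
          refine (Complex.abs_re_le_norm _).trans ?_
          simp
      _ = ‖(z - 0) ^ k‖ * (2 * ‖r z‖ * ‖b z‖ / (1 - ‖b z‖ ^ 2)) := by ring
      _ < _ := by gcongr
  rcases a1.eventually_constant_or_nhds_le_map_nhds with hconst | hopen
  · apply htop
    rw [analyticOrderAt_eq_top]
    filter_upwards [hconst] with z hz
    rw [hz]; simp [hh1]
  · have h3 : ∀ᶠ y in Filter.map h1 (𝓝 0), y ≠ 0 → |y.re| < ‖y‖ := small2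
    have h4 := h3.filter_mono hopen
    have e : h1 0 = 0 := by simp [hh1]
    rw [e] at h4
    obtain ⟨δ, hδ, h5⟩ := Metric.eventually_nhds_iff.1 h4
    have h6 := @h5 ((δ / 2 : ℝ) : ℂ) (by
      rw [dist_zero_right, Complex.norm_real, Real.norm_of_nonneg (by positivity)]; linarith)
      (by exact_mod_cast (by positivity : (δ / 2 : ℝ) ≠ 0))
    rw [Complex.norm_real, Complex.ofReal_re] at h6
    exact lt_irrefl _ h6

/-! Part 4 -/
open scoped Topology ComplexConjugate

noncomputable def Qp {n : ℕ} (A : Fin (n + 1) → ℂ) (z : ℂ) : ℂ := ∑ l, A l * z ^ (l : ℕ)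
noncomputable def qp {n : ℕ} (A : Fin (n + 1) → ℂ) (z : ℂ) : ℂ := ∑ i, conj (A i) * z ^ (n - (i : ℕ))
/-- formal sum attached to a matrix -/
noncomputable def Xs {n : ℕ} (X : Fin (n + 1) → Fin (n + 1) → ℂ) (z : ℂ) : ℂ :=
  ∑ i, ∑ l, X i l * z ^ (n - (i : ℕ) + (l : ℕ))
noncomputable def Wm {n : ℕ} (A C : Fin (n + 1) → ℂ) (i l : Fin (n + 1)) : ℂ :=
  ((n : ℂ) + 1 - (i : ℕ) - (l : ℕ)) * (conj (A i) * C l)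
noncomputable def fib {n : ℕ} (X : Fin (n + 1) → Fin (n + 1) → ℂ) (m : ℕ) : ℂ :=
  ∑ i : Fin (n + 1), ∑ l : Fin (n + 1), if (l : ℕ) = i + m then X i l else 0

lemma Xs_eq_zero {n : ℕ} {X : Fin (n + 1) → Fin (n + 1) → ℂ} (hX : ∀ i l, X l i = conj (X i l))
    (h0 : (fib X 0).re = 0) (h : ∀ m, 1 ≤ m → m ≤ n → fib X m = 0) (z : ℂ) : Xs X z = 0 := by
  have hconj : ∀ m, ∑ i : Fin (n + 1), ∑ l : Fin (n + 1), (if (i : ℕ) = l + m then X i l else 0)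
      = conj (fib X m) := by
    intro m
    rw [fib, map_sum, Finset.sum_comm]
    refine Finset.sum_congr rfl fun i _ => ?_
    rw [map_sum]
    refine Finset.sum_congr rfl fun l _ => ?_
    split_ifs <;> simp [hX i l]
  have hf0 : fib X 0 = 0 := by
    apply Complex.ext h0
    have := hconj 0
    have h2 : conj (fib X 0) = fib X 0 := by
      rw [← this, fib]
      simp only [add_zero]
      refine Finset.sum_congr rfl fun i _ => Finset.sum_congr rfl fun l _ => ?_
      simp only [eq_comm]
    exact Complex.conj_eq_iff_im.1 h2
  have hf : ∀ m ∈ Finset.range (n + 1), fib X m = 0 := by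
    intro m hm
    rcases Nat.eq_zero_or_pos m with rfl | hm0
    · exact hf0
    · exact h m hm0 (by simpa [Nat.lt_succ_iff] using hm)
  have key : ∀ k ∈ Finset.range (2 * n + 1),
      ∑ i : Fin (n + 1), ∑ l : Fin (n + 1), (if n - (i : ℕ) + (l : ℕ) = k then X i l else 0) = 0 := by
    intro k hk
    simp only [Finset.mem_range] at hk
    by_cases hkn : n ≤ k
    · refine Eq.trans ?_ (hf (k - n) (by simp; omega))
      rw [fib]
      refine Finset.sum_congr rfl fun i _ => Finset.sum_congr rfl fun l _ => ?_
      have := i.2; have := l.2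
      congr 1
      simp only [eq_iff_iff]; omega
    · have h1 := hconj (n - k)
      rw [hf (n - k) (by simp only [Finset.mem_range]; omega), map_zero] at h1
      rw [← h1]
      refine Finset.sum_congr rfl fun i _ => Finset.sum_congr rfl fun l _ => ?_
      have := i.2; have := l.2
      congr 1
      simp only [eq_iff_iff]; omega
  have : Xs X z = ∑ k ∈ Finset.range (2 * n + 1), (∑ i : Fin (n + 1), ∑ l : Fin (n + 1),
      (if n - (i : ℕ) + (l : ℕ) = k then X i l else 0)) * z ^ k := by
    simp only [Finset.sum_mul]
    rw [Finset.sum_comm, Xs]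
    refine Finset.sum_congr rfl fun i _ => ?_
    rw [Finset.sum_comm]
    refine Finset.sum_congr rfl fun l _ => ?_
    rw [Finset.sum_eq_single (n - (i : ℕ) + (l : ℕ))]
    · simp
    · intro b _ hb; rw [if_neg (Ne.symm hb), zero_mul]
    · intro hb; simp only [Finset.mem_range] at hb; have := i.2; have := l.2; omega
  rw [this]
  exact Finset.sum_eq_zero fun k hk => by rw [key k hk, zero_mul]

noncomputable def Qd {n : ℕ} (A : Fin (n + 1) → ℂ) (z : ℂ) : ℂ :=
  ∑ l : Fin (n + 1), A l * ((l : ℕ) * z ^ ((l : ℕ) - 1))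
noncomputable def Nd {n : ℕ} (A : Fin (n + 1) → ℂ) (z : ℂ) : ℂ :=
  ∑ i : Fin (n + 1), conj (A i) * (((n - (i : ℕ) + 1 : ℕ) : ℂ) * z ^ (n - (i : ℕ)))

lemma hasDerivAt_Qp {n : ℕ} (A : Fin (n + 1) → ℂ) (z : ℂ) : HasDerivAt (Qp A) (Qd A z) z := by
  unfold Qp Qd
  exact HasDerivAt.fun_sum fun l _ => (hasDerivAt_pow (l : ℕ) z).const_mul (A l)

lemma hasDerivAt_zqp {n : ℕ} (A : Fin (n + 1) → ℂ) (z : ℂ) :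
    HasDerivAt (fun z => z * qp A z) (Nd A z) z := by
  have : (fun z => z * qp A z) = fun z => ∑ i, conj (A i) * z ^ (n - (i : ℕ) + 1) := by
    ext z
    rw [qp, Finset.mul_sum]
    refine Finset.sum_congr rfl fun i _ => ?_
    ring
  rw [this]
  unfold Nd
  exact HasDerivAt.fun_sum fun i _ => (hasDerivAt_pow (n - (i : ℕ) + 1) z).const_mul (conj (A i))

lemma Xs_Wm {n : ℕ} (A C : Fin (n + 1) → ℂ) (z : ℂ) :
    Xs (Wm A C) z = Nd A z * Qp C z - z * qp A z * Qd C z := by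
  have e : z * qp A z * Qd C z =
      (∑ i, conj (A i) * z ^ (n - (i : ℕ))) * (∑ l : Fin (n + 1), C l * ((l : ℕ) * z ^ (l : ℕ))) := by
    rw [mul_comm z, mul_assoc, qp]
    congr 1
    rw [Qd, Finset.mul_sum]
    refine Finset.sum_congr rfl fun l _ => ?_
    rcases Nat.eq_zero_or_pos (l : ℕ) with h | h
    · rw [h]; simp
    · obtain ⟨k, hk⟩ := Nat.exists_eq_add_of_lt h
      rw [hk]; simp; ring
  rw [e, Nd, Qp, Finset.sum_mul_sum, Finset.sum_mul_sum, ← Finset.sum_sub_distrib, Xs]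
  refine Finset.sum_congr rfl fun i _ => ?_
  rw [← Finset.sum_sub_distrib]
  refine Finset.sum_congr rfl fun l _ => ?_
  have hi : (i : ℕ) ≤ n := Nat.lt_succ_iff.1 i.2
  rw [Wm, pow_add]
  push_cast [Nat.cast_sub hi]
  ring

lemma Xs_mul {n : ℕ} (A C : Fin (n + 1) → ℂ) (z : ℂ) :
    Xs (fun i l => conj (A i) * C l) z = Qp C z * qp A z := by
  rw [mul_comm, Xs, qp, Qp, Finset.sum_mul_sum]
  refine Finset.sum_congr rfl fun i _ => Finset.sum_congr rfl fun l _ => ?_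
  rw [pow_add]; ring

lemma qp_circle {n : ℕ} (A : Fin (n + 1) → ℂ) {z : ℂ} (hz : ‖z‖ = 1) :
    qp A z = z ^ n * conj (Qp A z) := by
  rw [qp, Qp, map_sum, Finset.mul_sum]
  refine Finset.sum_congr rfl fun i _ => ?_
  have hi : (i : ℕ) ≤ n := Nat.lt_succ_iff.1 i.2
  have h1 : z * conj z = 1 := by
    rw [Complex.mul_conj, Complex.normSq_eq_norm_sq, hz]; simp
  rw [map_mul, map_pow]
  have e : z ^ n = z ^ (n - (i : ℕ)) * z ^ (i : ℕ) := by rw [← pow_add, Nat.sub_add_cancel hi]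
  rw [e]
  have h2 : z ^ (i : ℕ) * conj z ^ (i : ℕ) = 1 := by rw [← mul_pow, h1, one_pow]
  linear_combination (-(conj (A i)) * z ^ (n - (i : ℕ))) * h2

lemma qp_inv {n : ℕ} (A : Fin (n + 1) → ℂ) {z : ℂ} (hz : z ≠ 0) :
    qp A z = z ^ n * conj (Qp A (conj z)⁻¹) := by
  rw [qp, Qp, map_sum, Finset.mul_sum]
  refine Finset.sum_congr rfl fun i _ => ?_
  have hi : (i : ℕ) ≤ n := Nat.lt_succ_iff.1 i.2
  rw [map_mul, map_pow, map_inv₀, Complex.conj_conj]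
  have e : z ^ n = z ^ (n - (i : ℕ)) * z ^ (i : ℕ) := by rw [← pow_add, Nat.sub_add_cancel hi]
  rw [e, inv_pow]
  field_simp

open Polynomial in
noncomputable def qpoly {n : ℕ} (A : Fin (n + 1) → ℂ) : Polynomial ℂ :=
  ∑ i : Fin (n + 1), C (conj (A i)) * X ^ (n - (i : ℕ))

lemma qpoly_eval {n : ℕ} (A : Fin (n + 1) → ℂ) (z : ℂ) : (qpoly A).eval z = qp A z := by
  simp [qpoly, qp, Polynomial.eval_finsetSum]

lemma qpoly_coeff {n : ℕ} (A : Fin (n + 1) → ℂ) (i : Fin (n + 1)) :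
    (qpoly A).coeff (n - (i : ℕ)) = conj (A i) := by
  rw [qpoly, Polynomial.finsetSum_coeff, Finset.sum_eq_single i]
  · simp
  · intro b _ hb
    rw [Polynomial.coeff_C_mul, Polynomial.coeff_X_pow, if_neg, mul_zero]
    intro h
    apply hb
    have := i.2; have := b.2
    ext; omega
  · simp

lemma qpoly_natDegree_le {n : ℕ} (A : Fin (n + 1) → ℂ) : (qpoly A).natDegree ≤ n := by
  refine Polynomial.natDegree_sum_le_of_forall_le _ _ fun i _ => ?_
  exact (Polynomial.natDegree_C_mul_X_pow_le _ _).trans (Nat.sub_le _ _)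

lemma qpoly_monic {n : ℕ} {A : Fin (n + 1) → ℂ} (h0 : A 0 = 1) : (qpoly A).Monic := by
  refine Polynomial.monic_of_natDegree_le_of_coeff_eq_one n (qpoly_natDegree_le A) ?_
  have := qpoly_coeff A 0
  simpa [h0] using this

lemma qpoly_natDegree {n : ℕ} {A : Fin (n + 1) → ℂ} (h0 : A 0 = 1) : (qpoly A).natDegree = n := by
  refine le_antisymm (qpoly_natDegree_le A) (Polynomial.le_natDegree_of_ne_zero ?_)
  have := qpoly_coeff A 0
  simp only [Fin.coe_ofNat_eq_mod, Nat.zero_mod, tsub_zero, h0, map_one] at this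
  rw [this]; exact one_ne_zero

/-- polynomials vanishing near a point are zero -/
lemma qp_zero {n : ℕ} {A : Fin (n + 1) → ℂ} {z₀ : ℂ} (h : ∀ᶠ z in 𝓝 z₀, qp A z = 0) : A = 0 := by
  have : qpoly A = 0 := by
    refine Polynomial.eq_zero_of_infinite_isRoot _ ?_
    have : {z | qp A z = 0} ∈ 𝓝 z₀ := h
    refine (infinite_of_mem_nhds z₀ this).mono ?_
    intro z hz
    simpa [Polynomial.IsRoot, qpoly_eval] using hz
  ext i
  have h2 := qpoly_coeff A i
  rw [this] at h2
  simp at h2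
  simpa using h2.symm

lemma Qp_zero {n : ℕ} {A : Fin (n + 1) → ℂ} {z₀ : ℂ} (h : ∀ᶠ z in 𝓝 z₀, Qp A z = 0) : A = 0 := by
  have : (∑ l : Fin (n + 1), Polynomial.C (A l) * Polynomial.X ^ (l : ℕ)) = 0 := by
    refine Polynomial.eq_zero_of_infinite_isRoot _ ?_
    have : {z | Qp A z = 0} ∈ 𝓝 z₀ := h
    refine (infinite_of_mem_nhds z₀ this).mono ?_
    intro z hz
    simpa [Polynomial.IsRoot, Polynomial.eval_finsetSum, Qp] using hz
  ext i
  have h2 := congrArg (fun p => Polynomial.coeff p (i : ℕ)) this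
  simp only [Polynomial.finsetSum_coeff, Polynomial.coeff_C_mul, Polynomial.coeff_X_pow] at h2
  rw [Finset.sum_eq_single i] at h2
  · simpa using h2
  · intro b _ hb
    rw [if_neg, mul_zero]
    intro h
    exact hb (Fin.ext h.symm)
  · simp

lemma Qp_at_zero {n : ℕ} (A : Fin (n + 1) → ℂ) : Qp A 0 = A 0 := by
  rw [Qp, Finset.sum_eq_single 0]
  · simp
  · intro b _ hb
    rw [zero_pow, mul_zero]
    intro h
    exact hb (Fin.ext h)
  · simp

/-- roots in the disc -/
lemma qp_root_norm {n : ℕ} {A : Fin (n + 1) → ℂ} (hQ : ∀ z, ‖z‖ < 1 → Qp A z ≠ 0)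
    {w : ℂ} (hw : qp A w = 0) : ‖w‖ ≤ 1 := by
  by_contra! h
  have hw0 : w ≠ 0 := by intro h0; rw [h0, norm_zero] at h; linarith
  rw [qp_inv A hw0] at hw
  rcases mul_eq_zero.1 hw with h1 | h1
  · exact pow_ne_zero n hw0 h1
  · rw [map_eq_zero] at h1
    refine hQ _ ?_ h1
    rw [norm_inv, RCLike.norm_conj]
    exact inv_lt_one_of_one_lt₀ h

lemma coeff_bound {n : ℕ} {A : Fin (n + 1) → ℂ} (h0 : A 0 = 1)
    (hQ : ∀ z, ‖z‖ < 1 → Qp A z ≠ 0) (i : Fin (n + 1)) : ‖A i‖ ≤ 1 * (n.choose (n / 2)) := by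
  have := Polynomial.coeff_bdd_of_roots_le (f := RingHom.id ℂ) (p := qpoly A) (B := 1) (d := n)
    (qpoly_monic h0) (IsAlgClosed.splits _) (qpoly_natDegree_le A) (by
      intro z hz
      have : qp A z = 0 := by
        have := Polynomial.isRoot_of_mem_roots hz
        simpa [Polynomial.IsRoot, qpoly_eval] using this
      exact qp_root_norm hQ this) (n - (i : ℕ))
  simp [qpoly_coeff] at this
  simpa using this

lemma Qp_lower {n : ℕ} {A : Fin (n + 1) → ℂ} (h0 : A 0 = 1)
    (hQ : ∀ z, ‖z‖ < 1 → Qp A z ≠ 0) {z : ℂ} (hz : ‖z‖ < 1) : (1 - ‖z‖) ^ n ≤ ‖Qp A z‖ := by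
  by_cases hz0 : z = 0
  · simp [hz0, Qp_at_zero, h0]
  have hqn : ∀ w : ℂ, 1 ≤ ‖w‖ → (‖w‖ - 1) ^ n ≤ ‖qp A w‖ := by
    intro w hw
    have h1 := (IsAlgClosed.splits (qpoly A)).eval_eq_prod_roots_of_monic (qpoly_monic h0) w
    rw [qpoly_eval] at h1
    rw [h1]
    have hc : (qpoly A).roots.card = n := by
      rw [← (IsAlgClosed.splits (qpoly A)).natDegree_eq_card_roots, qpoly_natDegree h0]
    have hc' : (‖w‖ - 1) ^ n = (‖w‖ - 1) ^ (qpoly A).roots.card := by rw [hc]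
    rw [hc']
    have hr : ∀ r ∈ (qpoly A).roots, ‖r‖ ≤ 1 := by
      intro r hr
      refine qp_root_norm hQ ?_
      have := Polynomial.isRoot_of_mem_roots hr
      simpa [Polynomial.IsRoot, qpoly_eval] using this
    revert hr
    generalize (qpoly A).roots = m
    intro hr
    induction m using Multiset.induction_on with
    | empty => simp
    | cons a s ih =>
      simp only [Multiset.card_cons, Multiset.map_cons, Multiset.prod_cons, norm_mul, pow_succ']
      have h3 : ‖w‖ - 1 ≤ ‖w - a‖ := by
        have := hr a (by simp)
        have := norm_sub_norm_le w a
        linarith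
      have h4 := ih (fun r h => hr r (by simp [h]))
      have h5 : 0 ≤ (‖w‖ - 1) ^ s.card := pow_nonneg (by linarith) _
      exact mul_le_mul h3 h4 h5 (norm_nonneg _)
  have hpos : 0 < ‖z‖ := norm_pos_iff.2 hz0
  have h1 := hqn (conj z)⁻¹ (by
    rw [norm_inv, RCLike.norm_conj]; exact (one_le_inv₀ hpos).2 hz.le)
  rw [qp_inv A (by simpa using hz0), norm_mul, norm_pow, RCLike.norm_conj] at h1
  simp only [norm_inv, RCLike.norm_conj, map_inv₀, Complex.conj_conj, inv_inv] at h1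
  have h2 : ‖z‖⁻¹ - 1 = ‖z‖⁻¹ * (1 - ‖z‖) := by field_simp
  rw [h2, mul_pow] at h1
  exact le_of_mul_le_mul_left h1 (by positivity)

/-! Part 5 -/
open scoped Topology ComplexConjugate

noncomputable def Bq {n : ℕ} (A : Fin (n + 1) → ℂ) (z : ℂ) : ℂ := z * qp A z / Qp A z

lemma differentiable_Qp {n : ℕ} (A : Fin (n + 1) → ℂ) : Differentiable ℂ (Qp A) :=
  fun z => (hasDerivAt_Qp A z).differentiableAt

lemma differentiable_qp {n : ℕ} (A : Fin (n + 1) → ℂ) : Differentiable ℂ (qp A) := by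
  unfold qp; fun_prop

lemma analyticAt_Qp {n : ℕ} (A : Fin (n + 1) → ℂ) (z : ℂ) : AnalyticAt ℂ (Qp A) z :=
  (differentiable_Qp A).analyticAt z

lemma analyticAt_qp {n : ℕ} (A : Fin (n + 1) → ℂ) (z : ℂ) : AnalyticAt ℂ (qp A) z :=
  (differentiable_qp A).analyticAt z

lemma analyticAt_Bq {n : ℕ} {A : Fin (n + 1) → ℂ} {z : ℂ} (h : Qp A z ≠ 0) :
    AnalyticAt ℂ (Bq A) z :=
  (analyticAt_id.mul (analyticAt_qp A z)).div (analyticAt_Qp A z) h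

lemma hasDerivAt_Bq {n : ℕ} {A : Fin (n + 1) → ℂ} {z : ℂ} (h : Qp A z ≠ 0) :
    HasDerivAt (Bq A) (Xs (Wm A A) z / Qp A z ^ 2) z := by
  rw [Xs_Wm]
  exact (hasDerivAt_zqp A z).div (hasDerivAt_Qp A z) h

lemma norm_qp_circle {n : ℕ} (A : Fin (n + 1) → ℂ) {z : ℂ} (hz : ‖z‖ = 1) :
    ‖qp A z‖ = ‖Qp A z‖ := by
  rw [qp_circle A hz, norm_mul, norm_pow, hz, one_pow, one_mul, RCLike.norm_conj]

lemma Bq_norm_le {n : ℕ} {A : Fin (n + 1) → ℂ} (hQ : ∀ z, ‖z‖ ≤ 1 → Qp A z ≠ 0) {z : ℂ}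
    (hz : ‖z‖ ≤ 1) : ‖Bq A z‖ ≤ ‖z‖ := by
  have h1 : ‖qp A z / Qp A z‖ ≤ 1 := by
    have hd : DiffContOnCl ℂ (fun z => qp A z / Qp A z) (ball 0 1) := by
      refine DifferentiableOn.diffContOnCl ?_
      rw [closure_ball (0 : ℂ) one_ne_zero]
      intro w hw
      exact ((differentiable_qp A w).div (differentiable_Qp A w)
        (hQ w (by simpa using hw))).differentiableWithinAt
    refine Complex.norm_le_of_forall_mem_frontier_norm_le isBounded_ball hd ?_ ?_
    · intro w hw
      rw [frontier_ball (0 : ℂ) one_ne_zero, mem_sphere_zero_iff_norm] at hw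
      have := hQ w hw.le
      rw [norm_div, norm_qp_circle A hw, div_self (norm_ne_zero_iff.2 this)]
    · rw [closure_ball (0 : ℂ) one_ne_zero]; simpa using hz
  rw [Bq, mul_div_assoc, norm_mul]
  nlinarith [norm_nonneg z]

lemma Bq_norm_circle {n : ℕ} {A : Fin (n + 1) → ℂ} (hQ : ∀ z, ‖z‖ ≤ 1 → Qp A z ≠ 0) {z : ℂ}
    (hz : ‖z‖ = 1) : ‖Bq A z‖ = 1 := by
  rw [Bq, norm_div, norm_mul, hz, one_mul, norm_qp_circle A hz,
    div_self (norm_ne_zero_iff.2 (hQ z hz.le))]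

lemma kernel_zero {n : ℕ} {A A' d : Fin (n + 1) → ℂ} {s s' : ℝ} (h0 : A 0 = 1) (hs : s ≠ 0)
    (hQ : ∀ z, ‖z‖ ≤ 1 → Qp A z ≠ 0) (hd0 : d 0 = 1) (hD : ∀ z, ‖z‖ ≤ 1 → Qp d z ≠ 0)
    (hW : ∀ z, Xs (Wm A A) z = s * (Qp d z * qp d z)) (h0' : A' 0 = 0)
    (hW' : ∀ z, Xs (Wm A' A) z + Xs (Wm A A') z = s' * (Qp d z * qp d z)) :
    A' = 0 ∧ s' = 0 := by
  set v : ℂ → ℂ := fun z => (z * qp A' z * Qp A z - z * qp A z * Qp A' z) / Qp A z ^ 2 with hv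
  set h : ℂ → ℂ := fun z => ((s' / s : ℝ) : ℂ) - 2 * Qp A' z / Qp A z with hh
  have an_v : ∀ z, ‖z‖ ≤ 1 → AnalyticAt ℂ v z := by
    intro z hz
    exact (((analyticAt_id.mul (analyticAt_qp A' z)).mul (analyticAt_Qp A z)).sub
      ((analyticAt_id.mul (analyticAt_qp A z)).mul (analyticAt_Qp A' z))).div
      ((analyticAt_Qp A z).pow 2) (pow_ne_zero 2 (hQ z hz))
  have an_h : ∀ z, ‖z‖ ≤ 1 → AnalyticAt ℂ h z := by
    intro z hz
    exact analyticAt_const.sub ((analyticAt_const.mul (analyticAt_Qp A' z)).div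
      (analyticAt_Qp A z) (hQ z hz))
  have hsC : (s : ℂ) ≠ 0 := by exact_mod_cast hs
  have hres := lin_unique (b := Bq A) (v := v) (h := h)
    (fun z hz => (analyticAt_Bq (hQ z (by simpa using hz))).continuousAt.continuousWithinAt)
    (fun z hz => (an_v z (by simpa using hz)).continuousAt.continuousWithinAt)
    (fun z hz => (an_h z (by simpa using hz)).continuousAt.continuousWithinAt)
    (fun z hz => analyticAt_Bq (hQ z (by simpa using (ball_subset_closedBall hz))))
    (fun z hz => an_v z (by simpa using (ball_subset_closedBall hz)))
    (fun z hz => an_h z (by simpa using (ball_subset_closedBall hz)))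
    ?_ ?_ ?_ ?_ ?_ ?_ ?_
  rotate_left
  · intro z hz
    have hz' : ‖z‖ ≤ 1 := by simpa using (ball_subset_closedBall hz)
    have hq := hQ z hz'
    have e1 := (((hasDerivAt_zqp A' z).mul (hasDerivAt_Qp A z)).sub
      ((hasDerivAt_zqp A z).mul (hasDerivAt_Qp A' z))).div ((hasDerivAt_Qp A z).pow 2)
      (pow_ne_zero 2 hq)
    have e2 : deriv v z = _ := e1.deriv
    rw [e2, (hasDerivAt_Bq hq).deriv]
    have e3 := hW' z
    have e4 := hW z
    simp only [hh]
    have e5 : ((s' / s : ℝ) : ℂ) * Xs (Wm A A) z = Xs (Wm A' A) z + Xs (Wm A A') z := by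
      rw [e3, e4]; push_cast; field_simp
    have e6 : (((s' / s : ℝ) : ℂ) - 2 * Qp A' z / Qp A z) * (Xs (Wm A A) z / Qp A z ^ 2) =
        ((Xs (Wm A' A) z + Xs (Wm A A') z) - 2 * Qp A' z / Qp A z * Xs (Wm A A) z) / Qp A z ^ 2 := by
      rw [← e5]; ring
    rw [e6, Xs_Wm, Xs_Wm, Xs_Wm]
    simp
    field_simp
    ring
  · intro z hz
    have hz' : ‖z‖ < 1 := by simpa using hz
    exact (Bq_norm_le hQ hz'.le).trans_lt hz'
  · intro z hz
    exact Bq_norm_circle hQ (by simpa using hz)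
  · intro z hz
    have hz' : ‖z‖ = 1 := by simpa using hz
    have hq := hQ z hz'.le
    have hqc : conj (Qp A z) ≠ 0 := by simpa using hq
    have h1 : z * conj z = 1 := by
      rw [Complex.mul_conj, Complex.normSq_eq_norm_sq, hz']; simp
    have h2 : z ^ n * conj z ^ n = 1 := by rw [← mul_pow, h1, one_pow]
    have e : v z * conj (Bq A z) = (conj (Qp A' z) * Qp A z - conj (Qp A z) * Qp A' z) /
        (Qp A z * conj (Qp A z)) := by
      simp only [hv, Bq, map_div₀, map_mul]
      rw [qp_circle A hz', qp_circle A' hz']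
      simp only [map_mul, map_pow, Complex.conj_conj]
      rw [div_mul_div_comm, div_eq_div_iff (by positivity) (by positivity)]
      linear_combination ((conj (Qp A' z) * Qp A z - conj (Qp A z) * Qp A' z) *
        (Qp A z * conj (Qp A z))) * Qp A z * (z * conj z * h2 + h1)
    have e2 : conj (v z * conj (Bq A z)) = - (v z * conj (Bq A z)) := by
      rw [e]
      simp only [map_div₀, map_sub, map_mul, Complex.conj_conj]
      rw [mul_comm (conj (Qp A z)) (Qp A z), ← neg_div]
      congr 1; ring
    have := congrArg Complex.re e2
    rw [Complex.conj_re, Complex.neg_re] at this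
    linarith
  · intro z₀ hz₀ hcon
    have hz' : ‖z₀‖ < 1 := by simpa using hz₀
    have : d = 0 := by
      refine qp_zero (z₀ := z₀) ?_
      filter_upwards [hcon, isOpen_ball.mem_nhds hz₀] with z h1 h2
      have h3 : ‖z‖ ≤ 1 := by simpa using (ball_subset_closedBall h2)
      rw [(hasDerivAt_Bq (hQ z h3)).deriv, hW z, div_eq_zero_iff] at h1
      rcases h1 with h1 | h1
      · simpa [hsC, hD z h3] using h1
      · exact absurd h1 (pow_ne_zero 2 (hQ z h3))
    rw [this] at hd0; simp at hd0
  · simp [Bq]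
  · simp [hv]
  obtain ⟨r1, r2⟩ := hres
  have hh0 : h 0 = ((s' / s : ℝ) : ℂ) := by simp [hh, Qp_at_zero, h0']
  have hs' : s' / s = 0 := by
    rw [hh0, Complex.ofReal_re] at r1; exact r1
  refine ⟨?_, ?_⟩
  · refine Qp_zero (z₀ := 0) ?_
    filter_upwards [r2, ball_mem_nhds (0 : ℂ) one_pos] with z h1 h2
    rw [hh0] at h1
    simp only [hh] at h1
    have h3 : ‖z‖ ≤ 1 := by simpa using (ball_subset_closedBall h2)
    have h4 : 2 * Qp A' z / Qp A z = 0 := by linear_combination -h1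
    simpa [hQ z h3] using h4
  · rcases div_eq_zero_iff.1 hs' with h | h
    · exact h
    · exact absurd h hs

/-! Part 6 -/
open scoped Topology ComplexConjugate

def Sol {n : ℕ} (d A : Fin (n + 1) → ℂ) (s : ℝ) : Prop :=
  A 0 = 1 ∧ s ≠ 0 ∧ (∀ z, ‖z‖ ≤ 1 → Qp A z ≠ 0) ∧ ∀ z, Xs (Wm A A) z = s * (Qp d z * qp d z)

noncomputable def dt {n : ℕ} (d : Fin (n + 1) → ℂ) (t : ℝ) : Fin (n + 1) → ℂ :=
  fun l => (t : ℂ) ^ (l : ℕ) * d l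

noncomputable def cA {n : ℕ} (a : Fin n → ℂ) : Fin (n + 1) → ℂ := Fin.cons 1 a

noncomputable def Xm {n : ℕ} (d : Fin (n + 1) → ℂ) (p : ((Fin n → ℂ) × ℝ) × ℝ)
    (i l : Fin (n + 1)) : ℂ :=
  Wm (cA p.1.1) (cA p.1.1) i l - p.1.2 * (conj (dt d p.2 i) * dt d p.2 l)

noncomputable def Φm {n : ℕ} (d : Fin (n + 1) → ℂ) (p : ((Fin n → ℂ) × ℝ) × ℝ) :
    ((Fin n → ℂ) × ℝ) × ℝ :=
  ((fun m => fib (Xm d p) ((m : ℕ) + 1), (fib (Xm d p) 0).re), p.2)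

lemma contDiff_cA {n : ℕ} (i : Fin (n + 1)) :
    ContDiff ℝ 1 (fun p : ((Fin n → ℂ) × ℝ) × ℝ => cA p.1.1 i) := by
  refine Fin.cases ?_ (fun j => ?_) i
  · simp only [cA, Fin.cons_zero]; exact contDiff_const
  · simp only [cA, Fin.cons_succ]; fun_prop

lemma contDiff_conj {E : Type*} [NormedAddCommGroup E] [NormedSpace ℝ E] {f : E → ℂ}
    (hf : ContDiff ℝ 1 f) : ContDiff ℝ 1 (fun x => conj (f x)) :=
  Complex.conjCLE.contDiff.comp hf

lemma contDiff_Xm {n : ℕ} (d : Fin (n + 1) → ℂ) (i l : Fin (n + 1)) :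
    ContDiff ℝ 1 (fun p => Xm d p i l) := by
  have h2 : ∀ l : Fin (n + 1), ContDiff ℝ 1 (fun p : ((Fin n → ℂ) × ℝ) × ℝ => dt d p.2 l) := by
    intro l
    unfold dt
    refine ContDiff.mul (ContDiff.pow ?_ _) contDiff_const
    exact Complex.ofRealCLM.contDiff.comp contDiff_snd
  have h3 : ContDiff ℝ 1 (fun p : ((Fin n → ℂ) × ℝ) × ℝ => (p.1.2 : ℂ)) :=
    Complex.ofRealCLM.contDiff.comp (contDiff_snd.comp contDiff_fst)
  unfold Xm Wm
  exact (contDiff_const.mul ((contDiff_conj (contDiff_cA i)).mul (contDiff_cA l))).sub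
    (h3.mul ((contDiff_conj (h2 i)).mul (h2 l)))

lemma contDiff_fib {n : ℕ} (d : Fin (n + 1) → ℂ) (m : ℕ) :
    ContDiff ℝ 1 (fun p => fib (Xm d p) m) := by
  unfold fib
  refine ContDiff.sum fun i _ => ContDiff.sum fun l _ => ?_
  split_ifs
  · exact contDiff_Xm d i l
  · exact contDiff_const

lemma contDiff_Φm {n : ℕ} (d : Fin (n + 1) → ℂ) : ContDiff ℝ 1 (Φm d) := by
  unfold Φm
  refine ContDiff.prodMk (ContDiff.prodMk ?_ ?_) contDiff_snd
  · exact contDiff_pi.2 fun m => contDiff_fib d _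
  · exact Complex.reCLM.contDiff.comp (contDiff_fib d 0)

noncomputable def Xdot {n : ℕ} (d : Fin (n + 1) → ℂ) (A A' : Fin (n + 1) → ℂ) (s' : ℝ)
    (i l : Fin (n + 1)) : ℂ :=
  Wm A' A i l + Wm A A' i l - s' * (conj (d i) * d l)

lemma hasDerivAt_fib {n : ℕ} (d : Fin (n + 1) → ℂ) (a a' : Fin n → ℂ) (s s' t : ℝ) (m : ℕ) :
    HasDerivAt (fun ε : ℝ => fib (Xm d (((a, s), t) + ε • ((a', s'), (0 : ℝ)))) m)
      (fib (Xdot (dt d t) (cA a) (Fin.cons 0 a') s') m) 0 := by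
  unfold fib
  refine HasDerivAt.fun_sum fun i _ => HasDerivAt.fun_sum fun l _ => ?_
  split_ifs
  · have hid : HasDerivAt (fun ε : ℝ => (ε : ℂ)) 1 0 := Complex.ofRealCLM.hasDerivAt
    have hc : ∀ (ε : ℝ) (i : Fin (n + 1)), cA (a + ε • a') i =
        cA a i + ε * (Fin.cons 0 a' : Fin (n + 1) → ℂ) i := by
      intro ε i
      refine Fin.cases ?_ (fun j => ?_) i
      · simp [cA]
      · simp [cA]
    have he : (fun ε : ℝ => Xm d (((a, s), t) + ε • ((a', s'), (0 : ℝ))) i l) = fun ε : ℝ =>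
        ((n : ℂ) + 1 - (i : ℕ) - (l : ℕ)) *
          ((conj (cA a i) + ε * conj ((Fin.cons 0 a' : Fin (n + 1) → ℂ) i)) *
            (cA a l + ε * (Fin.cons 0 a' : Fin (n + 1) → ℂ) l))
          - (s + ε * s') * (conj (dt d t i) * dt d t l) := by
      funext ε
      simp only [Xm, Wm, Prod.smul_mk, Prod.mk_add_mk, hc, smul_eq_mul]
      simp
    rw [he]
    have g1 := (hid.mul_const (conj ((Fin.cons 0 a' : Fin (n + 1) → ℂ) i))).const_add (conj (cA a i))
    have g2 := (hid.mul_const ((Fin.cons 0 a' : Fin (n + 1) → ℂ) l)).const_add (cA a l)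
    have g3 := ((hid.mul_const (s' : ℂ)).const_add (s : ℂ)).mul_const (conj (dt d t i) * dt d t l)
    have g4 := ((g1.mul g2).const_mul ((n : ℂ) + 1 - (i : ℕ) - (l : ℕ))).sub g3
    refine g4.congr_deriv ?_
    simp only [Xdot, Wm]
    simp
    ring
  · exact hasDerivAt_const _ _

lemma Xs_add {n : ℕ} (X Y : Fin (n + 1) → Fin (n + 1) → ℂ) (z : ℂ) :
    Xs (fun i l => X i l + Y i l) z = Xs X z + Xs Y z := by
  simp only [Xs, add_mul, Finset.sum_add_distrib]

lemma Xs_sub_mul {n : ℕ} (X Y : Fin (n + 1) → Fin (n + 1) → ℂ) (c z : ℂ) :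
    Xs (fun i l => X i l - c * Y i l) z = Xs X z - c * Xs Y z := by
  simp only [Xs, sub_mul, Finset.sum_sub_distrib, Finset.mul_sum, mul_assoc]

lemma Xdot_herm {n : ℕ} (d A A' : Fin (n + 1) → ℂ) (s' : ℝ) (i l : Fin (n + 1)) :
    Xdot d A A' s' l i = conj (Xdot d A A' s' i l) := by
  simp only [Xdot, Wm]
  simp
  ring

lemma Xm_herm {n : ℕ} (d : Fin (n + 1) → ℂ) (p : ((Fin n → ℂ) × ℝ) × ℝ) (i l : Fin (n + 1)) :
    Xm d p l i = conj (Xm d p i l) := by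
  simp only [Xm, Wm]
  simp
  ring

lemma continuous_Qp {n : ℕ} : Continuous (fun p : (Fin (n + 1) → ℂ) × ℂ => Qp p.1 p.2) := by
  unfold Qp; fun_prop

lemma fib_eq_zero {n : ℕ} {X : Fin (n + 1) → Fin (n + 1) → ℂ} (h : ∀ z, Xs X z = 0) (m : ℕ) :
    fib X m = 0 := by
  have hp : (∑ i : Fin (n + 1), ∑ l : Fin (n + 1), Polynomial.C (X i l) *
      Polynomial.X ^ (n - (i : ℕ) + (l : ℕ))) = 0 := by
    refine Polynomial.funext fun z => ?_
    simp only [Polynomial.eval_finsetSum, Polynomial.eval_mul, Polynomial.eval_C,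
      Polynomial.eval_pow, Polynomial.eval_X, Polynomial.eval_zero]
    exact h z
  have h2 := congrArg (fun p => Polynomial.coeff p (n + m)) hp
  simp only [Polynomial.finsetSum_coeff, Polynomial.coeff_C_mul, Polynomial.coeff_X_pow,
    Polynomial.coeff_zero] at h2
  rw [← h2, fib]
  refine Finset.sum_congr rfl fun i _ => Finset.sum_congr rfl fun l _ => ?_
  have := i.2; have := l.2
  by_cases h3 : (l : ℕ) = i + m
  · rw [if_pos h3, if_pos (by omega), mul_one]
  · rw [if_neg h3, if_neg (by omega), mul_zero]

lemma Φm_zero {n : ℕ} {d : Fin (n + 1) → ℂ} {t₀ s : ℝ} {a : Fin n → ℂ}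
    (hW : ∀ z, Xs (Wm (cA a) (cA a)) z = s * (Qp (dt d t₀) z * qp (dt d t₀) z)) :
    Φm d ((a, s), t₀) = ((0, 0), t₀) := by
  have h : ∀ z, Xs (Xm d ((a, s), t₀)) z = 0 := by
    intro z
    unfold Xm
    rw [Xs_sub_mul, Xs_mul]
    have := hW z
    linear_combination this
  have h2 := fib_eq_zero h
  simp only [Φm, h2]
  rfl

lemma sol_good {n : ℕ} {a : Fin n → ℂ} {s t₀ : ℝ} (hs : s ≠ 0)
    (hQ : ∀ z, ‖z‖ ≤ 1 → Qp (cA a) z ≠ 0) :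
    ∀ᶠ p : ((Fin n → ℂ) × ℝ) × ℝ in 𝓝 ((a, s), t₀), p.1.2 ≠ 0 ∧
      ∀ z ∈ closedBall (0 : ℂ) 1, Qp (cA p.1.1) z ≠ 0 := by
  refine Filter.Eventually.and ?_ ?_
  · have : ContinuousAt (fun p : ((Fin n → ℂ) × ℝ) × ℝ => p.1.2) ((a, s), t₀) := by fun_prop
    exact this.eventually_ne hs
  · refine IsCompact.eventually_forall_of_forall_eventually (isCompact_closedBall _ _)
      (P := fun (p : ((Fin n → ℂ) × ℝ) × ℝ) z => Qp (cA p.1.1) z ≠ 0) ?_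
    intro z hz
    have hc : Continuous (fun q : (((Fin n → ℂ) × ℝ) × ℝ) × ℂ => Qp (cA q.1.1.1) q.2) := by
      refine continuous_Qp.comp (Continuous.prodMk ?_ continuous_snd)
      exact continuous_pi fun i => (contDiff_cA i).continuous.comp continuous_fst
    refine hc.continuousAt.eventually_ne ?_
    exact hQ z (by simpa using hz)

set_option maxHeartbeats 1000000 in
lemma sol_open {n : ℕ} {d : Fin (n + 1) → ℂ} {t₀ : ℝ} (hd0 : d 0 = 1)
    (hD : ∀ z, ‖z‖ ≤ 1 → Qp (dt d t₀) z ≠ 0) {A : Fin (n + 1) → ℂ} {s : ℝ}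
    (hsol : Sol (dt d t₀) A s) : ∀ᶠ t in 𝓝 t₀, ∃ A s, Sol (dt d t) A s := by
  obtain ⟨hA0, hs, hQ, hW⟩ := hsol
  set a : Fin n → ℂ := Fin.tail A with ha
  have hAa : cA a = A := by
    rw [cA, ha, ← hA0]; exact Fin.cons_self_tail A
  set p₀ : ((Fin n → ℂ) × ℝ) × ℝ := ((a, s), t₀) with hp₀
  have hstrict : HasStrictFDerivAt (Φm d) (fderiv ℝ (Φm d) p₀) p₀ :=
    (contDiff_Φm d).contDiffAt.hasStrictFDerivAt one_ne_zero
  have hinj : Function.Injective (fderiv ℝ (Φm d) p₀ : ((Fin n → ℂ) × ℝ) × ℝ →ₗ[ℝ]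
      ((Fin n → ℂ) × ℝ) × ℝ) := by
    rw [injective_iff_map_eq_zero]
    rintro ⟨⟨a', s'⟩, t'⟩ hy
    have hline := hstrict.hasFDerivAt.hasLineDerivAt ((a', s'), t')
    have hy' : fderiv ℝ (Φm d) p₀ ((a', s'), t') = 0 := hy
    rw [hy'] at hline
    have hline' : HasDerivAt (fun ε : ℝ => Φm d (p₀ + ε • ((a', s'), t'))) 0 0 := hline
    have ht' : t' = 0 := by
      have h1 := (ContinuousLinearMap.snd ℝ ((Fin n → ℂ) × ℝ) ℝ).hasFDerivAt.comp_hasDerivAt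
        (0 : ℝ) hline'
      have h2 : HasDerivAt (fun ε : ℝ => t₀ + ε * t') t' 0 := by
        simpa using ((hasDerivAt_id (0 : ℝ)).mul_const t').const_add t₀
      have h3 := h1.unique (h2 : HasDerivAt (fun ε : ℝ => t₀ + ε * t') t' 0)
      simpa using h3.symm
    subst ht'
    have hm : ∀ m : Fin n, fib (Xdot (dt d t₀) (cA a) (Fin.cons 0 a') s') ((m : ℕ) + 1) = 0 := by
      intro m
      have h1 := (((ContinuousLinearMap.proj (R := ℝ) (φ := fun _ : Fin n => ℂ) m).comp
        ((ContinuousLinearMap.fst ℝ (Fin n → ℂ) ℝ).comp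
        (ContinuousLinearMap.fst ℝ ((Fin n → ℂ) × ℝ) ℝ)))).hasFDerivAt.comp_hasDerivAt
        (0 : ℝ) hline'
      have h3 := h1.unique (hasDerivAt_fib d a a' s s' t₀ ((m : ℕ) + 1))
      simpa using h3.symm
    have h0 : (fib (Xdot (dt d t₀) (cA a) (Fin.cons 0 a') s') 0).re = 0 := by
      have h1 := (((ContinuousLinearMap.snd ℝ (Fin n → ℂ) ℝ).comp
        (ContinuousLinearMap.fst ℝ ((Fin n → ℂ) × ℝ) ℝ))).hasFDerivAt.comp_hasDerivAt
        (0 : ℝ) hline'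
      have h3 := h1.unique (Complex.reCLM.hasFDerivAt.comp_hasDerivAt (0 : ℝ)
        (hasDerivAt_fib d a a' s s' t₀ 0))
      simpa using h3.symm
    have hX : ∀ z, Xs (Xdot (dt d t₀) (cA a) (Fin.cons 0 a') s') z = 0 := by
      intro z
      refine Xs_eq_zero (fun i l => Xdot_herm _ _ _ _ _ _) h0 ?_ z
      intro m h1 h2
      have := hm ⟨m - 1, by omega⟩
      simpa [Nat.sub_add_cancel h1] using this
    have hker := kernel_zero (A := A) (A' := Fin.cons 0 a') (d := dt d t₀) (s := s) (s' := s')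
      hA0 hs hQ (by simp [dt, hd0]) hD hW (by simp) (by
        intro z
        have := hX z
        unfold Xdot at this
        rw [Xs_sub_mul, Xs_add, Xs_mul, hAa] at this
        linear_combination this)
    obtain ⟨k1, k2⟩ := hker
    have ha' : a' = 0 := by
      ext j
      have := congrFun k1 j.succ
      simpa using this
    rw [ha', k2]; rfl
  have hsurj : (fderiv ℝ (Φm d) p₀).range = ⊤ := by
    rw [LinearMap.range_eq_top]
    exact LinearMap.injective_iff_surjective.1 hinj
  have hmap := hstrict.map_nhds_eq_of_surj hsurj
  have hΦ0 : Φm d p₀ = ((0, 0), t₀) := Φm_zero (by rw [hAa]; exact hW)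
  have hgood := sol_good (t₀ := t₀) (a := a) hs (by rw [hAa]; exact hQ)
  have himg : Φm d '' {p | p.1.2 ≠ 0 ∧ ∀ z ∈ closedBall (0 : ℂ) 1, Qp (cA p.1.1) z ≠ 0} ∈
      𝓝 (((0, 0), t₀) : ((Fin n → ℂ) × ℝ) × ℝ) := by
    rw [← hΦ0, ← hmap]
    exact Filter.image_mem_map hgood
  have hcont : ContinuousAt (fun t : ℝ => (((0, 0), t) : ((Fin n → ℂ) × ℝ) × ℝ)) t₀ := by fun_prop
  filter_upwards [hcont.preimage_mem_nhds himg] with t ht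
  obtain ⟨p, ⟨hp1, hp2⟩, hp3⟩ := ht
  have e1 : p.2 = t := congrArg Prod.snd hp3
  have e2 : (fib (Xm d p) 0).re = 0 := congrArg (fun q => q.1.2) hp3
  have e3 : ∀ m : Fin n, fib (Xm d p) ((m : ℕ) + 1) = 0 := fun m =>
    congrFun (congrArg (fun q => q.1.1) hp3) m
  refine ⟨cA p.1.1, p.1.2, by simp [cA], hp1, fun z hz => hp2 z (by simpa using hz), ?_⟩
  intro z
  have := Xs_eq_zero (fun i l => Xm_herm d p i l) e2 (fun m h1 h2 => by
      have := e3 ⟨m - 1, by omega⟩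
      simpa [Nat.sub_add_cancel h1] using this) z
  unfold Xm at this
  rw [Xs_sub_mul, Xs_mul, e1] at this
  linear_combination this

/-! Part 7 -/
open scoped Topology ComplexConjugate

lemma Qp_dt {n : ℕ} (d : Fin (n + 1) → ℂ) (t : ℝ) (z : ℂ) : Qp (dt d t) z = Qp d (t * z) := by
  unfold Qp dt
  refine Finset.sum_congr rfl fun l _ => ?_
  rw [mul_pow]; ring

lemma Qp_dt_ne {n : ℕ} {d : Fin (n + 1) → ℂ} (hD : ∀ z, ‖z‖ ≤ 1 → Qp d z ≠ 0) {t : ℝ}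
    (ht : t ∈ Set.Icc (0 : ℝ) 1) : ∀ z, ‖z‖ ≤ 1 → Qp (dt d t) z ≠ 0 := by
  intro z hz
  rw [Qp_dt]
  apply hD
  rw [norm_mul, Complex.norm_real, Real.norm_of_nonneg ht.1]
  nlinarith [ht.2, ht.1, norm_nonneg z]

lemma qp_ne_circle {n : ℕ} {d : Fin (n + 1) → ℂ} {z : ℂ} (hz : ‖z‖ = 1) (h : Qp d z ≠ 0) :
    qp d z ≠ 0 := by
  rw [← norm_ne_zero_iff, norm_qp_circle d hz]; simpa using h

lemma sol_limit {n : ℕ} {d : Fin (n + 1) → ℂ} (hD : ∀ z, ‖z‖ ≤ 1 → Qp d z ≠ 0)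
    {A : Fin (n + 1) → ℂ} {s : ℝ} (h0 : A 0 = 1) (hQ : ∀ z, ‖z‖ < 1 → Qp A z ≠ 0)
    (hW : ∀ z, Xs (Wm A A) z = s * (Qp d z * qp d z)) : Sol d A s := by
  have hs : s ≠ 0 := by
    rintro rfl
    have hA : A = 0 := by
      refine qp_zero (z₀ := (1 / 2 : ℂ)) ?_
      have hcst : ∀ z ∈ ball (0 : ℂ) 1, Bq A z = Bq A 0 := by
        intro z hz
        refine isOpen_ball.is_const_of_deriv_eq_zero (convex_ball (0 : ℂ) 1).isPreconnected
          (fun w hw => (hasDerivAt_Bq (hQ w (by simpa using hw))).differentiableAt.differentiableWithinAt) ?_ hz (by simp)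
        intro w hw
        rw [(hasDerivAt_Bq (hQ w (by simpa using hw))).deriv, hW]
        simp
      have : {z : ℂ | z ≠ 0} ∩ ball 0 1 ∈ 𝓝 (1 / 2 : ℂ) := by
        refine (isOpen_ne.inter isOpen_ball).mem_nhds ⟨by simp, by simp; norm_num⟩
      filter_upwards [this] with z hz
      have h1 := hcst z hz.2
      rw [Bq, Bq, zero_mul, zero_div, div_eq_zero_iff] at h1
      rcases h1 with h1 | h1
      · exact (mul_eq_zero.1 h1).resolve_left hz.1
      · exact absurd h1 (hQ z (by simpa using hz.2))
    rw [hA] at h0; simp at h0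
  refine ⟨h0, hs, ?_, hW⟩
  intro z hz hz0
  rcases hz.lt_or_eq with h | h
  · exact hQ z h hz0
  · have h1 := hW z
    have h2 : qp A z = 0 := by rw [← norm_eq_zero, norm_qp_circle A h, hz0, norm_zero]
    rw [Xs_Wm, hz0, h2] at h1
    have h3 : (s : ℂ) ≠ 0 := by exact_mod_cast hs
    simp [h3, hD z hz, qp_ne_circle h (hD z hz)] at h1

lemma heins {n : ℕ} {d : Fin (n + 1) → ℂ} (hd0 : d 0 = 1)
    (hD : ∀ z, ‖z‖ ≤ 1 → Qp d z ≠ 0) : ∃ A s, Sol d A s := by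
  set S : Set ℝ := {t | ∃ A s, Sol (dt d t) A s} with hS
  have hone : dt d 1 = d := by ext l; simp [dt]
  suffices h : (1 : ℝ) ∈ S by
    obtain ⟨A, s, h⟩ := h
    rw [hone] at h; exact ⟨A, s, h⟩
  refine IsClosed.mem_of_ge_of_forall_exists_gt (a := (0 : ℝ)) (b := 1) (s := S) ?_ ?_ zero_le_one ?_
  · apply IsSeqClosed.isClosed
    intro u t hu hut
    have htI : t ∈ Set.Icc (0 : ℝ) 1 := isClosed_Icc.mem_of_tendsto hut (Eventually.of_forall fun k => (hu k).2)
    refine ⟨?_, htI⟩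
    choose A s hsol using fun k => (hu k).1
    have hbd : ∀ k, A k ∈ closedBall (0 : Fin (n + 1) → ℂ) (1 * (n.choose (n / 2))) := by
      intro k
      rw [mem_closedBall_zero_iff, pi_norm_le_iff_of_nonneg (by positivity)]
      exact coeff_bound (hsol k).1 (fun z hz => (hsol k).2.2.1 z hz.le)
    obtain ⟨A0, -, φ, hφ, hA⟩ := (isCompact_closedBall (0 : Fin (n + 1) → ℂ) (1 * (n.choose (n / 2)))).tendsto_subseq hbd
    have hut' := hut.comp hφ.tendsto_atTop
    have cW : ∀ z, Continuous (fun A : Fin (n + 1) → ℂ => Xs (Wm A A) z) := by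
      intro z; unfold Xs Wm; fun_prop
    have cP : ∀ z, Continuous (fun t : ℝ => Qp (dt d t) z * qp (dt d t) z) := by
      intro z; unfold Qp qp dt; fun_prop
    have cQ : ∀ z, Continuous (fun A : Fin (n + 1) → ℂ => Qp A z) := by
      intro z; unfold Qp; fun_prop
    have h0 : A0 0 = 1 := by
      have h1 : Tendsto (fun k => (A ∘ φ) k 0) atTop (𝓝 (A0 0)) :=
        ((continuous_apply 0).tendsto A0).comp hA
      refine tendsto_nhds_unique h1 ?_
      have : (fun k => (A ∘ φ) k 0) = fun _ => 1 := by
        funext k; exact (hsol (φ k)).1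
      rw [this]; exact tendsto_const_nhds
    have hQ0 : ∀ z, ‖z‖ < 1 → Qp A0 z ≠ 0 := by
      intro z hz
      have h1 : Tendsto (fun k => ‖Qp ((A ∘ φ) k) z‖) atTop (𝓝 ‖Qp A0 z‖) :=
        (((cQ z).tendsto A0).comp hA).norm
      have h2 : (1 - ‖z‖) ^ n ≤ ‖Qp A0 z‖ := by
        refine ge_of_tendsto h1 (Eventually.of_forall fun k => ?_)
        exact Qp_lower (hsol (φ k)).1 (fun z hz => (hsol (φ k)).2.2.1 z hz.le) hz
      have h3 : 0 < (1 - ‖z‖) ^ n := pow_pos (by linarith) n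
      exact norm_pos_iff.1 (h3.trans_le h2)
    have hPne : ∀ t ∈ Set.Icc (0 : ℝ) 1, Qp (dt d t) 1 * qp (dt d t) 1 ≠ 0 := by
      intro t ht
      have h1 := Qp_dt_ne hD ht 1 (by simp)
      exact mul_ne_zero h1 (qp_ne_circle (by simp) h1)
    set c : ℂ := Xs (Wm A0 A0) 1 / (Qp (dt d t) 1 * qp (dt d t) 1) with hc
    have hsC : Tendsto (fun k => ((s (φ k) : ℝ) : ℂ)) atTop (𝓝 c) := by
      have h1 : Tendsto (fun k => Xs (Wm ((A ∘ φ) k) ((A ∘ φ) k)) 1 /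
          (Qp (dt d ((u ∘ φ) k)) 1 * qp (dt d ((u ∘ φ) k)) 1)) atTop (𝓝 c) :=
        (((cW 1).tendsto A0).comp hA).div (((cP 1).tendsto t).comp hut') (hPne t htI)
      refine h1.congr fun k => ?_
      simp only [Function.comp]
      rw [(hsol (φ k)).2.2.2 1, mul_div_assoc, div_self (hPne _ (hu (φ k)).2), mul_one]
    have hsR : Tendsto (fun k => s (φ k)) atTop (𝓝 c.re) := by
      have := (Complex.continuous_re.tendsto c).comp hsC
      simpa [Function.comp_def] using this
    refine ⟨A0, c.re, sol_limit (Qp_dt_ne hD htI) h0 hQ0 fun z => ?_⟩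
    have h1 : Tendsto (fun k => Xs (Wm ((A ∘ φ) k) ((A ∘ φ) k)) z) atTop (𝓝 (Xs (Wm A0 A0) z)) :=
      ((cW z).tendsto A0).comp hA
    have h2 : Tendsto (fun k => ((s (φ k) : ℝ) : ℂ) *
        (Qp (dt d ((u ∘ φ) k)) z * qp (dt d ((u ∘ φ) k)) z)) atTop
        (𝓝 ((c.re : ℂ) * (Qp (dt d t) z * qp (dt d t) z))) :=
      ((Complex.continuous_ofReal.tendsto _).comp hsR).mul (((cP z).tendsto t).comp hut')
    refine tendsto_nhds_unique h1 (h2.congr fun k => ?_)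
    exact ((hsol (φ k)).2.2.2 z).symm
  · refine ⟨Fin.cons 1 0, n + 1, by simp, by positivity, ?_, ?_⟩
    · intro z _
      rw [Qp, Fin.sum_univ_succ]; simp
    · have hz0 : dt d 0 = Fin.cons 1 0 := by
        ext l
        refine Fin.cases ?_ (fun j => ?_) l
        · simp [dt, hd0]
        · simp [dt]
      intro z
      rw [hz0]
      simp only [Xs, Wm, Qp, qp, Fin.sum_univ_succ]
      simp
  · rintro x ⟨⟨A, s, hsol⟩, hx⟩
    have h1 := sol_open hd0 (Qp_dt_ne hD ⟨hx.1, hx.2.le⟩) hsol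
    have h2 : ∀ᶠ t in 𝓝[>] x, t ∈ S := h1.filter_mono nhdsWithin_le_nhds
    have h3 : ∀ᶠ t in 𝓝[>] x, t ∈ Set.Ioc x 1 := Ioc_mem_nhdsGT hx.2
    obtain ⟨t, h4, h5⟩ := (h2.and h3).exists
    exact ⟨t, h4, h5⟩

/-! Part 8 -/
open scoped Topology ComplexConjugate

lemma quotient_lemma {U : Set ℂ} (hU : IsOpen U) {P S : ℂ → ℂ}
    (hP : ∀ z ∈ U, AnalyticAt ℂ P z) (hS : ∀ z ∈ U, AnalyticAt ℂ S z)
    (hS0 : ∀ z ∈ U, analyticOrderAt S z ≠ ⊤)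
    (hle : ∀ z ∈ U, analyticOrderAt S z ≤ analyticOrderAt P z) :
    ∃ θ : ℂ → ℂ, (∀ z ∈ U, AnalyticAt ℂ θ z) ∧ ∀ z ∈ U, P z = θ z * S z := by
  have loc : ∀ z₀ : U, ∃ t : ℂ → ℂ, AnalyticAt ℂ t z₀ ∧ (∀ᶠ z in 𝓝 (z₀ : ℂ), P z = t z * S z) ∧
      ∀ᶠ z in 𝓝[≠] (z₀ : ℂ), S z ≠ 0 := by
    rintro ⟨z₀, hz₀⟩
    obtain ⟨k, hk⟩ := ENat.ne_top_iff_exists.1 (hS0 z₀ hz₀)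
    obtain ⟨u, hu, hu0, hSu⟩ := ((hS z₀ hz₀).analyticOrderAt_eq_natCast).1 hk.symm
    have h1 := hle z₀ hz₀
    rw [← hk] at h1
    obtain ⟨r, hr, hPr⟩ := (natCast_le_analyticOrderAt (hP z₀ hz₀)).1 h1
    refine ⟨fun z => r z / u z, hr.div hu hu0, ?_, ?_⟩
    · filter_upwards [hSu, hPr, hu.continuousAt.eventually_ne hu0] with z h1 h2 h3
      rw [h1, h2, smul_eq_mul, smul_eq_mul]; field_simp
    · filter_upwards [hSu.filter_mono nhdsWithin_le_nhds,
        (hu.continuousAt.eventually_ne hu0).filter_mono nhdsWithin_le_nhds,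
        self_mem_nhdsWithin] with z h1 h2 h3
      rw [h1, smul_eq_mul]
      exact mul_ne_zero (pow_ne_zero _ (sub_ne_zero.2 h3)) h2
  choose t ht1 ht2 ht3 using loc
  classical
  set θ : ℂ → ℂ := fun z => if h : z ∈ U then t ⟨z, h⟩ z else 0 with hθ
  have hθe : ∀ z (hz : z ∈ U), θ z = t ⟨z, hz⟩ z := fun z hz => by simp [hθ, hz]
  have hPe : ∀ z ∈ U, P z = θ z * S z := by
    intro z hz
    rw [hθe z hz]
    exact (ht2 ⟨z, hz⟩).self_of_nhds
  refine ⟨θ, fun z₀ hz₀ => ?_, hPe⟩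
  refine (ht1 ⟨z₀, hz₀⟩).congr ?_
  have h1 := eventually_nhdsWithin_iff.1 (ht3 ⟨z₀, hz₀⟩)
  filter_upwards [h1, ht2 ⟨z₀, hz₀⟩, hU.mem_nhds hz₀] with z h2 h3 h4
  by_cases hz : z = z₀
  · subst hz; rw [hθe z hz₀]
  · have h5 := h2 hz
    rw [hPe z h4] at h3
    exact (mul_right_cancel₀ h5 h3).symm

lemma order_ne_top_of_ball {f : ℂ → ℂ} (hf : ∀ z ∈ ball (0 : ℂ) 1, AnalyticAt ℂ f z)
    {w : ℂ} (hw : w ∈ ball (0 : ℂ) 1) (hfw : f w ≠ 0) :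
    ∀ z ∈ ball (0 : ℂ) 1, analyticOrderAt f z ≠ ⊤ := by
  intro z hz h
  rw [analyticOrderAt_eq_top] at h
  have h1 : AnalyticOnNhd ℂ f (ball 0 1) := hf
  exact hfw (h1.eqOn_zero_of_preconnected_of_eventuallyEq_zero
    (convex_ball (0 : ℂ) 1).isPreconnected hz h hw)

lemma factor_aux {r : ℝ} (hr : r < 1) (Z : Finset ℂ) : ∀ f : ℂ → ℂ,
    (∀ z ∈ ball (0 : ℂ) 1, AnalyticAt ℂ f z) → (∀ z ∈ ball (0 : ℂ) 1, analyticOrderAt f z ≠ ⊤) →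
    (∀ z ∈ closedBall (0 : ℂ) r, f z = 0 → z ∈ Z) →
    ∃ (c : Multiset ℂ) (u : ℂ → ℂ), (∀ x ∈ c, x ∈ closedBall (0 : ℂ) r ∧ f x = 0) ∧
      (∀ z ∈ ball (0 : ℂ) 1, AnalyticAt ℂ u z) ∧ (∀ z ∈ closedBall (0 : ℂ) r, u z ≠ 0) ∧
      ∀ z ∈ ball (0 : ℂ) 1, f z = (c.map (fun x => z - x)).prod * u z := by
  have hsub : closedBall (0 : ℂ) r ⊆ ball 0 1 := closedBall_subset_ball hr
  induction Z using Finset.induction_on with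
  | empty =>
    intro f h1 h2 h3
    refine ⟨0, f, by simp, h1, fun z hz h => by simpa using h3 z hz h, by simp⟩
  | insert a Z ha ih =>
    intro f h1 h2 h3
    by_cases hcase : a ∈ closedBall (0 : ℂ) r ∧ f a = 0
    swap
    · refine ih f h1 h2 fun z hz h => ?_
      rcases Finset.mem_insert.1 (h3 z hz h) with rfl | h'
      · exact absurd ⟨hz, h⟩ hcase
      · exact h'
    obtain ⟨ha1, ha2⟩ := hcase
    obtain ⟨k, hk⟩ := ENat.ne_top_iff_exists.1 (h2 a (hsub ha1))
    have haS : ∀ z, AnalyticAt ℂ (fun z => (z - a) ^ k) z := fun z => by fun_prop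
    have hordne : ∀ z, z ≠ a → analyticOrderAt (fun z => (z - a) ^ k) z = 0 := by
      intro z hz
      rw [(haS z).analyticOrderAt_eq_zero]
      exact pow_ne_zero _ (sub_ne_zero.2 hz)
    have horda : analyticOrderAt (fun z => (z - a) ^ k) a = k := by
      rw [(haS a).analyticOrderAt_eq_natCast]
      exact ⟨fun _ => 1, analyticAt_const, one_ne_zero, by simp⟩
    obtain ⟨θ, hθ1, hθ2⟩ := quotient_lemma isOpen_ball (P := f) (S := fun z => (z - a) ^ k) h1
      (fun z _ => haS z) (by
        intro z hz
        by_cases h : z = a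
        · subst h; rw [horda]; simp
        · rw [hordne z h]; simp) (by
        intro z hz
        by_cases h : z = a
        · subst h; rw [horda, hk]
        · rw [hordne z h]; simp)
    have hev : ∀ z ∈ ball (0 : ℂ) 1, f =ᶠ[𝓝 z] θ * (fun z => (z - a) ^ k) := by
      intro z hz
      filter_upwards [isOpen_ball.mem_nhds hz] with w hw
      exact hθ2 w hw
    have hθord : ∀ z ∈ ball (0 : ℂ) 1, analyticOrderAt f z =
        analyticOrderAt θ z + analyticOrderAt (fun z => (z - a) ^ k) z := by
      intro z hz
      rw [analyticOrderAt_congr (hev z hz), analyticOrderAt_mul (hθ1 z hz) (haS z)]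
    have hθa : θ a ≠ 0 := by
      have h4 := hθord a (hsub ha1)
      rw [horda, ← hk] at h4
      have h5 : analyticOrderAt θ a = 0 := by
        have : (0 : ℕ∞) + k = analyticOrderAt θ a + k := by simpa using h4
        generalize analyticOrderAt θ a = t at this ⊢
        induction t using ENat.recTopCoe with
        | top => simp at this
        | coe t => norm_cast at this ⊢; omega
      exact ((hθ1 a (hsub ha1)).analyticOrderAt_eq_zero).1 h5
    obtain ⟨c, u, c1, c2, c3, c4⟩ := ih θ hθ1 (by
        intro z hz h
        have := hθord z hz
        rw [h, top_add] at this
        exact h2 z hz this) (by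
        intro z hz h
        have h5 : f z = 0 := by rw [hθ2 z (hsub hz), h, zero_mul]
        rcases Finset.mem_insert.1 (h3 z hz h5) with rfl | h'
        · exact absurd h hθa
        · exact h')
    refine ⟨Multiset.replicate k a + c, u, ?_, c2, c3, ?_⟩
    · intro x hx
      rcases Multiset.mem_add.1 hx with h | h
      · rw [Multiset.eq_of_mem_replicate h]; exact ⟨ha1, ha2⟩
      · exact ⟨(c1 x h).1, by rw [hθ2 x (hsub (c1 x h).1), (c1 x h).2, zero_mul]⟩
    · intro z hz
      rw [hθ2 z hz, c4 z hz]
      simp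
      ring

lemma finite_zeros {f : ℂ → ℂ} (hf : ∀ z ∈ ball (0 : ℂ) 1, AnalyticAt ℂ f z)
    (ho : ∀ z ∈ ball (0 : ℂ) 1, analyticOrderAt f z ≠ ⊤) {r : ℝ} (hr : r < 1) :
    {z ∈ closedBall (0 : ℂ) r | f z = 0}.Finite := by
  by_contra hinf
  have hinf' : {z ∈ closedBall (0 : ℂ) r | f z = 0}.Infinite := hinf
  obtain ⟨x, hx, hacc⟩ := hinf'.exists_accPt_of_subset_isCompact (isCompact_closedBall (0 : ℂ) r)
    (fun z hz => hz.1)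
  have hxb := closedBall_subset_ball hr hx
  rcases (hf x hxb).eventually_eq_zero_or_eventually_ne_zero with h | h
  · exact ho x hxb (analyticOrderAt_eq_top.2 h)
  · have h2 := accPt_iff_frequently_nhdsNE.1 hacc
    obtain ⟨y, hy1, hy2⟩ := (h2.and_eventually h).exists
    exact hy2 hy1.2

lemma heins_poly (M : Polynomial ℂ) (hM : M.Monic) (hroot : ∀ z, 1 ≤ ‖z‖ → M.eval z ≠ 0) :
    ∃ B ψ : ℂ → ℂ, (∀ z, ‖z‖ ≤ 1 → AnalyticAt ℂ B z ∧ AnalyticAt ℂ ψ z ∧ ψ z ≠ 0 ∧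
      deriv B z = ψ z * M.eval z ∧ ‖B z‖ ≤ ‖z‖) ∧ ∀ z, ‖z‖ = 1 → ‖B z‖ = 1 := by
  set n := M.natDegree with hn
  set d : Fin (n + 1) → ℂ := fun i => conj (M.coeff (n - (i : ℕ))) with hd
  have hq : ∀ z, qp d z = M.eval z := by
    intro z
    rw [Polynomial.eval_eq_sum_range, qp, ← Finset.sum_range_reflect,
      Finset.sum_range (fun j => M.coeff (M.natDegree + 1 - 1 - j) * z ^ (M.natDegree + 1 - 1 - j))]
    refine Finset.sum_congr rfl fun i _ => ?_
    simp [hd, hn]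
  have hd0 : d 0 = 1 := by
    simp only [hd, Fin.coe_ofNat_eq_mod, Nat.zero_mod, tsub_zero]
    rw [hn, hM.coeff_natDegree, map_one]
  have hD : ∀ z, ‖z‖ ≤ 1 → Qp d z ≠ 0 := by
    intro z hz h
    by_cases hz0 : z = 0
    · rw [hz0, Qp_at_zero, hd0] at h; exact one_ne_zero h
    · have h1 := qp_inv d (z := (conj z)⁻¹) (by simpa using hz0)
      rw [map_inv₀, Complex.conj_conj, inv_inv, h, map_zero, mul_zero, hq] at h1
      refine hroot _ ?_ h1
      rw [norm_inv, RCLike.norm_conj]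
      exact (one_le_inv₀ (norm_pos_iff.2 hz0)).2 hz
  obtain ⟨A, s, hA0, hs, hQ, hW⟩ := heins hd0 hD
  have hsC : (s : ℂ) ≠ 0 := by exact_mod_cast hs
  refine ⟨Bq A, fun z => s * Qp d z / Qp A z ^ 2, fun z hz => ⟨analyticAt_Bq (hQ z hz), ?_, ?_, ?_,
    Bq_norm_le hQ hz⟩, fun z hz => Bq_norm_circle hQ hz⟩
  · exact (analyticAt_const.mul (analyticAt_Qp d z)).div ((analyticAt_Qp A z).pow 2)
      (pow_ne_zero 2 (hQ z hz))
  · exact div_ne_zero (mul_ne_zero hsC (hD z hz)) (pow_ne_zero 2 (hQ z hz))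
  · rw [(hasDerivAt_Bq (hQ z hz)).deriv, hW, hq]; ring

/-- the finite Blaschke product on a smaller disc -/
lemma heins_disc {p : ℂ → ℂ} (hp : ∀ z ∈ ball (0 : ℂ) 1, AnalyticAt ℂ p z)
    (ho : ∀ z ∈ ball (0 : ℂ) 1, analyticOrderAt p z ≠ ⊤) {r : ℝ} (hr0 : 0 < r) (hr : r < 1)
    (hsph : ∀ z, ‖z‖ = r → p z ≠ 0) :
    ∃ F ψ : ℂ → ℂ, (∀ z, ‖z‖ ≤ r → AnalyticAt ℂ F z ∧ AnalyticAt ℂ ψ z ∧ ψ z ≠ 0 ∧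
      deriv F z = ψ z * p z ∧ ‖F z‖ ≤ ‖z‖ / r) ∧ ∀ z, ‖z‖ = r → ‖F z‖ = 1 := by
  obtain ⟨c, u, c1, c2, c3, c4⟩ := factor_aux hr (finite_zeros hp ho hr).toFinset p hp ho
    (fun z hz h => by simpa using ⟨by simpa using hz, h⟩)
  have hrC : (r : ℂ) ≠ 0 := by exact_mod_cast hr0.ne'
  set M : Polynomial ℂ := ((c.map (fun x => x / (r : ℂ))).map
    (fun a => Polynomial.X - Polynomial.C a)).prod with hM
  have hMm : M.Monic := Polynomial.monic_multisetProd_X_sub_C _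
  have hMe : ∀ z : ℂ, M.eval z = (c.map (fun x => z - x / r)).prod := by
    intro z
    rw [hM, Polynomial.eval_multiset_prod]
    simp [Multiset.map_map, Function.comp_def]
  obtain ⟨B, ψ, h1, h2⟩ := heins_poly M hMm (by
    intro z hz h
    rw [hMe, Multiset.prod_eq_zero_iff, Multiset.mem_map] at h
    obtain ⟨x, hx, h⟩ := h
    obtain ⟨hx1, hx2⟩ := c1 x hx
    have hxr : ‖x‖ < r := by
      rcases (mem_closedBall_zero_iff.1 hx1).lt_or_eq with h' | h'
      · exact h'
      · exact absurd hx2 (hsph x h')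
    rw [sub_eq_zero] at h
    rw [h, norm_div, Complex.norm_real, Real.norm_of_nonneg hr0.le, le_div_iff₀ hr0] at hz
    linarith)
  have hnorm : ∀ z : ℂ, ‖z / r‖ = ‖z‖ / r := fun z => by
    rw [norm_div, Complex.norm_real, Real.norm_of_nonneg hr0.le]
  have han : ∀ z : ℂ, AnalyticAt ℂ (fun z : ℂ => z / r) z := fun z => by
    exact analyticAt_id.div analyticAt_const hrC
  have hprod : ∀ z : ℂ, (c.map (fun x => z / r - x / r)).prod * (r : ℂ) ^ c.card =
      (c.map (fun x => z - x)).prod := by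
    intro z
    have e : (r : ℂ) ^ c.card = (c.map (fun _ => (r : ℂ))).prod := by simp
    rw [e, ← Multiset.prod_map_mul]
    congr 1
    refine Multiset.map_congr rfl fun x _ => ?_
    field_simp
  refine ⟨fun z => B (z / r), fun z => ψ (z / r) / (r * r ^ c.card * u z), fun z hz => ?_,
    fun z hz => h2 _ (by rw [hnorm, hz, div_self hr0.ne'])⟩
  have hz' : ‖z / r‖ ≤ 1 := by rw [hnorm, div_le_one hr0]; exact hz
  obtain ⟨a1, a2, a3, a4, a5⟩ := h1 _ hz'
  have hzb : z ∈ ball (0 : ℂ) 1 := by simpa using hz.trans_lt hr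
  have huz : u z ≠ 0 := c3 z (by simpa using hz)
  have hden : (r : ℂ) * r ^ c.card * u z ≠ 0 :=
    mul_ne_zero (mul_ne_zero hrC (pow_ne_zero _ hrC)) huz
  refine ⟨?_, ?_, div_ne_zero a3 hden, ?_, ?_⟩
  · exact AnalyticAt.comp' (g := B) (f := fun z : ℂ => z / r) a1 (han z)
  · exact (AnalyticAt.comp' (g := ψ) (f := fun z : ℂ => z / r) a2 (han z)).div
      (analyticAt_const.mul (c2 z hzb)) hden
  · have hd : HasDerivAt (fun z => B (z / r)) (deriv B (z / r) * (1 / r)) z :=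
      HasDerivAt.comp z (h₂ := B) (h := fun z : ℂ => z / r) a1.differentiableAt.hasDerivAt
        ((hasDerivAt_id z).div_const (r : ℂ))
    rw [hd.deriv, a4, c4 z hzb, ← hprod, hMe]
    field_simp
  · rw [← hnorm]; exact a5

/-! Part 9 -/
open scoped Topology ComplexConjugate

/-- Subsolution densities relative to `p`. -/
def SubDens (p : ℂ → ℂ) (κ : ℂ → ℝ) : Prop :=
  ContinuousOn κ (ball (0 : ℂ) 1) ∧ ∀ z₀ ∈ ball (0 : ℂ) 1, κ z₀ ≠ 0 →
    ∃ β θ f : ℂ → ℂ, AnalyticAt ℂ β z₀ ∧ AnalyticAt ℂ θ z₀ ∧ AnalyticAt ℂ f z₀ ∧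
      (∀ᶠ z in 𝓝 z₀, deriv f z = θ z * p z) ∧ ‖f z₀‖ < 1 ∧ ‖β z₀‖ ≤ 1 ∧
      ∀ᶠ z in 𝓝 z₀, κ z = ‖β z‖ * ‖θ z‖ / (1 - ‖f z‖ ^ 2)

lemma comparison {p : ℂ → ℂ} 
    (ho : ∀ z ∈ ball (0 : ℂ) 1, analyticOrderAt p z ≠ ⊤) {r : ℝ} (hr0 : 0 < r) (hr : r < 1)
    {F ψ : ℂ → ℂ} (hF : ∀ z, ‖z‖ ≤ r → AnalyticAt ℂ F z ∧ AnalyticAt ℂ ψ z ∧ ψ z ≠ 0 ∧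
      deriv F z = ψ z * p z ∧ ‖F z‖ ≤ ‖z‖ / r) (hF1 : ∀ z, ‖z‖ = r → ‖F z‖ = 1)
    {κ : ℂ → ℝ} (hκ : SubDens p κ) : ∀ z, ‖z‖ ≤ r → κ z * (1 - ‖F z‖ ^ 2) ≤ ‖ψ z‖ := by
  set V : ℂ → ℝ := fun z => κ z * (1 - ‖F z‖ ^ 2) / ‖ψ z‖ with hV
  have hcont : ContinuousOn V (closedBall 0 r) := by
    intro z hz
    have hz' : ‖z‖ ≤ r := by simpa using hz
    obtain ⟨h1, h2, h3, -, -⟩ := hF z hz'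
    have hk : ContinuousAt κ z := hκ.1.continuousAt (isOpen_ball.mem_nhds (by simp; linarith))
    exact ((hk.mul (continuousAt_const.sub (h1.continuousAt.norm.pow 2))).div
      h2.continuousAt.norm (norm_ne_zero_iff.2 h3)).continuousWithinAt
  obtain ⟨z₀, hz₀, hmax⟩ := (isCompact_closedBall (0 : ℂ) r).exists_isMaxOn
    ⟨0, by simp [hr0.le]⟩ hcont
  have hz₀' : ‖z₀‖ ≤ r := by simpa using hz₀
  have key : V z₀ ≤ 1 := by
    by_contra hcon
    push Not at hcon
    have hlt : ‖z₀‖ < r := by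
      rcases lt_or_eq_of_le hz₀' with h | h
      · exact h
      · simp only [hV, hF1 z₀ h] at hcon; norm_num at hcon
    have hk0 : κ z₀ ≠ 0 := by
      intro h
      simp only [hV, h] at hcon; norm_num at hcon
    have hzb : z₀ ∈ ball (0 : ℂ) 1 := by simp; linarith
    obtain ⟨β, θ, f, a1, a2, a3, a4, a5, a6, a7⟩ := hκ.2 z₀ hzb hk0
    obtain ⟨b1, b2, b3, b4, b5⟩ := hF z₀ hz₀'
    have hnb : ∀ᶠ z in 𝓝 z₀, ‖z‖ < r := continuous_norm.continuousAt.eventually_lt_const hlt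
    have heq : ∀ᶠ z in 𝓝 z₀, V z =
        ‖β z‖ * ‖θ z‖ * (1 - ‖F z‖ ^ 2) / ((1 - ‖f z‖ ^ 2) * ‖ψ z‖) := by
      filter_upwards [a7] with z hz
      simp only [hV, hz]
      rw [div_mul_eq_mul_div, div_div]
    refine no_local_max b1 a3 a2 a1 b2 a4 ?_ b3 a5 ?_ ?_ a6 ?_ ?_
    · filter_upwards [hnb] with z hz using (hF z hz.le).2.2.2.1
    · refine b5.trans_lt ?_
      rw [div_lt_one hr0]; exact hlt
    · intro h; exact ho z₀ hzb (analyticOrderAt_eq_top.2 h)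
    · rw [← heq.self_of_nhds]; exact hcon
    · have : IsLocalMax V z₀ := by
        filter_upwards [hnb] with z hz
        exact hmax (by simpa using hz.le)
      exact this.congr heq
  intro z hz
  have h := (hmax (show z ∈ closedBall (0:ℂ) r by simpa using hz) : V z ≤ V z₀).trans key
  simp only [hV] at h
  rwa [div_le_one (norm_pos_iff.2 (hF z hz).2.2.1)] at h

lemma good_radius {p : ℂ → ℂ} (hp : ∀ z ∈ ball (0 : ℂ) 1, AnalyticAt ℂ p z)
    (ho : ∀ z ∈ ball (0 : ℂ) 1, analyticOrderAt p z ≠ ⊤) {ρ : ℝ} (hρ0 : 0 ≤ ρ) (hρ : ρ < 1) :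
    ∃ r, ρ < r ∧ r < 1 ∧ ∀ z, ‖z‖ = r → p z ≠ 0 := by
  have hfin := (finite_zeros hp ho (show (ρ + 1) / 2 < 1 by linarith)).image norm
  obtain ⟨r, hr, hr2⟩ := (Set.Ioo_infinite (show ρ < (ρ + 1) / 2 by linarith)).exists_notMem_finite
    hfin
  refine ⟨r, hr.1, by linarith [hr.2], fun z hz h => hr2 ⟨z, ⟨?_, h⟩, hz⟩⟩
  simp [hz, hr.2.le]

/-! Part 10 -/
open scoped Topology ComplexConjugate

lemma cauchy_lip {f : ℂ → ℂ} {x : ℂ} {δ : ℝ} (hδ : 0 < δ)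
    (h : ∀ z ∈ ball x (3 * δ), DifferentiableAt ℂ f z ∧ ‖f z‖ ≤ 1) :
    ∀ y ∈ ball x δ, ‖f y - f x‖ ≤ 1 / δ * ‖y - x‖ := by
  intro y hy
  refine (convex_ball x δ).norm_image_sub_le_of_norm_deriv_le (f := f) (C := 1 / δ) ?_ ?_
    (mem_ball_self hδ) hy
  · intro z hz; exact (h z (ball_subset_ball (by linarith) hz)).1
  · intro z hz
    have hsub : closedBall z δ ⊆ ball x (3 * δ) := by
      intro w hw
      have h1 : dist w z ≤ δ := hw
      have h2 : dist z x < δ := hz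
      have := dist_triangle w z x
      simp only [mem_ball]; linarith
    refine Complex.norm_deriv_le_of_forall_mem_sphere_norm_le hδ ?_ ?_
    · refine DifferentiableOn.diffContOnCl_ball (U := ball x (3*δ)) ?_ hsub
      intro w hw; exact (h w hw).1.differentiableWithinAt
    · intro w hw; exact (h w (hsub (sphere_subset_closedBall hw))).2

lemma normal_family {ι : Type*} (u : Ultrafilter ι) (F : ι → ℂ → ℂ)
    (h : ∀ ρ < (1 : ℝ), ∀ᶠ i in (u : Filter ι), ∀ z ∈ ball (0 : ℂ) ρ,
      DifferentiableAt ℂ (F i) z ∧ ‖F i z‖ ≤ 1) :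
    ∃ B : ℂ → ℂ, ∀ z ∈ ball (0 : ℂ) 1, AnalyticAt ℂ B z ∧ ‖B z‖ ≤ 1 ∧
      Tendsto (fun i => F i z) u (𝓝 (B z)) ∧
      ∀ n : ℕ, Tendsto (fun i => iteratedDeriv n (F i) z) u (𝓝 (iteratedDeriv n B z)) := by
  have hpt : ∀ z : ℂ, ∃ b : ℂ, z ∈ ball (0 : ℂ) 1 → ‖b‖ ≤ 1 ∧ Tendsto (fun i => F i z) u (𝓝 b) := by
    intro z
    by_cases hz : z ∈ ball (0 : ℂ) 1
    · have hz' : ‖z‖ < 1 := by simpa using hz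
      obtain ⟨b, hb, hb2⟩ := (isCompact_closedBall (0 : ℂ) 1).ultrafilter_le_nhds'
        (u.map (fun i => F i z)) (by
          have := h ((‖z‖ + 1) / 2) (by linarith)
          change ∀ᶠ i in (u : Filter ι), F i z ∈ closedBall (0 : ℂ) 1
          filter_upwards [this] with i hi
          simpa using (hi z (by simp; linarith)).2)
      exact ⟨b, fun _ => ⟨by simpa using hb, hb2⟩⟩
    · exact ⟨0, fun h => absurd h hz⟩
  choose B hB using hpt
  refine ⟨B, ?_⟩
  have main : ∀ ρ < (1 : ℝ), TendstoLocallyUniformlyOn F B u (ball 0 ρ) := by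
    intro ρ hρ
    rw [Metric.tendstoLocallyUniformlyOn_iff]
    intro ε hε x hx
    have hx' : ‖x‖ < ρ := by simpa using hx
    set δ := (1 - ρ) / 4 with hδ
    have hδ0 : 0 < δ := by rw [hδ]; linarith
    have hl : ∀ᶠ i in (u : Filter ι), ∀ y ∈ ball x δ, ‖F i y - F i x‖ ≤ 1 / δ * ‖y - x‖ := by
      filter_upwards [h (ρ + 3 * δ) (by rw [hδ]; linarith)] with i hi
      refine cauchy_lip hδ0 fun z hz => hi z ?_
      have h1 : dist z x < 3 * δ := hz
      have := dist_triangle z x 0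
      simp only [mem_ball]; rw [dist_zero_right] at this ⊢
      rw [dist_zero_right] at this; linarith
    have hBl : ∀ y ∈ ball x δ, ‖B y - B x‖ ≤ 1 / δ * ‖y - x‖ := by
      intro y hy
      have hyb : y ∈ ball (0 : ℂ) 1 := by
        have h1 : dist y x < δ := hy
        have := dist_triangle y x 0
        simp only [mem_ball]; rw [dist_zero_right] at this ⊢
        rw [dist_zero_right] at this; linarith
      have hxb : x ∈ ball (0 : ℂ) 1 := by simp; linarith
      exact le_of_tendsto (((hB y hyb).2.sub (hB x hxb).2).norm)
        (hl.mono fun i hi => hi y hy)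
    refine ⟨ball x (min δ (δ * ε / 3)), mem_nhdsWithin_of_mem_nhds
      (ball_mem_nhds _ (lt_min hδ0 (by positivity))), ?_⟩
    have hxb : x ∈ ball (0 : ℂ) 1 := by simp; linarith
    have hc := Metric.tendsto_nhds.1 (hB x hxb).2 (ε / 3) (by positivity)
    filter_upwards [hl, hc] with i hi hci y hy
    have hyd : y ∈ ball x δ := ball_subset_ball (min_le_left _ _) hy
    have hye : ‖y - x‖ < δ * ε / 3 := by
      have : dist y x < min δ (δ * ε / 3) := hy
      rw [dist_eq_norm] at this
      exact this.trans_le (min_le_right _ _)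
    have h1 := hi y hyd
    have h2 := hBl y hyd
    have h3 : 1 / δ * ‖y - x‖ < ε / 3 := by
      rw [div_mul_eq_mul_div, one_mul, div_lt_iff₀ hδ0]; linarith
    rw [dist_eq_norm] at hci ⊢
    calc ‖B y - F i y‖ = ‖(B y - B x) - (F i x - B x) - (F i y - F i x)‖ := by
          congr 1; ring
      _ ≤ ‖B y - B x‖ + ‖F i x - B x‖ + ‖F i y - F i x‖ := by
          refine (norm_sub_le _ _).trans ?_
          gcongr
          exact norm_sub_le _ _
      _ < ε := by linarith
  intro z hz
  have hz' : ‖z‖ < 1 := by simpa using hz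
  set ρ := (‖z‖ + 1) / 2
  have hρ : ρ < 1 := by simp only [ρ]; linarith
  have hzρ : z ∈ ball (0 : ℂ) ρ := by simp only [ρ, mem_ball, dist_zero_right]; linarith
  have hd : ∀ᶠ i in (u : Filter ι), DifferentiableOn ℂ (F i) (ball 0 ρ) := by
    filter_upwards [h ρ hρ] with i hi w hw
    exact (hi w hw).1.differentiableWithinAt
  refine ⟨?_, (hB z hz).1, (hB z hz).2, ?_⟩
  · exact ((main ρ hρ).differentiableOn hd isOpen_ball).analyticAt (isOpen_ball.mem_nhds hzρ)
  · have key : ∀ n : ℕ, TendstoLocallyUniformlyOn (fun i => iteratedDeriv n (F i))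
        (iteratedDeriv n B) u (ball 0 ρ) ∧
        ∀ᶠ i in (u : Filter ι), DifferentiableOn ℂ (iteratedDeriv n (F i)) (ball 0 ρ) := by
      intro n
      induction n with
      | zero => simpa using ⟨main ρ hρ, hd⟩
      | succ n ih =>
        simp only [iteratedDeriv_succ]
        exact ⟨ih.1.deriv ih.2 isOpen_ball, ih.2.mono fun i hi => hi.deriv isOpen_ball⟩
    exact fun n => (key n).1.tendsto_at hzρ

/-! Part 11 -/
open scoped Topology ComplexConjugate

lemma exists_maximal {p : ℂ → ℂ} (hp : ∀ z ∈ ball (0 : ℂ) 1, AnalyticAt ℂ p z)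
    (ho : ∀ z ∈ ball (0 : ℂ) 1, analyticOrderAt p z ≠ ⊤) :
    ∃ B : ℂ → ℂ, (∀ z ∈ ball (0 : ℂ) 1, AnalyticAt ℂ B z ∧ ‖B z‖ ≤ ‖z‖ ∧
      analyticOrderAt p z ≤ analyticOrderAt (deriv B) z) ∧
      ∀ κ : ℂ → ℝ, SubDens p κ → ∀ z ∈ ball (0 : ℂ) 1,
        κ z * ‖p z‖ * (1 - ‖B z‖ ^ 2) ≤ ‖deriv B z‖ := by
  have hrad : ∀ n : ℕ, ∃ r : ℝ, 1 - 1 / ((n : ℝ) + 1) < r ∧ r < 1 ∧ ∀ z, ‖z‖ = r → p z ≠ 0 := by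
    intro n
    have h1 : 0 < 1 / ((n : ℝ) + 1) := by positivity
    have h2 : 1 / ((n : ℝ) + 1) ≤ 1 := by
      rw [div_le_one (by positivity)]; linarith [Nat.cast_nonneg (α := ℝ) n]
    exact good_radius hp ho (by linarith) (by linarith)
  choose r hr1 hr2 hr3 using hrad
  have hr0 : ∀ n, 0 < r n := by
    intro n
    have h2 : 1 / ((n : ℝ) + 1) ≤ 1 := by
      rw [div_le_one (by positivity)]; linarith [Nat.cast_nonneg (α := ℝ) n]
    linarith [hr1 n]
  have hrt : Tendsto r atTop (𝓝 1) := by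
    refine tendsto_of_tendsto_of_tendsto_of_le_of_le (g := fun n : ℕ => 1 - 1 / ((n : ℝ) + 1))
      ?_ tendsto_const_nhds (fun n => (hr1 n).le) (fun n => (hr2 n).le)
    simpa using (tendsto_const_nhds (x := (1 : ℝ))).sub
      (tendsto_one_div_add_atTop_nhds_zero_nat (𝕜 := ℝ))
  choose F ψ hF hF1 using fun n => heins_disc hp ho (hr0 n) (hr2 n) (hr3 n)
  set u : Ultrafilter ℕ := hyperfilter ℕ
  have hu : (u : Filter ℕ) ≤ atTop := Nat.hyperfilter_le_atTop
  have hev : ∀ ρ < (1 : ℝ), ∀ᶠ n in (u : Filter ℕ), ρ < r n :=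
    fun ρ hρ => hu (hrt.eventually (lt_mem_nhds hρ))
  obtain ⟨B, hB⟩ := normal_family u F (by
    intro ρ hρ
    filter_upwards [hev ρ hρ] with n hn z hz
    have hz' : ‖z‖ < ρ := by simpa using hz
    obtain ⟨h1, h2, h3, h4, h5⟩ := hF n z (by linarith)
    refine ⟨h1.differentiableAt, h5.trans ?_⟩
    rw [div_le_one (hr0 n)]; linarith)
  refine ⟨B, ?_, ?_⟩
  · intro z hz
    have hz' : ‖z‖ < 1 := by simpa using hz
    obtain ⟨h1, h2, h3, h4⟩ := hB z hz
    refine ⟨h1, ?_, ?_⟩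
    · have : Tendsto (fun n => ‖z‖ / r n) u (𝓝 (‖z‖ / 1)) :=
        (tendsto_const_nhds.div hrt one_ne_zero).mono_left hu
      rw [div_one] at this
      refine le_of_tendsto_of_tendsto h3.norm this ?_
      filter_upwards [hev _ hz'] with n hn
      exact (hF n z hn.le).2.2.2.2
    · obtain ⟨k, hk⟩ := ENat.ne_top_iff_exists.1 (ho z hz)
      rw [← hk, natCast_le_analyticOrderAt_iff_iteratedDeriv_eq_zero h1.deriv]
      intro i hi
      rw [← iteratedDeriv_succ']
      refine tendsto_nhds_unique (h4 (i + 1)) ?_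
      refine (tendsto_const_nhds (x := (0 : ℂ))).congr' ?_
      filter_upwards [hev _ hz'] with n hn
      obtain ⟨a1, a2, a3, a4, a5⟩ := hF n z hn.le
      have hle : (k : ℕ∞) ≤ analyticOrderAt (deriv (F n)) z := by
        have hnb : ∀ᶠ w in 𝓝 z, ‖w‖ < r n := continuous_norm.continuousAt.eventually_lt_const hn
        have he : deriv (F n) =ᶠ[𝓝 z] ψ n * p := by
          filter_upwards [hnb] with w hw using (hF n w hw.le).2.2.2.1
        rw [analyticOrderAt_congr he, analyticOrderAt_mul a2 (hp z hz), hk]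
        exact le_add_self
      rw [iteratedDeriv_succ']
      exact ((natCast_le_analyticOrderAt_iff_iteratedDeriv_eq_zero a1.deriv).1 hle i hi).symm
  · intro κ hκ z hz
    have hz' : ‖z‖ < 1 := by simpa using hz
    obtain ⟨h1, h2, h3, h4⟩ := hB z hz
    have h5 := h4 1
    simp only [iteratedDeriv_one] at h5
    refine le_of_tendsto_of_tendsto (tendsto_const_nhds.mul (tendsto_const_nhds.sub (h3.norm.pow 2)))
      h5.norm ?_
    filter_upwards [hev _ hz'] with n hn
    have := comparison ho (hr0 n) (hr2 n) (hF n) (hF1 n) hκ z hn.le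
    rw [(hF n z hn.le).2.2.2.1, norm_mul]
    calc κ z * ‖p z‖ * (1 - ‖F n z‖ ^ 2) = κ z * (1 - ‖F n z‖ ^ 2) * ‖p z‖ := by ring
      _ ≤ _ := by gcongr

lemma vOrder_aux {f : ℂ → ℂ} {z : ℂ} (hf : AnalyticAt ℂ f z) :
    sInf ((fun n : ℕ => (n : ℕ∞)) '' {n : ℕ | iteratedDeriv n f z ≠ 0}) =
      analyticOrderAt f z := by
  refine le_antisymm ?_ ?_
  · rcases eq_or_ne (analyticOrderAt f z) ⊤ with h | h
    · rw [h]; exact le_top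
    · obtain ⟨k, hk⟩ := ENat.ne_top_iff_exists.1 h
      rw [← hk]
      have := (analyticOrderAt_eq_nat_iff_iteratedDeriv_eq_zero hf).1 hk.symm
      exact sInf_le ⟨k, this.2, rfl⟩
  · refine le_sInf ?_
    rintro _ ⟨n, hn, rfl⟩
    by_contra hcon
    push Not at hcon
    have h2 : ((n + 1 : ℕ) : ℕ∞) ≤ analyticOrderAt f z := by
      rw [Nat.cast_add, Nat.cast_one]
      exact Order.add_one_le_of_lt hcon
    exact hn ((natCast_le_analyticOrderAt_iff_iteratedDeriv_eq_zero hf).1 h2 n (by omega))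

/-! Part 12 -/
open scoped Topology ComplexConjugate

/-- A single Blaschke factor. -/
noncomputable def bl (a z : ℂ) : ℂ := (((‖a‖ : ℝ) : ℂ) / a) * ((a - z) / (1 - conj a * z))

lemma bl_norm {a z : ℂ} (ha : a ≠ 0) : ‖bl a z‖ = ‖(z - a) / (1 - conj a * z)‖ := by
  have : ‖a‖ ≠ 0 := norm_ne_zero_iff.2 ha
  rw [bl, norm_mul, norm_div, norm_div, norm_div, norm_sub_rev]
  simp [this]

lemma bl_id {a z : ℂ} (ha : a ≠ 0) (ha1 : ‖a‖ < 1) (hz : ‖z‖ ≤ 1) :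
    1 - ‖bl a z‖ ^ 2 = (1 - ‖a‖ ^ 2) * (1 - ‖z‖ ^ 2) / ‖1 - conj a * z‖ ^ 2 := by
  rw [bl_norm ha, moebius_identity (one_sub_conj_mul_ne ha1 hz)]

lemma bl_le {a z : ℂ} (ha : a ≠ 0) (ha1 : ‖a‖ < 1) (hz : ‖z‖ ≤ 1) : ‖bl a z‖ ≤ 1 := by
  have h := bl_id ha ha1 hz
  have h1 : 0 ≤ 1 - ‖a‖ ^ 2 := by nlinarith [norm_nonneg a]
  have h2 : 0 ≤ 1 - ‖z‖ ^ 2 := by nlinarith [norm_nonneg z]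
  have : 0 ≤ 1 - ‖bl a z‖ ^ 2 := by rw [h]; positivity
  nlinarith [norm_nonneg (bl a z)]

lemma bl_sphere {a z : ℂ} (ha : a ≠ 0) (ha1 : ‖a‖ < 1) (hz : ‖z‖ = 1) : ‖bl a z‖ = 1 := by
  have h := bl_id ha ha1 hz.le
  rw [hz] at h
  have h3 : ‖bl a z‖ ^ 2 = 1 := by norm_num at h; linarith
  nlinarith [norm_nonneg (bl a z)]

lemma bl_analytic {a z : ℂ} (ha1 : ‖a‖ < 1) (hz : ‖z‖ ≤ 1) : AnalyticAt ℂ (bl a) z := by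
  have : bl a = fun z => (((‖a‖ : ℝ) : ℂ) / a) * ((a - z) / (1 - conj a * z)) := rfl
  rw [this]
  have := one_sub_conj_mul_ne ha1 hz
  fun_prop (disch := assumption)

lemma bl_order {a z : ℂ} (ha : a ≠ 0) (ha1 : ‖a‖ < 1) (hz : ‖z‖ ≤ 1) :
    analyticOrderAt (bl a) z = if a = z then 1 else 0 := by
  have hne := one_sub_conj_mul_ne ha1 hz
  have hn : ((‖a‖ : ℝ) : ℂ) ≠ 0 := by simpa using ha
  split_ifs with h
  · subst h
    have := (bl_analytic ha1 hz).analyticOrderAt_eq_natCast (n := 1)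
    rw [Nat.cast_one] at this
    rw [this]
    refine ⟨fun z => -(((‖a‖ : ℝ) : ℂ) / a) / (1 - conj a * z), ?_, ?_, ?_⟩
    · fun_prop (disch := assumption)
    · exact div_ne_zero (neg_ne_zero.2 (div_ne_zero hn ha)) hne
    · refine Eventually.of_forall fun z => ?_
      simp only [bl, pow_one, smul_eq_mul]; ring
  · rw [(bl_analytic ha1 hz).analyticOrderAt_eq_zero]
    exact mul_ne_zero (div_ne_zero hn ha) (div_ne_zero (sub_ne_zero.2 h) hne)

lemma bl_sub_one {a z : ℂ} (ha : a ≠ 0) (ha1 : ‖a‖ < 1) (hz : ‖z‖ < 1) :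
    ‖bl a z - 1‖ ≤ 2 / (1 - ‖z‖) * (1 - ‖a‖) := by
  have hne := one_sub_conj_mul_ne ha1 hz.le
  have hn : 0 < ‖a‖ := norm_pos_iff.2 ha
  have e : bl a z - 1 = -((1 - ((‖a‖ : ℝ) : ℂ)) * (a + (‖a‖ : ℝ) * z) / (a * (1 - conj a * z))) := by
    have h : conj a * a = ((‖a‖ : ℝ) : ℂ) ^ 2 := by
      rw [mul_comm, Complex.mul_conj, Complex.normSq_eq_norm_sq]; push_cast; rfl
    have h9 : bl a z - 1 = (((‖a‖ : ℝ) : ℂ) * (a - z) - a * (1 - conj a * z)) /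
        (a * (1 - conj a * z)) := by
      rw [bl, eq_div_iff (mul_ne_zero ha hne), sub_mul, one_mul, div_mul_div_comm,
        div_mul_cancel₀ _ (mul_ne_zero ha hne)]
    rw [h9, ← neg_div]
    congr 1
    linear_combination z * h
  rw [e, norm_neg, norm_div, norm_mul, norm_mul]
  have h1 : ‖(1 - ((‖a‖ : ℝ) : ℂ))‖ = 1 - ‖a‖ := by
    rw [← Complex.ofReal_one, ← Complex.ofReal_sub, Complex.norm_real, Real.norm_of_nonneg (by linarith)]
  have h2 : ‖a + (‖a‖ : ℝ) * z‖ ≤ 2 * ‖a‖ := by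
    refine (norm_add_le _ _).trans ?_
    rw [norm_mul]; simp; nlinarith
  have h3 : 1 - ‖z‖ ≤ ‖1 - conj a * z‖ := by
    have := norm_sub_norm_le (1 : ℂ) (conj a * z)
    rw [norm_mul, norm_one, RCLike.norm_conj] at this
    nlinarith [norm_nonneg z]
  rw [h1, div_le_iff₀ (mul_pos hn (by linarith))]
  have h4 : 0 < 1 - ‖z‖ := by linarith
  have h5 : 1 ≤ ‖1 - conj a * z‖ / (1 - ‖z‖) := by rwa [le_div_iff₀ h4, one_mul]
  calc (1 - ‖a‖) * ‖a + (‖a‖ : ℝ) * z‖ ≤ (1 - ‖a‖) * (2 * ‖a‖) * 1 := by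
        rw [mul_one]; exact mul_le_mul_of_nonneg_left h2 (by linarith)
    _ ≤ (1 - ‖a‖) * (2 * ‖a‖) * (‖1 - conj a * z‖ / (1 - ‖z‖)) :=
        mul_le_mul_of_nonneg_left h5 (mul_nonneg (by linarith) (by positivity))
    _ = _ := by ring

/-- Finite Blaschke product. -/
noncomputable def fb {ι : Type*} (m : ℕ) (a : ι → ℂ) (F : Finset ι) (z : ℂ) : ℂ :=
  z ^ m * ∏ j ∈ F, bl (a j) z

section
variable {ι : Type*} {m : ℕ} {a : ι → ℂ}

lemma fb_analytic (ha : ∀ j, a j ≠ 0 ∧ ‖a j‖ < 1) (F : Finset ι) {z : ℂ} (hz : ‖z‖ ≤ 1) :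
    AnalyticAt ℂ (fb m a F) z := by
  have : fb m a F = fun z => z ^ m * ∏ j ∈ F, bl (a j) z := rfl
  rw [this]
  exact (analyticAt_id.pow m).mul
    (Finset.analyticAt_fun_prod F fun j _ => bl_analytic (ha j).2 hz)

lemma fb_le (ha : ∀ j, a j ≠ 0 ∧ ‖a j‖ < 1) (F : Finset ι) {z : ℂ} (hz : ‖z‖ ≤ 1) :
    ‖fb m a F z‖ ≤ 1 := by
  rw [fb, norm_mul, norm_pow, norm_prod]
  exact mul_le_one₀ (pow_le_one₀ (norm_nonneg _) hz) (Finset.prod_nonneg fun _ _ => norm_nonneg _)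
    (Finset.prod_le_one (fun _ _ => norm_nonneg _) fun j _ => bl_le (ha j).1 (ha j).2 hz)

lemma fb_sphere (ha : ∀ j, a j ≠ 0 ∧ ‖a j‖ < 1) (F : Finset ι) {z : ℂ} (hz : ‖z‖ = 1) :
    ‖fb m a F z‖ = 1 := by
  rw [fb, norm_mul, norm_pow, norm_prod, hz,
    Finset.prod_eq_one fun j _ => bl_sphere (ha j).1 (ha j).2 hz]
  simp

lemma fb_order [DecidableEq ι] (ha : ∀ j, a j ≠ 0 ∧ ‖a j‖ < 1) (F : Finset ι) {z : ℂ} (hz : ‖z‖ ≤ 1) :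
    analyticOrderAt (fb m a F) z =
      (if z = 0 then (m : ℕ∞) else 0) + ((F.filter (fun j => a j = z)).card : ℕ∞) := by
  induction F using Finset.induction_on with
  | empty =>
    have : fb m a ∅ = id ^ m := by ext z; simp [fb]
    rw [this]
    simp
    split_ifs with h
    · subst h
      rw [analyticOrderAt_pow analyticAt_id]; simp
    · rw [AnalyticAt.analyticOrderAt_eq_zero (analyticAt_id.pow m)]
      simp [h]
  | insert j F hj ih =>
    have : fb m a (insert j F) = fb m a F * bl (a j) := by
      ext z; simp [fb, Finset.prod_insert hj]; ring
    rw [this, analyticOrderAt_mul (fb_analytic ha F hz) (bl_analytic (ha j).2 hz), ih,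
      bl_order (ha j).1 (ha j).2 hz, Finset.filter_insert]
    split_ifs with h1 h2 h2
    · rw [Finset.card_insert_of_notMem (by simp [hj])]; push_cast; rw [add_assoc]
    · simp
    · rw [Finset.card_insert_of_notMem (by simp [hj])]; push_cast; rw [add_assoc]
    · simp
end

lemma div_lemma {P L : ℂ → ℂ} (hP : ContinuousOn P (closedBall 0 1))
    (hP1 : ∀ z, ‖z‖ = 1 → ‖P z‖ = 1) (hL : ∀ z ∈ ball (0 : ℂ) 1, AnalyticAt ℂ L z)
    (h : ∀ z ∈ ball (0 : ℂ) 1, ‖P z * L z‖ ≤ 1) : ∀ z ∈ ball (0 : ℂ) 1, ‖L z‖ ≤ 1 := by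
  intro z hz
  have hz' : ‖z‖ < 1 := by simpa using hz
  have key : ∀ δ : ℝ, 0 < δ → δ < 1 → ‖L z‖ * δ ≤ 1 := by
    intro δ hδ hδ1
    have hex : ∃ ρ : ℝ, ρ < 1 ∧ ∀ w : ℂ, ‖w‖ < 1 → ρ < ‖w‖ → δ < ‖P w‖ := by
      have hc : IsCompact {w ∈ closedBall (0 : ℂ) 1 | ‖P w‖ ≤ δ} := by
        have := hP.norm.preimage_isClosed_of_isClosed isClosed_closedBall (isClosed_Iic (a := δ))
        exact (isCompact_closedBall (0 : ℂ) 1).of_isClosed_subset this fun w hw => hw.1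
      rcases Set.eq_empty_or_nonempty {w ∈ closedBall (0 : ℂ) 1 | ‖P w‖ ≤ δ} with he | hne
      · refine ⟨0, by norm_num, fun w hw _ => ?_⟩
        by_contra hcon
        have : w ∈ {w ∈ closedBall (0 : ℂ) 1 | ‖P w‖ ≤ δ} := ⟨by simpa using hw.le, not_lt.1 hcon⟩
        rw [he] at this; exact this
      · obtain ⟨w₀, hw₀, hmax⟩ := hc.exists_isMaxOn hne continuous_norm.continuousOn
        refine ⟨‖w₀‖, ?_, fun w hw hw2 => ?_⟩
        · have h1 : ‖w₀‖ ≤ 1 := by simpa using hw₀.1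
          refine lt_of_le_of_ne h1 fun h2 => ?_
          have := hw₀.2; rw [hP1 w₀ h2] at this; linarith
        · by_contra hcon
          have := hmax (show w ∈ {w ∈ closedBall (0 : ℂ) 1 | ‖P w‖ ≤ δ} from
            ⟨by simpa using hw.le, not_lt.1 hcon⟩)
          exact absurd hw2 (not_lt.2 this)
    obtain ⟨ρ, hρ, hρ2⟩ := hex
    obtain ⟨s, hs1, hs2⟩ := exists_between (max_lt (max_lt hρ hz') one_pos)
    have hs0 : 0 < s := (le_max_right _ _).trans_lt hs1
    have hsρ : ρ < s := ((le_max_left _ _).trans (le_max_left _ _)).trans_lt hs1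
    have hsz : ‖z‖ < s := ((le_max_right _ _).trans (le_max_left _ _)).trans_lt hs1
    have hd : DiffContOnCl ℂ L (ball 0 s) := by
      refine DifferentiableOn.diffContOnCl_ball (U := ball 0 1) ?_ (closedBall_subset_ball hs2)
      intro w hw; exact (hL w hw).differentiableAt.differentiableWithinAt
    have := Complex.norm_le_of_forall_mem_frontier_norm_le (C := 1 / δ) isBounded_ball hd (by
      intro w hw
      rw [frontier_ball _ hs0.ne'] at hw
      have hw' : ‖w‖ = s := by simpa using hw
      have h1 := h w (by simp [hw', hs2])
      have h2 := hρ2 w (by linarith) (by linarith)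
      rw [norm_mul] at h1
      rw [le_div_iff₀ hδ]
      nlinarith [norm_nonneg (L w)]) (subset_closure (show z ∈ ball (0 : ℂ) s by simpa using hsz))
    rwa [le_div_iff₀ hδ] at this
  by_contra hcon
  push Not at hcon
  obtain ⟨δ, h1, h2⟩ := exists_between (show 1 / ‖L z‖ < 1 by rwa [div_lt_one (by linarith)])
  have h3 : 0 < 1 / ‖L z‖ := by positivity
  have := key δ (h3.trans h1) h2
  rw [div_lt_iff₀ (by linarith)] at h1
  linarith

/-! Part 13 -/
open scoped Topology ComplexConjugate

lemma bl_sum_bound {ι : Type*} {m : ℕ} {a : ι → ℂ} (ha : ∀ j, a j ≠ 0 ∧ ‖a j‖ < 1) {w : ℂ}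
    (hw : ‖w‖ < 1) {c : ℝ} (hc : 0 < c) (F : Finset ι) (h : c ≤ ‖fb m a F w‖) :
    ∑ j ∈ F, (1 - ‖a j‖) ≤ -(2 * Real.log c) / ((1 - ‖w‖ ^ 2) / 4) := by
  have hd : 0 < (1 - ‖w‖ ^ 2) / 4 := by nlinarith [norm_nonneg w]
  have h1 : ∀ j ∈ F, ‖bl (a j) w‖ ^ 2 ≤ Real.exp (-((1 - ‖w‖ ^ 2) / 4 * (1 - ‖a j‖))) := by
    intro j _
    obtain ⟨ha0, ha1⟩ := ha j
    have e := bl_id ha0 ha1 hw.le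
    have hne := one_sub_conj_mul_ne ha1 hw.le
    have hpos : 0 < ‖1 - conj (a j) * w‖ := norm_pos_iff.2 hne
    have hle : ‖1 - conj (a j) * w‖ ≤ 2 := by
      refine (norm_sub_le _ _).trans ?_
      rw [norm_mul, RCLike.norm_conj, norm_one]
      nlinarith [norm_nonneg (a j), norm_nonneg w]
    have h2 : (1 - ‖w‖ ^ 2) / 4 * (1 - ‖a j‖) ≤ 1 - ‖bl (a j) w‖ ^ 2 := by
      rw [e, le_div_iff₀ (by positivity)]
      have q1 : ‖1 - conj (a j) * w‖ ^ 2 ≤ 4 := by nlinarith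
      have q2 : 1 - ‖a j‖ ≤ 1 - ‖a j‖ ^ 2 := by nlinarith [norm_nonneg (a j)]
      have q3 : 0 ≤ (1 - ‖w‖ ^ 2) / 4 * (1 - ‖a j‖) := mul_nonneg hd.le (by linarith)
      calc (1 - ‖w‖ ^ 2) / 4 * (1 - ‖a j‖) * ‖1 - conj (a j) * w‖ ^ 2
          ≤ (1 - ‖w‖ ^ 2) / 4 * (1 - ‖a j‖) * 4 := mul_le_mul_of_nonneg_left q1 q3
        _ ≤ _ := by nlinarith
    have := Real.add_one_le_exp (-((1 - ‖w‖ ^ 2) / 4 * (1 - ‖a j‖)))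
    linarith
  have h2 : c ^ 2 ≤ Real.exp (-((1 - ‖w‖ ^ 2) / 4 * ∑ j ∈ F, (1 - ‖a j‖))) := by
    calc c ^ 2 ≤ ‖fb m a F w‖ ^ 2 := by gcongr
      _ ≤ (∏ j ∈ F, ‖bl (a j) w‖) ^ 2 := by
          gcongr
          rw [fb, norm_mul, norm_pow, norm_prod]
          exact mul_le_of_le_one_left (Finset.prod_nonneg fun _ _ => norm_nonneg _)
            (pow_le_one₀ (norm_nonneg _) hw.le)
      _ = ∏ j ∈ F, ‖bl (a j) w‖ ^ 2 := (Finset.prod_pow _ _ _).symm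
      _ ≤ ∏ j ∈ F, Real.exp (-((1 - ‖w‖ ^ 2) / 4 * (1 - ‖a j‖))) :=
          Finset.prod_le_prod (fun _ _ => by positivity) h1
      _ = _ := by rw [← Real.exp_sum, Finset.sum_neg_distrib, Finset.mul_sum]
  have h3 := Real.log_le_log (by positivity) h2
  rw [Real.log_exp, Real.log_pow] at h3
  rw [le_div_iff₀ hd]
  push_cast at h3
  linarith

lemma blaschke_factor {B : ℂ → ℂ} (hB : ∀ z ∈ ball (0 : ℂ) 1, AnalyticAt ℂ B z)
    (hB1 : ∀ z ∈ ball (0 : ℂ) 1, ‖B z‖ ≤ 1) {w : ℂ} (hw : w ∈ ball (0 : ℂ) 1) (hBw : B w ≠ 0) :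
    ∃ (h : ℂ → ℂ) (m : ℕ) (ι : Type) (a : ι → ℂ), (∀ j, a j ≠ 0 ∧ ‖a j‖ < 1) ∧
      Summable (fun j => 1 - ‖a j‖) ∧
      (∀ z ∈ ball (0 : ℂ) 1, AnalyticAt ℂ h z ∧ h z ≠ 0 ∧ ‖h z‖ ≤ 1 ∧ ‖B z‖ ≤ ‖h z‖ ∧
        B z = z ^ m * (∏' j, bl (a j) z) * h z) ∧
      ∀ (N : ℕ) (K : ℂ → ℂ), (∀ z ∈ ball (0 : ℂ) 1, AnalyticAt ℂ K z) →
        (∀ z ∈ ball (0 : ℂ) 1, ‖B z ^ N * K z‖ ≤ 1) →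
        ∀ z ∈ ball (0 : ℂ) 1, ‖h z ^ N * K z‖ ≤ 1 := by
  classical
  have ho := order_ne_top_of_ball hB hw hBw
  obtain ⟨m, hm⟩ := ENat.ne_top_iff_exists.1 (ho 0 (by simp))
  let ι : Type := {q : ℂ × ℕ // q.1 ≠ 0 ∧ ‖q.1‖ < 1 ∧ (q.2 : ℕ∞) < analyticOrderAt B q.1}
  let a : ι → ℂ := fun j => j.1.1
  have ha : ∀ j, a j ≠ 0 ∧ ‖a j‖ < 1 := fun j => ⟨j.2.1, j.2.2.1⟩
  have hnb : ∀ {z : ℂ}, z ∈ ball (0 : ℂ) 1 → ‖z‖ ≤ 1 := fun {z} hz => by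
    have : ‖z‖ < 1 := by simpa using hz
    exact this.le
  have hcard : ∀ (F : Finset ι) (z : ℂ), z ∈ ball (0 : ℂ) 1 →
      ((F.filter (fun j => a j = z)).card : ℕ∞) ≤ analyticOrderAt B z := by
    intro F z hz
    obtain ⟨k, hk⟩ := ENat.ne_top_iff_exists.1 (ho z hz)
    rw [← hk]
    norm_cast
    rw [← Finset.card_range k]
    refine Finset.card_le_card_of_injOn (fun j => j.1.2) ?_ ?_
    · intro j hj
      have hj' : a j = z := by simpa using (Finset.mem_filter.1 hj).2
      have := j.2.2.2
      rw [show j.1.1 = z from hj', ← hk] at this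
      simpa using this
    · intro i hi j hj hij
      have hi' : a i = z := (Finset.mem_filter.1 hi).2
      have hj' : a j = z := (Finset.mem_filter.1 hj).2
      exact Subtype.ext (Prod.ext (hi'.trans hj'.symm) hij)
  have hfbo : ∀ (F : Finset ι) (z : ℂ), z ∈ ball (0 : ℂ) 1 →
      analyticOrderAt (fb m a F) z ≤ analyticOrderAt B z := by
    intro F z hz
    rw [fb_order ha F (hnb hz)]
    split_ifs with h
    · subst h
      rw [Finset.filter_eq_empty_iff.2 (fun j _ => (ha j).1), hm]; simp
    · rw [zero_add]; exact hcard F z hz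
  have hfbt : ∀ (F : Finset ι) (z : ℂ), z ∈ ball (0 : ℂ) 1 →
      analyticOrderAt (fb m a F) z ≠ ⊤ := fun F z hz h => by
    have := hfbo F z hz
    rw [h, top_le_iff] at this
    exact ho z hz this
  choose G hG1 hG2 using fun F : Finset ι => quotient_lemma (P := B) (S := fb m a F) isOpen_ball hB
    (fun z hz => fb_analytic ha F (hnb hz)) (hfbt F) (hfbo F)
  have hext : ∀ (F : Finset ι) (N : ℕ) (K : ℂ → ℂ), (∀ z ∈ ball (0 : ℂ) 1, AnalyticAt ℂ K z) →
        (∀ z ∈ ball (0 : ℂ) 1, ‖B z ^ N * K z‖ ≤ 1) →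
        ∀ z ∈ ball (0 : ℂ) 1, ‖G F z ^ N * K z‖ ≤ 1 := by
    intro F N K hK hBK
    refine div_lemma (P := fun z => fb m a F z ^ N) (L := fun z => G F z ^ N * K z) ?_ ?_ ?_ ?_
    · intro z hz
      exact ((fb_analytic ha F (by simpa using hz)).continuousAt.pow N).continuousWithinAt
    · intro z hz; rw [norm_pow, fb_sphere ha F hz, one_pow]
    · intro z hz; exact ((hG1 F z hz).pow N).mul (hK z hz)
    · intro z hz
      have := hBK z hz
      rw [hG2 F z hz] at this
      convert this using 2; ring
  have hGle : ∀ (F : Finset ι), ∀ z ∈ ball (0 : ℂ) 1, ‖G F z‖ ≤ 1 := by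
    intro F z hz
    have := hext F 1 (fun _ => 1) (fun _ _ => analyticAt_const) (by simpa using hB1) z hz
    simpa using this
  have hsum : Summable (fun j => 1 - ‖a j‖) := by
    refine summable_of_sum_le (c := -(2 * Real.log ‖B w‖) / ((1 - ‖w‖ ^ 2) / 4))
      (fun j => by simpa using (ha j).2.le) fun F => ?_
    refine bl_sum_bound (m := m) ha (by simpa using hw) (norm_pos_iff.2 hBw) F ?_
    rw [hG2 F w hw, norm_mul]
    exact mul_le_of_le_one_left (norm_nonneg _) (hGle F w hw)
  have hmono : ∀ (F F' : Finset ι), F ⊆ F' → ∀ z ∈ ball (0 : ℂ) 1, ‖G F z‖ ≤ ‖G F' z‖ := by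
    intro F F' hFF z hz
    have e : G F =ᶠ[𝓝 z] fun z => G F' z * ∏ j ∈ F' \ F, bl (a j) z := by
      refine (ContinuousAt.eventuallyEq_nhds_iff_eventuallyEq_nhdsNE
        (hG1 F z hz).continuousAt ?_).1 ?_
      · exact ((hG1 F' z hz).mul (Finset.analyticAt_fun_prod _
          fun j _ => bl_analytic (ha j).2 (hnb hz))).continuousAt
      · have hne : ∀ᶠ y in 𝓝[≠] z, fb m a F y ≠ 0 := by
          rcases (fb_analytic (m := m) ha F (hnb hz)).eventually_eq_zero_or_eventually_ne_zero with h | h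
          · exact absurd (analyticOrderAt_eq_top.2 h) (hfbt F z hz)
          · exact h
        filter_upwards [hne, (isOpen_ball.mem_nhds hz : _ ∈ 𝓝 z) |> mem_nhdsWithin_of_mem_nhds]
          with y hy hyb
        have h1 := hG2 F y hyb
        rw [hG2 F' y hyb] at h1
        have h2 : fb m a F' y = fb m a F y * ∏ j ∈ F' \ F, bl (a j) y := by
          rw [fb, fb, ← Finset.prod_sdiff hFF]; ring
        rw [h2] at h1
        apply mul_right_cancel₀ hy
        rw [← h1]; ring
    rw [e.self_of_nhds, norm_mul, norm_prod]
    exact mul_le_of_le_one_right (norm_nonneg _) (Finset.prod_le_one (fun _ _ => norm_nonneg _)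
      fun j _ => bl_le (ha j).1 (ha j).2 (hnb hz))
  set u : Ultrafilter (Finset ι) := Ultrafilter.of atTop
  have hu : (u : Filter (Finset ι)) ≤ atTop := Ultrafilter.of_le _
  obtain ⟨h, hh⟩ := normal_family u G (by
    intro ρ hρ
    refine Eventually.of_forall fun F z hz => ?_
    have hz' : z ∈ ball (0 : ℂ) 1 := ball_subset_ball hρ.le hz
    exact ⟨(hG1 F z hz').differentiableAt, hGle F z hz'⟩)
  refine ⟨h, m, ι, a, ha, hsum, ?_, ?_⟩
  · intro z hz
    obtain ⟨h1, h2, h3, -⟩ := hh z hz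
    refine ⟨h1, ?_, h2, ?_, ?_⟩
    · obtain ⟨k, hk⟩ := ENat.ne_top_iff_exists.1 (ho z hz)
      set F₀ : Finset ι := Finset.subtype _ ({z} ×ˢ Finset.range k) with hF₀
      have hG0 : G F₀ z ≠ 0 := by
        have e : B =ᶠ[𝓝 z] G F₀ * fb m a F₀ := by
          filter_upwards [isOpen_ball.mem_nhds hz] with y hy using hG2 F₀ y hy
        have h4 := analyticOrderAt_congr e
        have hfk : (k : ℕ∞) ≤ analyticOrderAt (fb m a F₀) z := by
          rw [fb_order ha F₀ (hnb hz)]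
          split_ifs with hz0
          · subst hz0
            rw [hm, ← hk]; exact le_self_add
          · rw [zero_add]
            have hfil : F₀.filter (fun j => a j = z) = F₀ := by
              refine Finset.filter_true_of_mem fun j hj => ?_
              have := Finset.mem_subtype.1 hj
              simp at this
              obtain ⟨b, _, hb⟩ := this
              exact (congrArg Prod.fst hb).symm
            rw [hfil, hF₀, Finset.card_subtype, Finset.filter_true_of_mem]
            · simp
            · intro q hq
              obtain ⟨hq1, hq2⟩ := Finset.mem_product.1 hq
              rw [Finset.mem_singleton] at hq1
              rw [hq1]
              refine ⟨hz0, by simpa using hz, ?_⟩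
              rw [← hk]; simpa using hq2
        rw [analyticOrderAt_mul (hG1 F₀ z hz) (fb_analytic ha F₀ (hnb hz)), ← hk] at h4
        refine ((hG1 F₀ z hz).analyticOrderAt_eq_zero).1 ?_
        generalize analyticOrderAt (G F₀) z = s at h4 ⊢
        generalize analyticOrderAt (fb m a F₀) z = t at h4 hfk
        induction s using ENat.recTopCoe with
        | top => simp at h4
        | coe s =>
          induction t using ENat.recTopCoe with
          | top => simp at h4
          | coe t => norm_cast at h4 hfk ⊢; omega
      have hge : ‖G F₀ z‖ ≤ ‖h z‖ := by
        refine ge_of_tendsto h3.norm ?_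
        have := hu (eventually_ge_atTop F₀)
        filter_upwards [this] with F hF
        exact hmono F₀ F hF z hz
      exact norm_pos_iff.1 ((norm_pos_iff.2 hG0).trans_le hge)
    · refine ge_of_tendsto h3.norm (Eventually.of_forall fun F => ?_)
      rw [hG2 F z hz, norm_mul]
      exact mul_le_of_le_one_right (norm_nonneg _) (fb_le ha F (hnb hz))
    · have hmul : Multipliable (fun j => bl (a j) z) := by
        have hs : Summable (fun j => ‖bl (a j) z - 1‖) := by
          refine Summable.of_nonneg_of_le (fun _ => norm_nonneg _)
            (fun j => bl_sub_one (ha j).1 (ha j).2 (by simpa using hz)) (hsum.mul_left _)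
        have := multipliable_one_add_of_summable hs
        simpa using this
      have ht : Tendsto (fun F : Finset ι => z ^ m * (∏ j ∈ F, bl (a j) z) * G F z) u
          (𝓝 (z ^ m * (∏' j, bl (a j) z) * h z)) :=
        (tendsto_const_nhds.mul (hmul.hasProd.mono_left hu)).mul h3
      refine tendsto_nhds_unique (tendsto_const_nhds.congr fun F => ?_) ht
      rw [hG2 F z hz, fb]; ring
  · intro N K hK hBK z hz
    obtain ⟨h1, h2, h3, -⟩ := hh z hz
    exact le_of_tendsto ((h3.pow N).mul tendsto_const_nhds).norm
      (Eventually.of_forall fun F => hext F N K hK hBK z hz)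

/-! Part 14 -/
open scoped Topology ComplexConjugate

lemma sinh_lemma {ε : ℝ} (hε : 0 < ε) : ∃ M : ℕ, 1 ≤ M ∧ ∀ s : ℝ, 0 < s →
    Real.exp (s - ε) ≤ (Real.sinh s / s) ^ (M + 1) := by
  have hc : 1 < Real.cosh (ε / 2) := Real.one_lt_cosh.2 (by positivity)
  obtain ⟨N, hN⟩ := pow_unbounded_of_one_lt (Real.exp 4) hc
  refine ⟨N + 7, by omega, fun s hs => ?_⟩
  have h1 : Real.cosh (s / 2) ≤ Real.sinh s / s := by
    rw [le_div_iff₀ hs]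
    have h2 : Real.sinh s = 2 * Real.sinh (s / 2) * Real.cosh (s / 2) := by
      rw [← Real.sinh_two_mul]; ring_nf
    have h3 : s / 2 ≤ Real.sinh (s / 2) := Real.self_le_sinh_iff.2 (by positivity)
    rw [h2]
    nlinarith [Real.cosh_pos (s / 2)]
  have hc1 : 1 ≤ Real.cosh (s / 2) := Real.one_le_cosh _
  refine le_trans ?_ (pow_le_pow_left₀ (Real.cosh_pos _).le h1 _)
  rcases le_total s ε with h | h
  · calc Real.exp (s - ε) ≤ 1 := Real.exp_le_one_iff.2 (by linarith)
      _ ≤ _ := one_le_pow₀ hc1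
  rcases le_total s 4 with h4 | h4
  · have h5 : Real.cosh (ε / 2) ≤ Real.cosh (s / 2) := by
      rw [Real.cosh_le_cosh, abs_of_pos (by positivity), abs_of_pos (by positivity)]; linarith
    calc Real.exp (s - ε) ≤ Real.exp 4 := Real.exp_le_exp.2 (by linarith)
      _ ≤ Real.cosh (ε / 2) ^ N := hN.le
      _ ≤ Real.cosh (s / 2) ^ N := by gcongr
      _ ≤ _ := pow_le_pow_right₀ hc1 (by omega)
  · have h6 : Real.exp (s / 8) ≤ Real.cosh (s / 2) := by
      rw [Real.cosh_eq]
      have h7 : Real.exp (s / 2) = Real.exp (s / 8) * Real.exp (3 * s / 8) := by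
        rw [← Real.exp_add]; ring_nf
      have h8 := Real.add_one_le_exp (3 * s / 8)
      have h9 := Real.exp_pos (-(s / 2))
      have h10 := Real.exp_pos (s / 8)
      rw [h7]
      nlinarith
    calc Real.exp (s - ε) ≤ Real.exp s := Real.exp_le_exp.2 (by linarith)
      _ = Real.exp (s / 8) ^ 8 := by rw [← Real.exp_nat_mul]; ring_nf
      _ ≤ Real.cosh (s / 2) ^ 8 := by gcongr
      _ ≤ _ := pow_le_pow_right₀ hc1 (by omega)

lemma real_ineq {ε : ℝ} {M : ℕ} (hM : ∀ s : ℝ, 0 < s →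
    Real.exp (s - ε) ≤ (Real.sinh s / s) ^ (M + 1)) {x y : ℝ} (hx : 0 < x) (hx1 : x < 1)
    (h : 1 - x ^ 2 ≤ 2 * y * (-Real.log x)) : x ^ M * Real.exp (-ε) ≤ y ^ (M + 1) := by
  set s := -Real.log x with hs
  have hs0 : 0 < s := by rw [hs]; linarith [Real.log_neg hx hx1]
  have hxs : x = Real.exp (-s) := by rw [hs, neg_neg, Real.exp_log hx]
  have h1 : 2 * x * Real.sinh s = 1 - x ^ 2 := by
    rw [Real.sinh_eq, hxs]
    have : Real.exp (-s) * Real.exp s = 1 := by rw [← Real.exp_add]; simp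
    linear_combination this
  have h2 : x * (Real.sinh s / s) ≤ y := by
    rw [← mul_div_assoc, div_le_iff₀ hs0]; linarith
  have h3 : 0 ≤ x * (Real.sinh s / s) := by
    have := Real.sinh_pos_iff.2 hs0
    positivity
  calc x ^ M * Real.exp (-ε) = x ^ (M + 1) * Real.exp (s - ε) := by
        have : x * Real.exp (s - ε) = Real.exp (-ε) := by
          conv_lhs => rw [hxs]
          rw [← Real.exp_add]; ring_nf
        rw [← this]; ring
    _ ≤ x ^ (M + 1) * (Real.sinh s / s) ^ (M + 1) := by
        gcongr; exact hM s hs0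
    _ = (x * (Real.sinh s / s)) ^ (M + 1) := by rw [mul_pow]
    _ ≤ _ := by gcongr

lemma log_inv_cont {x : ℝ} (hx : 0 ≤ x) (hx1 : x < 1) :
    ContinuousAt (fun x : ℝ => (-Real.log x)⁻¹) x := by
  rcases hx.eq_or_lt with h | h
  · subst h
    rw [continuousAt_iff_punctured_nhds]
    simp only [Real.log_zero, neg_zero, inv_zero]
    exact tendsto_inv_atTop_zero.comp (tendsto_neg_atBot_atTop.comp Real.tendsto_log_nhdsNE_zero)
  · have := Real.log_neg h hx1
    exact ((Real.continuousAt_log h.ne').neg).inv₀ (neg_ne_zero.2 this.ne)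

lemma log_subdens {p B θ h : ℂ → ℂ} (hB : ∀ z ∈ ball (0 : ℂ) 1, AnalyticAt ℂ B z)
    (hB1 : ∀ z ∈ ball (0 : ℂ) 1, ‖B z‖ < 1) (hθ : ∀ z ∈ ball (0 : ℂ) 1, AnalyticAt ℂ θ z)
    (hBθ : ∀ z ∈ ball (0 : ℂ) 1, deriv B z = θ z * p z)
    (hh : ∀ z ∈ ball (0 : ℂ) 1, AnalyticAt ℂ h z) (hh0 : ∀ z ∈ ball (0 : ℂ) 1, h z ≠ 0)
    (hBh : ∀ z ∈ ball (0 : ℂ) 1, ‖B z‖ ≤ ‖h z‖) :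
    SubDens p (fun z => ‖θ z‖ / (2 * ‖h z‖) * (-Real.log ‖B z‖)⁻¹) := by
  refine ⟨?_, ?_⟩
  · intro z hz
    have h1 : ContinuousAt (fun z => (-Real.log ‖B z‖)⁻¹) z :=
      ContinuousAt.comp (g := fun x : ℝ => (-Real.log x)⁻¹) (f := fun z => ‖B z‖)
        (log_inv_cont (norm_nonneg _) (hB1 z hz)) (hB z hz).continuousAt.norm
    have h2 : 2 * ‖h z‖ ≠ 0 := by simpa using hh0 z hz
    exact (((hθ z hz).continuousAt.norm.div (continuousAt_const.mul (hh z hz).continuousAt.norm)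
      h2).mul h1).continuousWithinAt
  · intro z hz hk
    have hB0 : B z ≠ 0 := by
      intro h0; simp [h0] at hk
    set L : ℂ → ℂ := fun w => Complex.log (B w / B z) + Complex.log (B z) with hL
    have hsl : B z / B z ∈ Complex.slitPlane := by rw [div_self hB0]; simp
    have hBan := hB z hz
    have hLan : AnalyticAt ℂ L z :=
      (AnalyticAt.clog (hBan.div analyticAt_const hB0) hsl).add analyticAt_const
    have hne : ∀ᶠ w in 𝓝 z, B w ≠ 0 := hBan.continuousAt.eventually_ne hB0
    have hexp : ∀ᶠ w in 𝓝 z, Complex.exp (L w) = B w := by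
      filter_upwards [hne] with w hw
      rw [hL]
      simp only
      rw [Complex.exp_add, Complex.exp_log (div_ne_zero hw hB0), Complex.exp_log hB0,
        div_mul_cancel₀ _ hB0]
    have hre : ∀ᶠ w in 𝓝 z, (L w).re = Real.log ‖B w‖ := by
      filter_upwards [hexp] with w hw
      rw [← hw, Complex.norm_exp, Real.log_exp]
    have hneg : ∀ᶠ w in 𝓝 z, (L w).re < 0 := by
      filter_upwards [hre, hne, isOpen_ball.mem_nhds hz] with w h1 h2 h3
      rw [h1]; exact Real.log_neg (norm_pos_iff.2 h2) (hB1 w h3)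
    have h1L : ∀ᶠ w in 𝓝 z, 1 - L w ≠ 0 := by
      filter_upwards [hneg] with w hw h0
      have := congrArg Complex.re h0
      simp at this; linarith
    have hder : ∀ᶠ w in 𝓝 z, deriv L w * B w = deriv B w := by
      filter_upwards [hexp.eventually_nhds, hLan.eventually_analyticAt] with w h1 h2
      have h3 : (fun w => Complex.exp (L w)) =ᶠ[𝓝 w] B := h1
      rw [← h3.deriv_eq, (h2.differentiableAt.hasDerivAt.cexp).deriv, h1.self_of_nhds]; ring
    have hid : ∀ w, 1 - L w ≠ 0 → 1 - ‖(1 + L w) / (1 - L w)‖ ^ 2 =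
        -4 * (L w).re / ‖1 - L w‖ ^ 2 := by
      intro w hw
      have : ‖1 - L w‖ ^ 2 ≠ 0 := by simpa using hw
      rw [norm_div, div_pow, eq_div_iff this, sub_mul, div_mul_cancel₀ _ this, one_mul,
        Complex.sq_norm, Complex.sq_norm, Complex.normSq_apply, Complex.normSq_apply]
      simp; ring
    refine ⟨fun w => B w / h w, fun w => 2 * θ w / (B w * (1 - L w) ^ 2),
      fun w => (1 + L w) / (1 - L w), hBan.div (hh z hz) (hh0 z hz), ?_, ?_, ?_, ?_, ?_, ?_⟩
    · exact (analyticAt_const.mul (hθ z hz)).div (hBan.mul ((analyticAt_const.sub hLan).pow 2))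
        (mul_ne_zero hB0 (pow_ne_zero _ h1L.self_of_nhds))
    · exact (analyticAt_const.add hLan).div (analyticAt_const.sub hLan) h1L.self_of_nhds
    · filter_upwards [hder, h1L, hne, hLan.eventually_analyticAt, isOpen_ball.mem_nhds hz]
        with w h1 h2 h3 h4 h5
      have hd := h4.differentiableAt.hasDerivAt
      have := ((hd.const_add 1).div (hd.const_sub 1) h2).deriv
      have e : deriv (fun w => (1 + L w) / (1 - L w)) w =
        (deriv L w * (1 - L w) - (1 + L w) * -deriv L w) / (1 - L w) ^ 2 := this
      rw [e]
      rw [hBθ w h5] at h1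
      have h6 : deriv L w = θ w * p w / B w := by rw [eq_div_iff h3]; exact h1
      rw [h6]
      field_simp
      ring
    · have h1 := hid z h1L.self_of_nhds
      have h2 := hneg.self_of_nhds
      have h3 : 0 < ‖1 - L z‖ := norm_pos_iff.2 h1L.self_of_nhds
      have h4 : 0 < -4 * (L z).re / ‖1 - L z‖ ^ 2 := by
        apply div_pos <;> [linarith; positivity]
      nlinarith [norm_nonneg ((1 + L z) / (1 - L z))]
    · rw [norm_div]
      exact div_le_one_of_le₀ (hBh z hz) (norm_nonneg _)
    · filter_upwards [hre, h1L, hne, hneg, isOpen_ball.mem_nhds hz] with w h1 h2 h3 h4 h5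
      rw [hid w h2, ← h1]
      have n1 : ‖1 - L w‖ ≠ 0 := norm_ne_zero_iff.2 h2
      have n2 : ‖B w‖ ≠ 0 := norm_ne_zero_iff.2 h3
      have n3 : ‖h w‖ ≠ 0 := norm_ne_zero_iff.2 (hh0 w h5)
      have n4 : (L w).re ≠ 0 := h4.ne
      simp only [norm_div, norm_mul, norm_pow, Complex.norm_ofNat]
      field_simp
      ring

/-! Part 15 -/
open scoped Topology ComplexConjugate

lemma inner_trivial {p B : ℂ → ℂ} (ho : ∀ z ∈ ball (0 : ℂ) 1, analyticOrderAt p z ≠ ⊤)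
    (hp : ∀ z ∈ ball (0 : ℂ) 1, AnalyticAt ℂ p z)
    (hB : ∀ z ∈ ball (0 : ℂ) 1, AnalyticAt ℂ B z)
    (hB1 : ∀ z ∈ ball (0 : ℂ) 1, ‖B z‖ < 1)
    (hord : ∀ z ∈ ball (0 : ℂ) 1, analyticOrderAt p z ≤ analyticOrderAt (deriv B) z)
    (hord2 : ∀ z ∈ ball (0 : ℂ) 1, analyticOrderAt (deriv B) z ≠ ⊤)
    (hmax : ∀ κ : ℂ → ℝ, SubDens p κ → ∀ z ∈ ball (0 : ℂ) 1,
        κ z * ‖p z‖ * (1 - ‖B z‖ ^ 2) ≤ ‖deriv B z‖)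
    {h : ℂ → ℂ} (hh : ∀ z ∈ ball (0 : ℂ) 1, AnalyticAt ℂ h z ∧ h z ≠ 0 ∧ ‖h z‖ ≤ 1 ∧
      ‖B z‖ ≤ ‖h z‖)
    (hext : ∀ (N : ℕ) (K : ℂ → ℂ), (∀ z ∈ ball (0 : ℂ) 1, AnalyticAt ℂ K z) →
        (∀ z ∈ ball (0 : ℂ) 1, ‖B z ^ N * K z‖ ≤ 1) →
        ∀ z ∈ ball (0 : ℂ) 1, ‖h z ^ N * K z‖ ≤ 1) :
    ∃ η : ℂ, ‖η‖ = 1 ∧ ∀ z ∈ ball (0 : ℂ) 1, h z = η := by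
  obtain ⟨θ, hθ1, hθ2⟩ := quotient_lemma isOpen_ball (fun z hz => (hB z hz).deriv) hp ho hord
  have hsd := log_subdens hB hB1 hθ1 hθ2 (fun z hz => (hh z hz).1) (fun z hz => (hh z hz).2.1)
    (fun z hz => (hh z hz).2.2.2)
  have hin : ∀ z ∈ ball (0 : ℂ) 1, deriv B z ≠ 0 → B z ≠ 0 →
      1 - ‖B z‖ ^ 2 ≤ 2 * ‖h z‖ * (-Real.log ‖B z‖) := by
    intro z hz h1 h2
    have h3 := hmax _ hsd z hz
    have hl : 0 < -Real.log ‖B z‖ := by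
      linarith [Real.log_neg (norm_pos_iff.2 h2) (hB1 z hz)]
    have hhz : 0 < ‖h z‖ := norm_pos_iff.2 (hh z hz).2.1
    have hd : 0 < ‖deriv B z‖ := norm_pos_iff.2 h1
    rw [hθ2 z hz, norm_mul] at h3 hd
    have h4 : ‖θ z‖ * ‖p z‖ * (1 - ‖B z‖ ^ 2) ≤
        ‖θ z‖ * ‖p z‖ * (2 * ‖h z‖ * (-Real.log ‖B z‖)) := by
      calc ‖θ z‖ * ‖p z‖ * (1 - ‖B z‖ ^ 2) =
          (‖θ z‖ / (2 * ‖h z‖) * (-Real.log ‖B z‖)⁻¹ * ‖p z‖ * (1 - ‖B z‖ ^ 2)) *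
            (2 * ‖h z‖ * (-Real.log ‖B z‖)) := by
            generalize -Real.log ‖B z‖ = l at hl
            field_simp
        _ ≤ _ := mul_le_mul_of_nonneg_right h3 (by positivity)
    exact le_of_mul_le_mul_left h4 hd
  have hge : ∀ z ∈ ball (0 : ℂ) 1, 1 ≤ ‖h z‖ := by
    intro z hz
    have key : ∀ ε : ℝ, 0 < ε → Real.exp (-ε) ≤ ‖h z‖ := by
      intro ε hε
      obtain ⟨M, hM1, hM⟩ := sinh_lemma hε
      have hall : ∀ w ∈ ball (0 : ℂ) 1, ‖B w‖ ^ M * Real.exp (-ε) ≤ ‖h w‖ ^ (M + 1) := by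
        have hpt : ∀ w ∈ ball (0 : ℂ) 1, deriv B w ≠ 0 →
            ‖B w‖ ^ M * Real.exp (-ε) ≤ ‖h w‖ ^ (M + 1) := by
          intro w hw h1
          by_cases h2 : B w = 0
          · rw [h2, norm_zero, zero_pow (by omega), zero_mul]; positivity
          · exact real_ineq hM (norm_pos_iff.2 h2) (hB1 w hw) (hin w hw h1 h2)
        intro w hw
        have hne : ∀ᶠ y in 𝓝[≠] w, deriv B y ≠ 0 := by
          rcases (hB w hw).deriv.eventually_eq_zero_or_eventually_ne_zero with h | h
          · exact absurd (analyticOrderAt_eq_top.2 h) (hord2 w hw)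
          · exact h
        have c1 : Tendsto (fun y => ‖B y‖ ^ M * Real.exp (-ε)) (𝓝[≠] w)
            (𝓝 (‖B w‖ ^ M * Real.exp (-ε))) :=
          ((((hB w hw).continuousAt.norm.pow M).mul continuousAt_const) :
            ContinuousAt (fun y => ‖B y‖ ^ M * Real.exp (-ε)) w).mono_left nhdsWithin_le_nhds
        have c2 : Tendsto (fun y => ‖h y‖ ^ (M + 1)) (𝓝[≠] w) (𝓝 (‖h w‖ ^ (M + 1))) :=
          ((hh w hw).1.continuousAt.norm.pow (M + 1)).mono_left nhdsWithin_le_nhds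
        refine le_of_tendsto_of_tendsto c1 c2 ?_
        filter_upwards [hne, mem_nhdsWithin_of_mem_nhds (isOpen_ball.mem_nhds hw)] with y h1 h2
        exact hpt y h2 h1
      have hex := hext M (fun w => (Real.exp (-ε) : ℂ) / h w ^ (M + 1))
        (fun w hw => analyticAt_const.div ((hh w hw).1.pow _) (pow_ne_zero _ (hh w hw).2.1))
        (by
          intro w hw
          have hhw : 0 < ‖h w‖ := norm_pos_iff.2 (hh w hw).2.1
          rw [norm_mul, norm_div, norm_pow, norm_pow, Complex.norm_real, Real.norm_of_nonneg
            (Real.exp_pos _).le, ← mul_div_assoc, div_le_one (by positivity)]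
          exact hall w hw) z hz
      have hhz : 0 < ‖h z‖ := norm_pos_iff.2 (hh z hz).2.1
      rw [norm_mul, norm_div, norm_pow, norm_pow, Complex.norm_real, Real.norm_of_nonneg
            (Real.exp_pos _).le, ← mul_div_assoc, div_le_one (by positivity), pow_succ] at hex
      exact le_of_mul_le_mul_left hex (by positivity)
    have ht : Tendsto (fun ε : ℝ => Real.exp (-ε)) (𝓝[>] 0) (𝓝 1) := by
      have : ContinuousAt (fun ε : ℝ => Real.exp (-ε)) 0 := by fun_prop
      have := this.mono_left (nhdsWithin_le_nhds (s := Set.Ioi 0))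
      simpa using this
    refine le_of_tendsto ht ?_
    filter_upwards [self_mem_nhdsWithin] with ε hε using key ε hε
  refine ⟨h 0, le_antisymm (hh 0 (by simp)).2.2.1 (hge 0 (by simp)), ?_⟩
  have := Complex.eqOn_of_isPreconnected_of_isMaxOn_norm (f := h) (c := 0)
    (convex_ball (0 : ℂ) 1).isPreconnected isOpen_ball
    (fun z hz => (hh z hz).1.differentiableAt.differentiableWithinAt) (by simp)
    (fun z hz => ((hh z hz).2.2.1.trans (hge 0 (by simp)) : ‖h z‖ ≤ ‖h 0‖))
  intro z hz
  exact this hz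

lemma norm_lt_one_of_nonconst {f : ℂ → ℂ} (hf : ∀ z ∈ ball (0 : ℂ) 1, DifferentiableAt ℂ f z)
    (hf1 : ∀ z ∈ ball (0 : ℂ) 1, ‖f z‖ ≤ 1)
    (hnc : ∃ z ∈ ball (0 : ℂ) 1, ∃ w ∈ ball (0 : ℂ) 1, f z ≠ f w) :
    ∀ z ∈ ball (0 : ℂ) 1, ‖f z‖ < 1 := by
  intro c hc
  refine lt_of_le_of_ne (hf1 c hc) fun h => ?_
  have := Complex.eqOn_of_isPreconnected_of_isMaxOn_norm (f := f) (c := c)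
    (convex_ball (0 : ℂ) 1).isPreconnected isOpen_ball
    (fun z hz => (hf z hz).differentiableWithinAt) hc
    (fun z hz => (by simpa [h] using hf1 z hz : ‖f z‖ ≤ ‖f c‖))
  obtain ⟨z, hz, w, hw, hzw⟩ := hnc
  exact hzw ((this hz).trans (this hw).symm)

lemma analytic_of_diff {f : ℂ → ℂ} (hf : ∀ z ∈ ball (0 : ℂ) 1, DifferentiableAt ℂ f z) :
    ∀ z ∈ ball (0 : ℂ) 1, AnalyticAt ℂ f z := fun z hz =>
  DifferentiableOn.analyticAt (fun w hw => (hf w hw).differentiableWithinAt)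
    (isOpen_ball.mem_nhds hz)

lemma deriv_ne_of_nonconst {f : ℂ → ℂ} (hf : ∀ z ∈ ball (0 : ℂ) 1, DifferentiableAt ℂ f z)
    (hnc : ∃ z ∈ ball (0 : ℂ) 1, ∃ w ∈ ball (0 : ℂ) 1, f z ≠ f w) :
    ∃ w ∈ ball (0 : ℂ) 1, deriv f w ≠ 0 := by
  by_contra hcon
  push Not at hcon
  obtain ⟨z, hz, w, hw, hzw⟩ := hnc
  refine hzw ?_
  exact isOpen_ball.is_const_of_deriv_eq_zero (convex_ball (0 : ℂ) 1).isPreconnected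
    (fun w hw => (hf w hw).differentiableWithinAt) (fun w hw => hcon w hw) hz hw

lemma max_ineq {p B f : ℂ → ℂ} (hp : ∀ z ∈ ball (0 : ℂ) 1, AnalyticAt ℂ p z)
    (ho : ∀ z ∈ ball (0 : ℂ) 1, analyticOrderAt p z ≠ ⊤)
    (hmax : ∀ κ : ℂ → ℝ, SubDens p κ → ∀ z ∈ ball (0 : ℂ) 1,
        κ z * ‖p z‖ * (1 - ‖B z‖ ^ 2) ≤ ‖deriv B z‖)
    (hf : ∀ z ∈ ball (0 : ℂ) 1, AnalyticAt ℂ f z) (hf1 : ∀ z ∈ ball (0 : ℂ) 1, ‖f z‖ < 1)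
    (hord : ∀ z ∈ ball (0 : ℂ) 1, analyticOrderAt p z ≤ analyticOrderAt (deriv f) z) :
    ∀ z ∈ ball (0 : ℂ) 1, ‖deriv f z‖ * (1 - ‖B z‖ ^ 2) ≤ ‖deriv B z‖ * (1 - ‖f z‖ ^ 2) := by
  obtain ⟨θ, hθ1, hθ2⟩ := quotient_lemma isOpen_ball (fun z hz => (hf z hz).deriv) hp ho hord
  have hpos : ∀ z ∈ ball (0 : ℂ) 1, 0 < 1 - ‖f z‖ ^ 2 := fun z hz => by
    nlinarith [norm_nonneg (f z), hf1 z hz]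
  have hsd : SubDens p (fun z => ‖θ z‖ / (1 - ‖f z‖ ^ 2)) := by
    refine ⟨fun z hz => ((hθ1 z hz).continuousAt.norm.div (continuousAt_const.sub
      ((hf z hz).continuousAt.norm.pow 2)) (hpos z hz).ne').continuousWithinAt, ?_⟩
    intro z hz _
    refine ⟨fun _ => 1, θ, f, analyticAt_const, hθ1 z hz, hf z hz, ?_, hf1 z hz, by simp, ?_⟩
    · filter_upwards [isOpen_ball.mem_nhds hz] with w hw using hθ2 w hw
    · simp
  intro z hz
  have h := hmax _ hsd z hz
  have := mul_le_mul_of_nonneg_right h (hpos z hz).le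
  refine le_trans (le_of_eq ?_) this
  rw [hθ2 z hz, norm_mul]
  have := (hpos z hz).ne'
  field_simp

/-- **Kraus' theorem: existence of maximal Blaschke products.** For every nonconstant
holomorphic map `g` of the open unit disk into the closed unit disk there is a
Blaschke product `B` whose derivative has in the disk exactly the same zeros as `g'`,
with the same multiplicities, and which dominates, in the sense of the Nehari–Schwarz
inequality, every nonconstant `f ∈ 𝓑` whose critical set contains that of `B`. -/
theorem kraus_existence_maximal (g : ℂ → ℂ)
    (hg_diff : ∀ z ∈ Metric.ball (0 : ℂ) 1, DifferentiableAt ℂ g z)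
    (hg_le : ∀ z ∈ Metric.ball (0 : ℂ) 1, ‖g z‖ ≤ 1)
    (hg_nc : ∃ z ∈ Metric.ball (0 : ℂ) 1, ∃ w ∈ Metric.ball (0 : ℂ) 1, g z ≠ g w) :
    ∃ B : ℂ → ℂ, IsBlaschkeProduct B ∧
      (∀ z ∈ Metric.ball (0 : ℂ) 1, vOrder (deriv B) z = vOrder (deriv g) z) ∧
      ∀ f : ℂ → ℂ,
        (∀ z ∈ Metric.ball (0 : ℂ) 1, DifferentiableAt ℂ f z) →
        (∀ z ∈ Metric.ball (0 : ℂ) 1, ‖f z‖ ≤ 1) →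
        (∃ z ∈ Metric.ball (0 : ℂ) 1, ∃ w ∈ Metric.ball (0 : ℂ) 1, f z ≠ f w) →
        (∀ z ∈ Metric.ball (0 : ℂ) 1, vOrder (deriv B) z ≤ vOrder (deriv f) z) →
        ∀ z ∈ Metric.ball (0 : ℂ) 1,
          ‖deriv f z‖ * (1 - ‖B z‖ ^ 2) ≤ ‖deriv B z‖ * (1 - ‖f z‖ ^ 2) := by
  have hga := analytic_of_diff hg_diff
  have hp : ∀ z ∈ ball (0 : ℂ) 1, AnalyticAt ℂ (deriv g) z := fun z hz => (hga z hz).deriv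
  obtain ⟨w, hw, hgw⟩ := deriv_ne_of_nonconst hg_diff hg_nc
  have ho := order_ne_top_of_ball hp hw hgw
  have hg1 := norm_lt_one_of_nonconst hg_diff hg_le hg_nc
  obtain ⟨B, hB, hmax⟩ := exists_maximal hp ho
  have hBa : ∀ z ∈ ball (0 : ℂ) 1, AnalyticAt ℂ B z := fun z hz => (hB z hz).1
  have hB1 : ∀ z ∈ ball (0 : ℂ) 1, ‖B z‖ < 1 := fun z hz => by
    have : ‖z‖ < 1 := by simpa using hz
    exact (hB z hz).2.1.trans_lt this
  have hBo : ∀ z ∈ ball (0 : ℂ) 1, analyticOrderAt (deriv g) z ≤ analyticOrderAt (deriv B) z :=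
    fun z hz => (hB z hz).2.2
  have hgin := max_ineq hp ho hmax hga hg1 (fun z _ => le_rfl)
  obtain ⟨θ, hθ1, hθ2⟩ := quotient_lemma isOpen_ball (fun z hz => (hBa z hz).deriv) hp ho hBo
  have hθ0 : ∀ z ∈ ball (0 : ℂ) 1, θ z ≠ 0 := by
    intro z hz h0
    have hne : ∀ᶠ y in 𝓝[≠] z, deriv g y ≠ 0 := by
      rcases (hp z hz).eventually_eq_zero_or_eventually_ne_zero with h | h
      · exact absurd (analyticOrderAt_eq_top.2 h) (ho z hz)
      · exact h
    have c1 : Tendsto (fun y => 1 - ‖B y‖ ^ 2) (𝓝[≠] z) (𝓝 (1 - ‖B z‖ ^ 2)) :=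
      (continuousAt_const.sub ((hBa z hz).continuousAt.norm.pow 2)).mono_left nhdsWithin_le_nhds
    have c2 : Tendsto (fun y => ‖θ y‖) (𝓝[≠] z) (𝓝 ‖θ z‖) :=
      ((hθ1 z hz).continuousAt.norm).mono_left nhdsWithin_le_nhds
    have h1 : 1 - ‖B z‖ ^ 2 ≤ ‖θ z‖ := by
      refine le_of_tendsto_of_tendsto c1 c2 ?_
      filter_upwards [hne, mem_nhdsWithin_of_mem_nhds (isOpen_ball.mem_nhds hz)] with y h1 h2
      have h3 := hgin y h2
      have h4 : 0 < ‖deriv g y‖ := norm_pos_iff.2 h1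
      rw [hθ2 y h2, norm_mul] at h3
      have h5 : ‖deriv g y‖ * (1 - ‖B y‖ ^ 2) ≤ ‖deriv g y‖ * ‖θ y‖ := by
        refine h3.trans ?_
        nlinarith [mul_nonneg (mul_nonneg (norm_nonneg (θ y)) h4.le) (sq_nonneg ‖g y‖)]
      exact le_of_mul_le_mul_left h5 h4
    rw [h0, norm_zero] at h1
    nlinarith [norm_nonneg (B z), hB1 z hz]
  have hordeq : ∀ z ∈ ball (0 : ℂ) 1, analyticOrderAt (deriv B) z = analyticOrderAt (deriv g) z := by
    intro z hz
    have e : deriv B =ᶠ[𝓝 z] θ * deriv g := by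
      filter_upwards [isOpen_ball.mem_nhds hz] with y hy using hθ2 y hy
    rw [analyticOrderAt_congr e, analyticOrderAt_mul (hθ1 z hz) (hp z hz),
      ((hθ1 z hz).analyticOrderAt_eq_zero).2 (hθ0 z hz), zero_add]
  have hBw : ∃ v ∈ ball (0 : ℂ) 1, B v ≠ 0 := by
    by_contra hcon
    push Not at hcon
    have e : B =ᶠ[𝓝 w] fun _ => 0 := by
      filter_upwards [isOpen_ball.mem_nhds hw] with y hy using hcon y hy
    have h1 := hθ2 w hw
    rw [e.deriv_eq, deriv_const] at h1
    exact mul_ne_zero (hθ0 w hw) hgw h1.symm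
  obtain ⟨v, hv, hBv⟩ := hBw
  obtain ⟨h, m, ι, a, ha, hsum, hh, hext⟩ := blaschke_factor hBa (fun z hz => (hB1 z hz).le) hv hBv
  obtain ⟨η, hη, hhη⟩ := inner_trivial ho hp hBa hB1 hBo
    (fun z hz => by rw [hordeq z hz]; exact ho z hz) hmax
    (fun z hz => ⟨(hh z hz).1, (hh z hz).2.1, (hh z hz).2.2.1, (hh z hz).2.2.2.1⟩) hext
  have hvo : ∀ f : ℂ → ℂ, (∀ z ∈ ball (0 : ℂ) 1, AnalyticAt ℂ f z) → ∀ z ∈ ball (0 : ℂ) 1,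
      vOrder (deriv f) z = analyticOrderAt (deriv f) z :=
    fun f hf z hz => vOrder_aux (hf z hz).deriv
  refine ⟨B, ⟨fun z hz => (hBa z hz).differentiableAt, η, m, ι, a, hη, ha, hsum, ?_⟩, ?_, ?_⟩
  · intro z hz
    rw [(hh z hz).2.2.2.2, hhη z hz]
    simp only [bl]
    ring
  · intro z hz
    rw [hvo B hBa z hz, hvo g hga z hz, hordeq z hz]
  · intro f hf hf1 hfnc hford
    have hfa := analytic_of_diff hf
    refine max_ineq hp ho hmax hfa (norm_lt_one_of_nonconst hf hf1 hfnc) ?_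
    intro z hz
    have := hford z hz
    rwa [hvo B hBa z hz, hvo f hfa z hz, hordeq z hz] at this
end

section
/- (Kraus–Roth: interior rigidity for maximal Blaschke products) Let B be a maximal Blaschke product, and let f ∈ 𝓑 be nonconstant with C_f ⊇ C_B. If |f'(z)| (1 − |B(z)|²) = |B'(z)| (1 − |f(z)|²) holds at a single point z ∈ 𝔻 with B'(z) ≠ 0, then f = T ∘ B for some conformal automorphism T of 𝔻. -/
open Metric Filter

lemma kr_mob_identity (p x : ℂ) :
    ‖1 - (starRingEnd ℂ) p * x‖ ^ 2 - ‖x - p‖ ^ 2 = (1 - ‖p‖ ^ 2) * (1 - ‖x‖ ^ 2) := by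
  simp only [← Complex.normSq_eq_norm_sq, Complex.normSq_apply, Complex.sub_re, Complex.sub_im,
    Complex.mul_re, Complex.mul_im, Complex.conj_re, Complex.conj_im, Complex.one_re,
    Complex.one_im]
  ring

lemma kr_den_ne (p x : ℂ) (hp : ‖p‖ < 1) (hx : ‖x‖ ≤ 1) : 1 - (starRingEnd ℂ) p * x ≠ 0 := by
  intro h
  have h1 : (starRingEnd ℂ) p * x = 1 := (sub_eq_zero.mp h).symm
  have h2 : ‖p‖ * ‖x‖ = 1 := by
    have := congrArg norm h1
    simpa using this
  nlinarith [norm_nonneg p, norm_nonneg x]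

/-- The disk automorphism moving `p` to `0`. -/
noncomputable def krMob (p x : ℂ) : ℂ := (x - p) / (1 - (starRingEnd ℂ) p * x)

lemma kr_one_sub (p x : ℂ) (hp : ‖p‖ < 1) (hx : ‖x‖ ≤ 1) :
    1 - ‖krMob p x‖ ^ 2 = (1 - ‖p‖ ^ 2) * (1 - ‖x‖ ^ 2) / ‖1 - (starRingEnd ℂ) p * x‖ ^ 2 := by
  have hd := norm_ne_zero_iff.mpr (kr_den_ne p x hp hx)
  rw [krMob, norm_div, ← kr_mob_identity, sub_div, div_self (pow_ne_zero 2 hd), div_pow]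

lemma kr_hasDeriv (p : ℂ) (f : ℂ → ℂ) (f' x : ℂ) (hp : ‖p‖ < 1) (hx : ‖f x‖ ≤ 1)
    (hf : HasDerivAt f f' x) :
    HasDerivAt (fun y => krMob p (f y))
      (f' * (1 - (starRingEnd ℂ) p * p) / (1 - (starRingEnd ℂ) p * f x) ^ 2) x := by
  have hd := kr_den_ne p (f x) hp hx
  have := (hf.sub_const p).div ((hf.const_mul ((starRingEnd ℂ) p)).const_sub 1) hd
  refine this.congr_deriv ?_
  congr 1
  ring

lemma kr_norm_deriv (p : ℂ) (f : ℂ → ℂ) (x : ℂ) (hp : ‖p‖ < 1) (hx : ‖f x‖ ≤ 1)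
    (hf : DifferentiableAt ℂ f x) :
    ‖deriv (fun y => krMob p (f y)) x‖ =
      ‖deriv f x‖ * ((1 - ‖p‖ ^ 2) / ‖1 - (starRingEnd ℂ) p * f x‖ ^ 2) := by
  rw [(kr_hasDeriv p f _ x hp hx hf.hasDerivAt).deriv, norm_div, norm_mul, norm_pow]
  have : (1 - (starRingEnd ℂ) p * p) = ((1 - ‖p‖ ^ 2 : ℝ) : ℂ) := by
    rw [Complex.conj_mul']; push_cast; rfl
  rw [this, Complex.norm_real, Real.norm_of_nonneg (by nlinarith [norm_nonneg p])]
  ring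

lemma kr_blaschke_le (B : ℂ → ℂ) (hB : IsBlaschkeProduct B) :
    ∀ z ∈ Metric.ball (0 : ℂ) 1, ‖B z‖ ≤ 1 := by
  obtain ⟨-, η, m, ι, a, hη, ha, -, hz⟩ := hB
  intro z hzb
  have hz1 : ‖z‖ < 1 := by simpa using hzb
  rw [hz z hzb, norm_mul, norm_mul, hη, one_mul, norm_pow]
  refine mul_le_one₀ (pow_le_one₀ (norm_nonneg _) hz1.le) (norm_nonneg _) ?_
  by_cases hm : Multipliable fun j => (((‖a j‖ : ℝ) : ℂ) / a j) *
      ((a j - z) / (1 - (starRingEnd ℂ) (a j) * z))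
  · refine le_of_tendsto (hm.hasProd.norm) (Eventually.of_forall fun s => ?_)
    refine Finset.prod_le_one (fun _ _ => norm_nonneg _) fun j _ => ?_
    rw [norm_mul, norm_div, Complex.norm_real, norm_norm,
      div_self (norm_ne_zero_iff.mpr (ha j).1), one_mul, norm_div]
    refine div_le_one_of_le₀ ?_ (norm_nonneg _)
    have h := kr_mob_identity (a j) z
    rw [norm_sub_rev]
    refine le_of_pow_le_pow_left₀ two_ne_zero (norm_nonneg _) ?_
    have : 0 ≤ (1 - ‖a j‖ ^ 2) * (1 - ‖z‖ ^ 2) :=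
      mul_nonneg (by nlinarith [norm_nonneg (a j), (ha j).2]) (by nlinarith [norm_nonneg z])
    linarith
  · rw [tprod_eq_one_of_not_multipliable hm]; simp

lemma kr_lt_one (f : ℂ → ℂ)
    (hd : ∀ z ∈ Metric.ball (0 : ℂ) 1, DifferentiableAt ℂ f z)
    (hle : ∀ z ∈ Metric.ball (0 : ℂ) 1, ‖f z‖ ≤ 1)
    (hnc : ∃ z ∈ Metric.ball (0 : ℂ) 1, ∃ w ∈ Metric.ball (0 : ℂ) 1, f z ≠ f w) :
    ∀ z ∈ Metric.ball (0 : ℂ) 1, ‖f z‖ < 1 := by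
  intro z hz
  by_contra hcon
  have h1 : ‖f z‖ = 1 := le_antisymm (hle z hz) (not_lt.mp hcon)
  have := Complex.eqOn_of_isPreconnected_of_isMaxOn_norm
    (convex_ball (0 : ℂ) 1).isPreconnected isOpen_ball
    (fun x hx => (hd x hx).differentiableWithinAt) hz
    (fun x hx => by simpa [h1] using hle x hx)
  obtain ⟨x, hx, w, hw, hne⟩ := hnc
  exact hne ((this hx).trans (this hw).symm)

/-- Local Schwarz-type lemma. -/
lemma kr_local (g : ℂ → ℂ) (h0 : g 0 = 0) (h1 : ‖deriv g 0‖ = 1)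
    (hd : ∀ᶠ w in nhds (0 : ℂ), DifferentiableAt ℂ g w)
    (hle : ∀ᶠ w in nhds (0 : ℂ), ‖deriv g w‖ * (1 - ‖w‖ ^ 2) ≤ 1 - ‖g w‖ ^ 2) :
    ∀ᶠ w in nhds (0 : ℂ), g w = deriv g 0 * w := by
  obtain ⟨r, hr, hball⟩ := Metric.eventually_nhds_iff_ball.mp (hd.and hle)
  set s := min r 1 with hs
  have hs0 : 0 < s := lt_min hr one_pos
  have key : ∀ w ∈ ball (0 : ℂ) s, ‖g w‖ ≤ ‖w‖ := by
    intro w hw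
    by_cases hw0 : w = 0
    · simp [hw0, h0]
    have hwpos : 0 < ‖w‖ := norm_pos_iff.mpr hw0
    have hwr : ‖w‖ < s := by simpa using hw
    have hw1 : ‖w‖ < 1 := hwr.trans_le (min_le_right _ _)
    have hmem : ∀ t ∈ Set.Icc (0 : ℝ) 1, (t : ℂ) * w ∈ ball (0 : ℂ) r := by
      intro t ht
      have : ‖(t : ℂ) * w‖ ≤ ‖w‖ := by
        rw [norm_mul, Complex.norm_real, Real.norm_of_nonneg ht.1]
        nlinarith [ht.2]
      simpa using this.trans_lt (hwr.trans_le (min_le_left _ _))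
    have hder : ∀ t ∈ Set.Icc (0 : ℝ) 1,
        HasDerivAt (fun t : ℝ => g ((t : ℂ) * w)) (deriv g ((t : ℂ) * w) * w) t := by
      intro t ht
      have h2 : HasDerivAt (fun t : ℝ => (t : ℂ) * w) w t := by
        simpa using (Complex.ofRealCLM.hasDerivAt (x := t)).mul_const w
      exact HasDerivAt.comp t ((hball _ (hmem t ht)).1.hasDerivAt) h2
    refine le_of_forall_pos_le_add fun ε hε => ?_
    have := image_norm_le_of_norm_deriv_right_lt_deriv_boundary
      (f := fun t : ℝ => g ((t : ℂ) * w)) (f' := fun t : ℝ => deriv g ((t : ℂ) * w) * w)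
      (a := 0) (b := 1) (B := fun t => t * (‖w‖ + ε)) (B' := fun _ => ‖w‖ + ε)
      (fun t ht => (hder t ht).continuousAt.continuousWithinAt)
      (fun t ht => (hder t ⟨ht.1, ht.2.le⟩).hasDerivWithinAt)
      (by simp [h0])
      (fun t => by simpa using (hasDerivAt_id t).mul_const (‖w‖ + ε))
      (fun t ht heq => by
        have ht' : t ∈ Set.Icc (0 : ℝ) 1 := ⟨ht.1, ht.2.le⟩
        have hb := (hball _ (hmem t ht')).2
        rw [show ‖g ((t : ℂ) * w)‖ = t * (‖w‖ + ε) from heq, norm_mul, Complex.norm_real, Real.norm_of_nonneg ht.1] at hb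
        have htw : t * ‖w‖ < 1 := by nlinarith [ht.2, ht.1]
        have htw0 : 0 ≤ t * ‖w‖ := mul_nonneg ht.1 hwpos.le
        have hc : t * ‖w‖ ≤ t * (‖w‖ + ε) := by nlinarith [ht.1]
        have hpos : 0 < 1 - (t * ‖w‖) ^ 2 := by nlinarith
        have hd1 : ‖deriv g ((t : ℂ) * w)‖ ≤ 1 := by
          by_contra hcon
          push Not at hcon
          nlinarith
        rw [norm_mul]
        nlinarith)
      (x := 1) (by simp)
    simpa using this
  have hgd : ∀ᶠ w in nhds (0 : ℂ), DifferentiableAt ℂ (dslope g 0) w := by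
    have hon : DifferentiableOn ℂ g (ball 0 s) := fun w hw =>
      (hball w (ball_subset_ball (min_le_left _ _) hw)).1.differentiableWithinAt
    have := (Complex.differentiableOn_dslope (c := 0) (ball_mem_nhds _ hs0)).mpr hon
    filter_upwards [ball_mem_nhds (0 : ℂ) hs0] with w hw
    exact this.differentiableAt (isOpen_ball.mem_nhds hw)
  have hmax : IsLocalMax (norm ∘ dslope g 0) 0 := by
    filter_upwards [ball_mem_nhds (0 : ℂ) hs0] with w hw
    simp only [Function.comp, dslope_same, h1]
    by_cases hw0 : w = 0
    · simp [hw0, h1]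
    · rw [dslope_of_ne _ hw0, slope_def_field, h0, sub_zero, sub_zero, norm_div]
      exact div_le_one_of_le₀ (key w hw) (norm_nonneg _)
  filter_upwards [Complex.eventually_eq_of_isLocalMax_norm hgd hmax] with w hw
  rw [dslope_same] at hw
  have := sub_smul_dslope g 0 w
  rw [hw, h0] at this
  simpa [mul_comm] using this.symm

/-- Local rigidity at a zero of both functions. -/
lemma kr_local2 (F b : ℂ → ℂ) (z : ℂ) (hF : ∀ᶠ x in nhds z, DifferentiableAt ℂ F x)
    (hb : AnalyticAt ℂ b z) (hF0 : F z = 0) (hb0 : b z = 0) (hb' : deriv b z ≠ 0)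
    (heq : ‖deriv F z‖ = ‖deriv b z‖)
    (hle : ∀ᶠ x in nhds z, ‖deriv F x‖ * (1 - ‖b x‖ ^ 2) ≤ ‖deriv b x‖ * (1 - ‖F x‖ ^ 2)) :
    ∃ c : ℂ, ‖c‖ = 1 ∧ ∀ᶠ x in nhds z, F x = c * b x := by
  have hs : HasStrictDerivAt b (deriv b z) z := hb.hasStrictDerivAt
  set φ := hs.localInverse b (deriv b z) z hb' with hφ
  have hleft : ∀ᶠ x in nhds z, φ (b x) = x := hs.eventually_left_inverse hb'
  have hright : ∀ᶠ y in nhds (b z), b (φ y) = y := hs.eventually_right_inverse hb'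
  have hφs : HasStrictDerivAt φ (deriv b z)⁻¹ (b z) := hs.to_localInverse hb'
  rw [hb0] at hright hφs
  have hφz : φ 0 = z := by rw [← hb0]; exact hleft.self_of_nhds
  have hcont : Tendsto φ (nhds 0) (nhds z) := by
    have := hφs.hasDerivAt.continuousAt.tendsto
    rwa [hφz] at this
  have hbne : ∀ᶠ x in nhds z, deriv b x ≠ 0 :=
    hb.deriv.continuousAt.eventually_ne hb'
  have hban : ∀ᶠ x in nhds z, DifferentiableAt ℂ b x :=
    hb.eventually_analyticAt.mono fun x hx => hx.differentiableAt
  have hφd : ∀ᶠ y in nhds (0 : ℂ), DifferentiableAt ℂ φ y := by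
    have := (hb.analyticAt_localInverse hb').eventually_analyticAt
    rw [hb0] at this
    exact this.mono fun y hy => hy.differentiableAt
  have hall : ∀ᶠ y in nhds (0 : ℂ), DifferentiableAt ℂ φ y ∧ DifferentiableAt ℂ F (φ y) ∧
      deriv b (φ y) * deriv φ y = 1 := by
    filter_upwards [hφd, hcont.eventually hF, hcont.eventually hban, hright.eventually_nhds]
      with y h1 h2 h3 h4
    refine ⟨h1, h2, ?_⟩
    have := (HasDerivAt.comp y h3.hasDerivAt h1.hasDerivAt).congr_of_eventuallyEq
      (f₁ := id) (h4.mono fun u hu => hu.symm)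
    exact this.unique (hasDerivAt_id y)
  have hdg : ∀ y, DifferentiableAt ℂ φ y ∧ DifferentiableAt ℂ F (φ y) ∧
      deriv b (φ y) * deriv φ y = 1 → HasDerivAt (F ∘ φ) (deriv F (φ y) * deriv φ y) y :=
    fun y h => HasDerivAt.comp y h.2.1.hasDerivAt h.1.hasDerivAt
  have hn : ‖deriv (F ∘ φ) 0‖ = 1 := by
    have h := hall.self_of_nhds
    have h2 := congrArg norm h.2.2
    rw [(hdg 0 h).deriv, norm_mul]
    rw [norm_mul, norm_one, hφz] at h2
    rw [hφz, heq, h2]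
  have hmain := kr_local (F ∘ φ) (by simp [hφz, hF0]) hn
    (hall.mono fun y h => (hdg y h).differentiableAt)
    (by
      filter_upwards [hall, hcont.eventually hle, hright] with y h h2 h3
      have h4 := congrArg norm h.2.2
      rw [norm_mul, norm_one] at h4
      rw [(hdg y h).deriv, norm_mul]
      rw [h3] at h2
      have := mul_le_mul_of_nonneg_right h2 (norm_nonneg (deriv φ y))
      calc _ = ‖deriv F (φ y)‖ * (1 - ‖y‖ ^ 2) * ‖deriv φ y‖ := by ring
        _ ≤ _ := this
        _ = (‖deriv b (φ y)‖ * ‖deriv φ y‖) * (1 - ‖F (φ y)‖ ^ 2) := by ring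
        _ = _ := by rw [h4, one_mul]; rfl)
  refine ⟨_, hn, ?_⟩
  have hbt : Tendsto b (nhds z) (nhds 0) := by
    have := hb.continuousAt.tendsto
    rwa [hb0] at this
  filter_upwards [hbt.eventually hmain, hleft] with x h1 h2
  simpa [h2] using h1

/-- **Kraus–Roth: interior rigidity for maximal Blaschke products.** If `B` is a
maximal Blaschke product, `f` is a nonconstant holomorphic map of the disk into the
closed disk whose critical set contains that of `B`, and
`|f'(z)| (1 − |B(z)|²) = |B'(z)| (1 − |f(z)|²)` at a single point `z` of the disk with
`B'(z) ≠ 0`, then `f = T ∘ B` for some conformal automorphism `T` of the disk. -/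
theorem kraus_roth_interior_rigidity (B : ℂ → ℂ) (hB : IsMaximalBlaschke B)
    (f : ℂ → ℂ)
    (hf_diff : ∀ z ∈ Metric.ball (0 : ℂ) 1, DifferentiableAt ℂ f z)
    (hf_le : ∀ z ∈ Metric.ball (0 : ℂ) 1, ‖f z‖ ≤ 1)
    (hf_nc : ∃ z ∈ Metric.ball (0 : ℂ) 1, ∃ w ∈ Metric.ball (0 : ℂ) 1, f z ≠ f w)
    (hcrit : ∀ z ∈ Metric.ball (0 : ℂ) 1, vOrder (deriv B) z ≤ vOrder (deriv f) z)
    (z : ℂ) (hz : z ∈ Metric.ball (0 : ℂ) 1) (hz' : deriv B z ≠ 0)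
    (heq : ‖deriv f z‖ * (1 - ‖B z‖ ^ 2) = ‖deriv B z‖ * (1 - ‖f z‖ ^ 2)) :
    ∃ (τ : ℂ) (z₀ : ℂ), ‖τ‖ = 1 ∧ ‖z₀‖ < 1 ∧
      ∀ w ∈ Metric.ball (0 : ℂ) 1,
        f w = τ * (z₀ - B w) / (1 - (starRingEnd ℂ) z₀ * B w) := by
  have hBd := hB.1.1
  have hBle := kr_blaschke_le B hB.1
  have hBnc : ∃ z ∈ Metric.ball (0 : ℂ) 1, ∃ w ∈ Metric.ball (0 : ℂ) 1, B z ≠ B w := by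
    by_contra hcon
    push Not at hcon
    apply hz'
    have : B =ᶠ[nhds z] fun _ => B z := by
      filter_upwards [isOpen_ball.mem_nhds hz] with w hw
      exact hcon w hw z hz
    rw [this.deriv_eq]; simp
  have hBlt := kr_lt_one B hBd hBle hBnc
  have hflt := kr_lt_one f hf_diff hf_le hf_nc
  have hmaxi := hB.2 f hf_diff hf_le hf_nc hcrit
  have hp := hflt z hz
  have hq := hBlt z hz
  set p := f z with hpdef
  set q := B z with hqdef
  have hFd : ∀ x ∈ ball (0 : ℂ) 1, DifferentiableAt ℂ (fun y => krMob p (f y)) x := fun x hx =>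
    (kr_hasDeriv p f _ x hp (hf_le x hx) (hf_diff x hx).hasDerivAt).differentiableAt
  have hbd : ∀ x ∈ ball (0 : ℂ) 1, DifferentiableAt ℂ (fun y => krMob q (B y)) x := fun x hx =>
    (kr_hasDeriv q B _ x hq (hBle x hx) (hBd x hx).hasDerivAt).differentiableAt
  have hFan : AnalyticOnNhd ℂ (fun y => krMob p (f y)) (ball 0 1) :=
    DifferentiableOn.analyticOnNhd (fun x hx => (hFd x hx).differentiableWithinAt) isOpen_ball
  have hban : AnalyticOnNhd ℂ (fun y => krMob q (B y)) (ball 0 1) :=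
    DifferentiableOn.analyticOnNhd (fun x hx => (hbd x hx).differentiableWithinAt) isOpen_ball
  have hp2 : 0 < 1 - ‖p‖ ^ 2 := by nlinarith [norm_nonneg p]
  have hq2 : 0 < 1 - ‖q‖ ^ 2 := by nlinarith [norm_nonneg q]
  have hdp : ∀ x ∈ ball (0 : ℂ) 1, 0 < ‖1 - (starRingEnd ℂ) p * f x‖ := fun x hx =>
    norm_pos_iff.mpr (kr_den_ne p (f x) hp (hf_le x hx))
  have hdq : ∀ x ∈ ball (0 : ℂ) 1, 0 < ‖1 - (starRingEnd ℂ) q * B x‖ := fun x hx =>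
    norm_pos_iff.mpr (kr_den_ne q (B x) hq (hBle x hx))
  have hb'z := kr_norm_deriv q B z hq hq.le (hBd z hz)
  have hF'z := kr_norm_deriv p f z hp hp.le (hf_diff z hz)
  have hself : ∀ u : ℂ, ‖u‖ < 1 → ‖1 - (starRingEnd ℂ) u * u‖ = 1 - ‖u‖ ^ 2 := by
    intro u hu
    have : (1 - (starRingEnd ℂ) u * u) = ((1 - ‖u‖ ^ 2 : ℝ) : ℂ) := by
      rw [Complex.conj_mul']; push_cast; rfl
    rw [this, Complex.norm_real, Real.norm_of_nonneg (by nlinarith [norm_nonneg u])]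
  rw [← hqdef, hself q hq] at hb'z
  rw [← hpdef, hself p hp] at hF'z
  have hB'pos : 0 < ‖deriv B z‖ := norm_pos_iff.mpr hz'
  obtain ⟨c, hc, hloc⟩ := kr_local2 (fun y => krMob p (f y)) (fun y => krMob q (B y)) z
    (by filter_upwards [isOpen_ball.mem_nhds hz] with x hx using hFd x hx)
    (hban z hz) (by simp [krMob, ← hpdef]) (by simp [krMob, ← hqdef])
    (by
      rw [← norm_pos_iff, hb'z]; positivity)
    (by
      rw [hb'z, hF'z]
      field_simp
      linarith)
    (by
      filter_upwards [isOpen_ball.mem_nhds hz] with x hx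
      rw [kr_norm_deriv p f x hp (hf_le x hx) (hf_diff x hx),
        kr_norm_deriv q B x hq (hBle x hx) (hBd x hx),
        kr_one_sub p (f x) hp (hf_le x hx), kr_one_sub q (B x) hq (hBle x hx)]
      have h := hmaxi x hx
      have h1 := hdp x hx
      have h2 := hdq x hx
      have hk : 0 ≤ (1 - ‖p‖ ^ 2) * (1 - ‖q‖ ^ 2) /
        (‖1 - (starRingEnd ℂ) p * f x‖ ^ 2 * ‖1 - (starRingEnd ℂ) q * B x‖ ^ 2) := by positivity
      have := mul_le_mul_of_nonneg_right h hk
      calc _ = _ := ?_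
        _ ≤ _ := this
        _ = _ := ?_
      · field_simp
      · field_simp)
  have hglob := hFan.eqOn_of_preconnected_of_eventuallyEq
    (g := fun y => c * krMob q (B y)) (analyticOnNhd_const.mul hban)
    (convex_ball (0 : ℂ) 1).isPreconnected hz hloc
  have hcc : (starRingEnd ℂ) c * c = 1 := by rw [Complex.conj_mul', hc]; simp
  have hcc' : (starRingEnd ℂ) c ≠ 0 := left_ne_zero_of_mul_eq_one hcc
  have hc0 : c ≠ 0 := right_ne_zero_of_mul_eq_one hcc
  have hpc : ‖p * (starRingEnd ℂ) c‖ < 1 := by simpa [hc] using hp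
  have hD : 1 - (starRingEnd ℂ) p * c * q ≠ 0 := by
    have := kr_den_ne (p * (starRingEnd ℂ) c) q hpc hq.le
    simpa using this
  have hD' : 1 - p * (starRingEnd ℂ) c * (starRingEnd ℂ) q ≠ 0 := by
    intro h
    apply hD
    have := congrArg (starRingEnd ℂ) h
    simpa using this
  have hnorm : ‖1 - p * (starRingEnd ℂ) c * (starRingEnd ℂ) q‖ =
      ‖1 - (starRingEnd ℂ) p * c * q‖ := by
    rw [← Complex.norm_conj]; simp
  refine ⟨-c * (1 - p * (starRingEnd ℂ) c * (starRingEnd ℂ) q) / (1 - (starRingEnd ℂ) p * c * q),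
    (q - p * (starRingEnd ℂ) c) / (1 - p * (starRingEnd ℂ) c * (starRingEnd ℂ) q), ?_, ?_, ?_⟩
  · rw [norm_div, norm_mul, norm_neg, hc, hnorm, one_mul, div_self (norm_ne_zero_iff.mpr hD)]
  · rw [norm_div, hnorm, div_lt_one (norm_pos_iff.mpr hD)]
    have h := kr_mob_identity (p * (starRingEnd ℂ) c) q
    have hpc2 : 0 < 1 - ‖p * (starRingEnd ℂ) c‖ ^ 2 := by
      nlinarith [norm_nonneg (p * (starRingEnd ℂ) c)]
    have h3 := mul_pos hpc2 hq2
    rw [← h] at h3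
    simp only [map_mul, Complex.conj_conj] at h3
    refine lt_of_pow_lt_pow_left₀ 2 (norm_nonneg _) (by linarith)
  · intro w hw
    have h := hglob hw
    have h1 := norm_pos_iff.mp (hdp w hw)
    have h2 := norm_pos_iff.mp (hdq w hw)
    simp only [krMob] at h
    rw [← mul_div_assoc, div_eq_div_iff h1 h2] at h
    have hz0 : ‖(q - p * (starRingEnd ℂ) c) /
        (1 - p * (starRingEnd ℂ) c * (starRingEnd ℂ) q)‖ < 1 := by
      rw [norm_div, hnorm, div_lt_one (norm_pos_iff.mpr hD)]
      have h := kr_mob_identity (p * (starRingEnd ℂ) c) q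
      have hpc2 : 0 < 1 - ‖p * (starRingEnd ℂ) c‖ ^ 2 := by
        nlinarith [norm_nonneg (p * (starRingEnd ℂ) c)]
      have h3 := mul_pos hpc2 hq2
      rw [← h] at h3
      simp only [map_mul, Complex.conj_conj] at h3
      refine lt_of_pow_lt_pow_left₀ 2 (norm_nonneg _) (by linarith)
    have hden := kr_den_ne _ (B w) hz0 (hBle w hw)
    rw [eq_div_iff hden]
    simp only [map_div₀, map_sub, map_mul, map_one, Complex.conj_conj]
    have hnum : -c * (1 - p * (starRingEnd ℂ) c * (starRingEnd ℂ) q) /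
        (1 - (starRingEnd ℂ) p * c * q) * ((q - p * (starRingEnd ℂ) c) /
          (1 - p * (starRingEnd ℂ) c * (starRingEnd ℂ) q) - B w) =
        -c * (q - p * (starRingEnd ℂ) c - (1 - p * (starRingEnd ℂ) c * (starRingEnd ℂ) q) * B w) /
          (1 - (starRingEnd ℂ) p * c * q) := by
      generalize 1 - p * (starRingEnd ℂ) c * (starRingEnd ℂ) q = d at hD' ⊢
      field_simp
    rw [hnum]
    field_simp
    linear_combination h + (p * (starRingEnd ℂ q) * B w - p) * hcc
end
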